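/- arXiv:0911.4041 — 2 statements merged into one kernel-verified Lean document; each statement's English description precedes it below -/
import Mathlib

section
/- For any μ > 0, ν > 0 and ε > 0, the θ-periodic solution S_μ^ν of the regularized cell problem, which depends on the parameters t and τ, satisfies ‖∂S_μ^ν/∂t‖_{L^∞_#(ℝ,L²(𝕋²))} ≤ γ₃ and ‖∂S_μ^ν/∂τ‖_{L^∞_#(ℝ,L²(𝕋²))} ≤ √ε γ₃, where γ₃ depends only on γ and ν. -/
open MeasureTheory Filter

noncomputable section

/-- Fundamental domain of the two-dimensional torus `𝕋² = ℝ²/ℤ²`. -/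
def Tsq : Set (ℝ × ℝ) := Set.Icc (0:ℝ) 1 ×ˢ Set.Icc (0:ℝ) 1

/-- Periodicity of period 1 in each space direction: a function on `ℝ²`
defining a function on the torus `𝕋²`. -/
def SpacePeriodic {E : Type*} (f : (ℝ × ℝ) → E) : Prop :=
  ∀ x : ℝ × ℝ, f (x + (1, 0)) = f x ∧ f (x + (0, 1)) = f x

/-- Gradient of a scalar function on `ℝ²`. -/
def grad (f : (ℝ × ℝ) → ℝ) (x : ℝ × ℝ) : ℝ × ℝ :=
  (fderiv ℝ f x (1, 0), fderiv ℝ f x (0, 1))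

/-- Divergence of a vector field on `ℝ²`. -/
def div2 (F : (ℝ × ℝ) → ℝ × ℝ) (x : ℝ × ℝ) : ℝ :=
  fderiv ℝ (fun y => (F y).1) x (1, 0) + fderiv ℝ (fun y => (F y).2) x (0, 1)

/-- Laplacian of a scalar function on `ℝ²`. -/
def lap (f : (ℝ × ℝ) → ℝ) (x : ℝ × ℝ) : ℝ := div2 (grad f) x

/-- `L²(𝕋²)` norm of a scalar function. -/
def L2norm (f : (ℝ × ℝ) → ℝ) : ℝ := (∫ x in Tsq, (f x) ^ 2) ^ (1/2 : ℝ)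

/-- `L^∞(𝕋²)` norm of a (bounded) function. -/
def LinfNorm (f : (ℝ × ℝ) → ℝ) : ℝ := ⨆ x : ℝ × ℝ, |f x|

/-- `L²_#(ℝ×𝕋²)` norm : `(∫₀¹ ∫_{𝕋²} f² dx dθ)^{1/2}` for functions
1-periodic in `θ`. -/
def L2sharpNorm (f : ℝ → (ℝ × ℝ) → ℝ) : ℝ :=
  (∫ θ in Set.Icc (0:ℝ) 1, ∫ x in Tsq, (f θ x) ^ 2) ^ (1/2 : ℝ)

/-- `L^∞_#(ℝ, L²(𝕋²))` norm : `sup_{θ ∈ [0,1]} ‖f(θ,·)‖_{L²(𝕋²)}`. -/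
def LinfL2Norm (f : ℝ → (ℝ × ℝ) → ℝ) : ℝ :=
  ⨆ θ : Set.Icc (0:ℝ) 1, L2norm (f θ.1)

/-- Regular nonnegative scalar coefficient `Ã_ε(t,τ,θ,x)` and regular vector field
`C̃_ε(t,τ,θ,x)`, 1-periodic in `τ` and in `θ` (and in space), together with the
bounds (H1) and (H2) with constant `γ`. -/
def CoeffBasic (γ ε : ℝ)
    (A : ℝ → ℝ → ℝ → (ℝ × ℝ) → ℝ) (C : ℝ → ℝ → ℝ → (ℝ × ℝ) → ℝ × ℝ) : Prop :=
  ContDiff ℝ (⊤ : ℕ∞) (fun p : ℝ × ℝ × ℝ × (ℝ × ℝ) => A p.1 p.2.1 p.2.2.1 p.2.2.2) ∧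
  ContDiff ℝ (⊤ : ℕ∞) (fun p : ℝ × ℝ × ℝ × (ℝ × ℝ) => C p.1 p.2.1 p.2.2.1 p.2.2.2) ∧
  (∀ t τ θ x, 0 ≤ A t τ θ x) ∧
  (∀ t τ θ x, A t (τ + 1) θ x = A t τ θ x ∧ A t τ (θ + 1) x = A t τ θ x ∧
      C t (τ + 1) θ x = C t τ θ x ∧ C t τ (θ + 1) x = C t τ θ x) ∧
  (∀ t τ θ, SpacePeriodic (A t τ θ) ∧ SpacePeriodic (C t τ θ)) ∧
  -- (H1)
  (∀ t τ θ x,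
    |A t τ θ x| ≤ γ ∧ ‖C t τ θ x‖ ≤ γ ∧
    |deriv (fun s => A s τ θ x) t| ≤ γ ∧ ‖deriv (fun s => C s τ θ x) t‖ ≤ γ ∧
    |deriv (fun σ => A t τ σ x) θ| ≤ γ ∧ ‖deriv (fun σ => C t τ σ x) θ‖ ≤ γ ∧
    ‖grad (A t τ θ) x‖ ≤ γ ∧ |div2 (C t τ θ) x| ≤ γ ∧
    ‖deriv (fun s => grad (A s τ θ) x) t‖ ≤ γ ∧
    |deriv (fun s => div2 (C s τ θ) x) t| ≤ γ) ∧
  -- (H2)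
  (∀ t τ θ x,
    |deriv (fun s => A t s θ x) τ| ≤ Real.sqrt ε * γ ∧
    ‖deriv (fun s => C t s θ x) τ‖ ≤ Real.sqrt ε * γ ∧
    ‖deriv (fun s => grad (A t s θ) x) τ‖ ≤ Real.sqrt ε * γ)

/-- The threshold hypotheses (H3), (H4) and (H5). -/
def CoeffThreshold (γ Gthr θa θw ε : ℝ)
    (A : ℝ → ℝ → ℝ → (ℝ × ℝ) → ℝ) (C : ℝ → ℝ → ℝ → (ℝ × ℝ) → ℝ × ℝ) : Prop :=
  -- (H3)
  (0 < Gthr ∧ θa < θw ∧ θa ∈ Set.Icc (0:ℝ) 1 ∧ θw ∈ Set.Icc (0:ℝ) 1 ∧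
    ∀ t τ : ℝ, ∀ x : ℝ × ℝ, ∀ θ ∈ Set.Icc θa θw, Gthr ≤ A t τ θ x) ∧
  -- (H4)
  (∀ t τ θ x, A t τ θ x ≤ Gthr →
    deriv (fun s => A s τ θ x) t = 0 ∧ deriv (fun s => A t s θ x) τ = 0 ∧
    grad (A t τ θ) x = 0 ∧
    deriv (fun s => C s τ θ x) t = 0 ∧ deriv (fun s => C t s θ x) τ = 0 ∧
    div2 (C t τ θ) x = 0) ∧
  -- (H5)
  (∀ t τ θ x,
    ‖C t τ θ x‖ ≤ γ * A t τ θ x ∧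
    ‖C t τ θ x‖ ^ 2 ≤ γ * A t τ θ x ∧
    ‖grad (A t τ θ) x‖ ≤ γ * A t τ θ x ∧
    |deriv (fun s => A s τ θ x) t| ≤ γ * A t τ θ x ∧
    ‖deriv (fun s => grad (A s τ θ) x) t‖ ^ 2 ≤ γ * A t τ θ x ∧
    |deriv (fun s => A t s θ x) τ| ^ 2 ≤ ε * γ * A t τ θ x ∧
    ‖deriv (fun s => grad (A t s θ) x) τ‖ ^ 2 ≤ ε * γ * A t τ θ x ∧
    |div2 (C t τ θ) x| ≤ γ * A t τ θ x ∧
    ‖deriv (fun s => C s τ θ x) t‖ ≤ γ * A t τ θ x ∧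
    ‖deriv (fun s => C s τ θ x) t‖ ^ 2 ≤ γ ^ 2 * A t τ θ x)

/-- `S(t,τ,·,·)` is, for all values of the parameters `t` and `τ`, a classical
solution, 1-periodic in `θ`, of the regularized cell problem
`μ S + ∂S/∂θ − ∇·((Ã_ε(t,τ,·,·) + ν)∇S) = ∇·C̃_ε(t,τ,·,·)`,
depending regularly on `t` and `τ`. -/
def IsRegCellSolP (A : ℝ → ℝ → ℝ → (ℝ × ℝ) → ℝ) (C : ℝ → ℝ → ℝ → (ℝ × ℝ) → ℝ × ℝ)
    (μ ν : ℝ) (S : ℝ → ℝ → ℝ → (ℝ × ℝ) → ℝ) : Prop :=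
  ContDiff ℝ (⊤ : ℕ∞) (fun p : ℝ × ℝ × ℝ × (ℝ × ℝ) => S p.1 p.2.1 p.2.2.1 p.2.2.2) ∧
  (∀ t τ θ x, S t τ (θ + 1) x = S t τ θ x) ∧
  (∀ t τ θ, SpacePeriodic (S t τ θ)) ∧
  (∀ t τ θ x, μ * S t τ θ x + deriv (fun σ => S t τ σ x) θ
      - div2 (fun y => (A t τ θ y + ν) • grad (S t τ θ) y) x = div2 (C t τ θ) x)

/-- `S(t,τ,·,·)` is, for all values of the parameters `t` and `τ`, a classical
solution, 1-periodic in `θ` and with zero spatial mean for every `θ`, of the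
`ν`-regularized cell problem
`∂S/∂θ − ∇·((Ã_ε(t,τ,·,·) + ν)∇S) = ∇·C̃_ε(t,τ,·,·)`. -/
def IsNuCellSolP (A : ℝ → ℝ → ℝ → (ℝ × ℝ) → ℝ) (C : ℝ → ℝ → ℝ → (ℝ × ℝ) → ℝ × ℝ)
    (ν : ℝ) (S : ℝ → ℝ → ℝ → (ℝ × ℝ) → ℝ) : Prop :=
  ContDiff ℝ (⊤ : ℕ∞) (fun p : ℝ × ℝ × ℝ × (ℝ × ℝ) => S p.1 p.2.1 p.2.2.1 p.2.2.2) ∧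
  (∀ t τ θ x, S t τ (θ + 1) x = S t τ θ x) ∧
  (∀ t τ θ, SpacePeriodic (S t τ θ)) ∧
  (∀ t τ θ x, deriv (fun σ => S t τ σ x) θ
      - div2 (fun y => (A t τ θ y + ν) • grad (S t τ θ) y) x = div2 (C t τ θ) x) ∧
  (∀ t τ θ : ℝ, ∫ x in Tsq, S t τ θ x = 0)

/-!
For two parameter values, the difference `W` of the solutions solves the cell problem with the
diffusion coefficient of the first and with a source `(a' - a) ∇S + (C' - C)`, so everything
reduces to an energy estimate for one such equation: testing with `W`, integrating over a period and
using that `W` has zero mean (the mean `m` satisfies `μ m + m' = 0` and is periodic) together with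
the Poincaré inequality bounds `W` in `L^∞_#(ℝ, L²(𝕋²))` by the `L²` norm of its source, with a
constant depending only on `ν`. Applied to `S` itself, the estimate bounds `∇S`, hence the source of
`W`; therefore `S` is Lipschitz in the parameter with values in `L²(𝕋²)`, and Fatou's lemma applied
to the difference quotients bounds its derivative. The equation is never differentiated with respect
to the parameter.
-/

section ProbabilityMeasure

variable {α β : Type*} [MeasurableSpace α] [MeasurableSpace β] {μ : Measure α} {ν : Measure β}
  [IsProbabilityMeasure μ] {f P Q : α → ℝ}

lemma sq_integral_le_integral_sq (hf : Integrable f μ) (hf2 : Integrable (fun x => f x ^ 2) μ) :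
    (∫ x, f x ∂μ) ^ 2 ≤ ∫ x, f x ^ 2 ∂μ :=
  (even_two.convexOn_pow (𝕜 := ℝ)).map_integral_le (continuous_pow 2).continuousOn isClosed_univ
    (by simp) hf hf2

/-- Integrating in both variables, the left-hand side becomes twice the variance of `f`. -/
lemma two_mul_integral_sq_le_of_sq_sub_le (hf : Integrable f μ)
    (hf2 : Integrable (fun x => f x ^ 2) μ) (hP : Integrable P μ) (hQ : Integrable Q μ)
    (h : ∀ᵐ z ∂μ, ∀ᵐ w ∂μ, (f z - f w) ^ 2 ≤ P z + Q w) :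
    2 * ∫ x, f x ^ 2 ∂μ ≤ 2 * (∫ x, f x ∂μ) ^ 2 + ((∫ x, P x ∂μ) + ∫ x, Q x ∂μ) := by
  have integrated_in_w : ∀ᵐ z ∂μ,
      f z ^ 2 - 2 * (∫ x, f x ∂μ) * f z + ∫ x, f x ^ 2 ∂μ ≤ P z + ∫ x, Q x ∂μ := by
    filter_upwards [h] with z hz
    calc f z ^ 2 - 2 * (∫ x, f x ∂μ) * f z + ∫ x, f x ^ 2 ∂μ
        = ∫ w, (f z ^ 2 - 2 * f z * f w + f w ^ 2) ∂μ := by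
          rw [integral_add (by fun_prop) hf2, integral_sub (by fun_prop) (by fun_prop),
            integral_const_mul, integral_const, probReal_univ, one_smul]
          ring
      _ ≤ ∫ w, (P z + Q w) ∂μ :=
          integral_mono_ae (by fun_prop) (by fun_prop) (hz.mono fun w hw => by
            linarith [sub_sq (f z) (f w)])
      _ = P z + ∫ x, Q x ∂μ := by
          rw [integral_add (by fun_prop) hQ, integral_const, probReal_univ, one_smul]
  have integrated := integral_mono_ae (by fun_prop) (by fun_prop) integrated_in_w
  rw [integral_add (by fun_prop) (by fun_prop), integral_sub hf2 (by fun_prop),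
    integral_const_mul, integral_add hP (by fun_prop)] at integrated
  simp only [integral_const, probReal_univ, one_smul] at integrated
  linarith

variable [IsProbabilityMeasure ν]

lemma integral_prod_average_fst {g : α × β → ℝ} (hg : Integrable g (μ.prod ν)) :
    ∫ z, ∫ s, g (s, z.2) ∂μ ∂(μ.prod ν) = ∫ z, g z ∂(μ.prod ν) := by
  rw [integral_fun_snd (fun y => ∫ s, g (s, y) ∂μ), integral_prod_symm _ hg, probReal_univ,
    one_smul]

lemma integral_prod_average_snd {g : α × β → ℝ} (hg : Integrable g (μ.prod ν)) :
    ∫ z, ∫ s, g (z.1, s) ∂ν ∂(μ.prod ν) = ∫ z, g z ∂(μ.prod ν) := by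
  rw [integral_fun_fst (fun x => ∫ s, g (x, s) ∂ν), integral_prod _ hg, probReal_univ, one_smul]

end ProbabilityMeasure

section Calculus

lemma hasDerivAt_setIntegral_of_isCompact {X : Type*} [TopologicalSpace X] [MeasurableSpace X]
    [OpensMeasurableSpace X] [T2Space X] {μ : Measure X} [IsFiniteMeasureOnCompacts μ]
    {K : Set X} (hK : IsCompact K) {f f' : ℝ → X → ℝ} (hf : ∀ θ, Continuous (f θ))
    (hf' : Continuous ↿f') (hd : ∀ θ x, HasDerivAt (fun s => f s x) (f' θ x) θ) (θ : ℝ) :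
    HasDerivAt (fun s => ∫ x in K, f s x ∂μ) (∫ x in K, f' θ x ∂μ) θ := by
  obtain ⟨B, hB⟩ := ((isCompact_Icc (a := θ - 1) (b := θ + 1)).prod hK).exists_bound_of_continuousOn
    hf'.continuousOn
  have integrable_of_continuous {g : X → ℝ} (hg : Continuous g) : IntegrableOn g K μ :=
    hg.continuousOn.integrableOn_compact hK
  refine (hasDerivAt_integral_of_dominated_loc_of_deriv_le (bound := fun _ => B)
    (Icc_mem_nhds (sub_one_lt θ) (lt_add_one θ))
    (.of_forall fun s => (integrable_of_continuous (hf s)).aestronglyMeasurable)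
    (integrable_of_continuous (hf θ))
    (integrable_of_continuous (by fun_prop)).aestronglyMeasurable ?_
    (integrable_of_continuous continuous_const) (.of_forall fun x s _ => hd s x)).2
  exact ae_restrict_of_forall_mem hK.measurableSet fun x hx s hs => hB (s, x) ⟨hs, hx⟩

instance isProbabilityMeasure_restrict_Icc_zero_one :
    IsProbabilityMeasure (volume.restrict (Set.Icc (0 : ℝ) 1)) := ⟨by simp⟩

lemma sq_sub_le_setIntegral_sq_deriv {f f' : ℝ → ℝ} (hf' : Continuous f')
    (hd : ∀ x, HasDerivAt f (f' x) x) {a b : ℝ} (ha : a ∈ Set.Icc (0 : ℝ) 1)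
    (hb : b ∈ Set.Icc (0 : ℝ) 1) :
    (f b - f a) ^ 2 ≤ ∫ s in Set.Icc (0 : ℝ) 1, f' s ^ 2 := by
  have integrable_of_continuous {g : ℝ → ℝ} (hg : Continuous g) :
      IntegrableOn g (Set.Icc (0 : ℝ) 1) := hg.continuousOn.integrableOn_Icc
  have abs_sub_le : |f b - f a| ≤ ∫ s in Set.Icc (0 : ℝ) 1, |f' s| := by
    rw [← intervalIntegral.integral_eq_sub_of_hasDerivAt (fun x _ => hd x)
      (hf'.intervalIntegrable a b)]
    exact (intervalIntegral.norm_integral_le_integral_norm_uIoc).trans <|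
      setIntegral_mono_set (integrable_of_continuous hf'.abs)
        (.of_forall fun x => norm_nonneg (f' x))
        (Set.uIoc_subset_uIcc.trans (Set.uIcc_subset_Icc ha hb)).eventuallyLE
  calc (f b - f a) ^ 2 = |f b - f a| ^ 2 := (sq_abs _).symm
    _ ≤ (∫ s in Set.Icc (0 : ℝ) 1, |f' s|) ^ 2 := by gcongr
    _ ≤ ∫ s in Set.Icc (0 : ℝ) 1, |f' s| ^ 2 :=
      sq_integral_le_integral_sq (integrable_of_continuous hf'.abs)
        (integrable_of_continuous (hf'.abs.pow 2))
    _ = ∫ s in Set.Icc (0 : ℝ) 1, f' s ^ 2 := by simp only [sq_abs]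

lemma eq_zero_of_periodic_of_hasDerivAt_neg_mul {m : ℝ → ℝ} {c μ : ℝ} (hc : c ≠ 0) (hμ : μ ≠ 0)
    (hp : Function.Periodic m c) (hd : ∀ θ, HasDerivAt m (-(μ * m θ)) θ) (θ : ℝ) : m θ = 0 := by
  have hasDerivAt_exp_mul (s : ℝ) : HasDerivAt (fun s => Real.exp (μ * s) * m s) 0 s :=
    ((((hasDerivAt_id s).const_mul μ).exp).mul (hd s)).congr_deriv (by simp; ring)
  have exp_mul_eq := is_const_of_deriv_eq_zero (fun s => (hasDerivAt_exp_mul s).differentiableAt)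
    (fun s => (hasDerivAt_exp_mul s).deriv) (θ + c) θ
  rw [hp θ] at exp_mul_eq
  by_contra hm
  have := Real.exp_injective (mul_right_cancel₀ hm exp_mul_eq)
  exact hc (by simpa [mul_add, hμ] using this)

lemma le_integral_add_integral_of_deriv_le {y y' g : ℝ → ℝ} (hy : ∀ θ, HasDerivAt y (y' θ) θ)
    (hy' : Continuous y') (hg : Continuous g) (hg_nonneg : ∀ θ, 0 ≤ g θ)
    (hle : ∀ θ, y' θ ≤ g θ) (hper : y 1 = y 0) {θ : ℝ} (hθ : θ ∈ Set.Icc (0 : ℝ) 1) :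
    y θ ≤ (∫ s in (0 : ℝ)..1, y s) + ∫ s in (0 : ℝ)..1, g s := by
  have sub_le {b c : ℝ} (hbc : b ≤ c) : y c - y b ≤ ∫ s in b..c, g s := by
    rw [← intervalIntegral.integral_eq_sub_of_hasDerivAt (fun s _ => hy s)
      (hy'.intervalIntegrable b c)]
    exact intervalIntegral.integral_mono hbc (hy'.intervalIntegrable b c)
      (hg.intervalIntegrable b c) hle
  have integral_nonneg {b c : ℝ} (hbc : b ≤ c) : 0 ≤ ∫ s in b..c, g s :=
    intervalIntegral.integral_nonneg hbc fun s _ => hg_nonneg s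
  have add_adjacent (a b c : ℝ) : (∫ s in a..b, g s) + ∫ s in b..c, g s = ∫ s in a..c, g s :=
    intervalIntegral.integral_add_adjacent_intervals (hg.intervalIntegrable a b)
      (hg.intervalIntegrable b c)
  have le_add (b : ℝ) (hb : b ∈ Set.Icc (0 : ℝ) 1) : y θ ≤ y b + ∫ s in (0 : ℝ)..1, g s := by
    rcases le_total b θ with h | h
    · linarith [sub_le h, integral_nonneg hb.1, integral_nonneg hθ.2, add_adjacent 0 b θ,
        add_adjacent 0 θ 1]
    -- Here one goes from `b` up to `1`, identified with `0`, and then up to `θ`.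
    · linarith [sub_le hθ.1, sub_le hb.2, integral_nonneg h, add_adjacent 0 θ b,
        add_adjacent 0 b 1]
  have hy_cont : Continuous y := continuous_iff_continuousAt.2 fun s => (hy s).continuousAt
  have integrated := intervalIntegral.integral_mono_on (μ := volume) zero_le_one
    (continuous_const.intervalIntegrable 0 1)
    ((by fun_prop : Continuous fun b => y b + ∫ s in (0 : ℝ)..1, g s).intervalIntegrable 0 1)
    le_add
  rw [intervalIntegral.integral_add (hy_cont.intervalIntegrable 0 1) (by simp)] at integrated
  simpa using integrated

end Calculus

section UnitSquare

lemma isCompact_Tsq : IsCompact Tsq := isCompact_Icc.prod isCompact_Icc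

lemma volume_restrict_Tsq : (volume.restrict Tsq : Measure (ℝ × ℝ)) =
    (volume.restrict (Set.Icc (0 : ℝ) 1)).prod (volume.restrict (Set.Icc (0 : ℝ) 1)) :=
  (Measure.prod_restrict _ _).symm

instance isProbabilityMeasure_restrict_Tsq :
    IsProbabilityMeasure (volume.restrict Tsq : Measure (ℝ × ℝ)) := by
  rw [volume_restrict_Tsq]
  infer_instance

lemma integrableOn_Tsq {E : Type*} [NormedAddCommGroup E] {f : ℝ × ℝ → E} (hf : Continuous f) :
    IntegrableOn f Tsq :=
  hf.continuousOn.integrableOn_compact isCompact_Tsq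

lemma continuous_integral_Tsq {X : Type*} [TopologicalSpace X] [FirstCountableTopology X]
    [LocallyCompactSpace X] {f : X → ℝ × ℝ → ℝ} (hf : Continuous ↿f) :
    Continuous fun s => ∫ x in Tsq, f s x :=
  continuous_parametric_integral_of_continuous hf isCompact_Tsq

lemma integral_Tsq_average_fst {g : ℝ × ℝ → ℝ} (hg : Continuous g) :
    ∫ z in Tsq, ∫ s in Set.Icc (0 : ℝ) 1, g (s, z.2) = ∫ z in Tsq, g z := by
  have integrable := integrableOn_Tsq hg
  rw [IntegrableOn, volume_restrict_Tsq] at integrable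
  rw [volume_restrict_Tsq, integral_prod_average_fst integrable]

lemma integral_Tsq_average_snd {g : ℝ × ℝ → ℝ} (hg : Continuous g) :
    ∫ z in Tsq, ∫ s in Set.Icc (0 : ℝ) 1, g (z.1, s) = ∫ z in Tsq, g z := by
  have integrable := integrableOn_Tsq hg
  rw [IntegrableOn, volume_restrict_Tsq] at integrable
  rw [volume_restrict_Tsq, integral_prod_average_snd integrable]

end UnitSquare

section VectorCalculus

/-- The Euclidean inner product of `ℝ²`, which the sup norm of `ℝ × ℝ` does not induce. -/
def dot2 (v w : ℝ × ℝ) : ℝ := v.1 * w.1 + v.2 * w.2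

@[fun_prop]
lemma continuous_dot2 {X : Type*} [TopologicalSpace X] {v w : X → ℝ × ℝ} (hv : Continuous v)
    (hw : Continuous w) : Continuous fun x => dot2 (v x) (w x) := by
  unfold dot2
  fun_prop

lemma dot2_self_nonneg (v : ℝ × ℝ) : 0 ≤ dot2 v v :=
  add_nonneg (mul_self_nonneg _) (mul_self_nonneg _)

lemma dot2_self_le_two_mul_sq {v : ℝ × ℝ} {r : ℝ} (hv : ‖v‖ ≤ r) : dot2 v v ≤ 2 * r ^ 2 := by
  have fst_sq_le := sq_le_sq' (abs_le.1 ((norm_fst_le v).trans hv)).1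
    (abs_le.1 ((norm_fst_le v).trans hv)).2
  have snd_sq_le := sq_le_sq' (abs_le.1 ((norm_snd_le v).trans hv)).1
    (abs_le.1 ((norm_snd_le v).trans hv)).2
  unfold dot2
  linarith

lemma dot2_self_add_le (v w : ℝ × ℝ) :
    dot2 (v + w) (v + w) ≤ 2 * dot2 v v + 2 * dot2 w w := by
  simp only [dot2, Prod.fst_add, Prod.snd_add]
  nlinarith [sq_nonneg (v.1 - w.1), sq_nonneg (v.2 - w.2)]

lemma neg_two_mul_dot2_le {ν : ℝ} (hν : 0 < ν) (v w : ℝ × ℝ) :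
    -2 * dot2 v w ≤ ν * dot2 v v + ν⁻¹ * dot2 w w := by
  have : 0 ≤ ν⁻¹ * dot2 (ν • v + w) (ν • v + w) :=
    mul_nonneg (inv_nonneg.2 hν.le) (dot2_self_nonneg _)
  have expand : ν⁻¹ * dot2 (ν • v + w) (ν • v + w) =
      ν * dot2 v v + 2 * dot2 v w + ν⁻¹ * dot2 w w := by
    simp only [dot2, Prod.fst_add, Prod.snd_add, Prod.smul_fst, Prod.smul_snd, smul_eq_mul]
    field_simp
    ring
  linarith

lemma dot2_smul_left (c : ℝ) (v w : ℝ × ℝ) : dot2 (c • v) w = c * dot2 v w := by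
  simp only [dot2, Prod.smul_fst, Prod.smul_snd, smul_eq_mul]
  ring

lemma dot2_smul_right (c : ℝ) (v w : ℝ × ℝ) : dot2 v (c • w) = c * dot2 v w := by
  simp only [dot2, Prod.smul_fst, Prod.smul_snd, smul_eq_mul]
  ring

lemma dot2_self_smul_add_le {c δ : ℝ} {v w : ℝ × ℝ} (hc : |c| ≤ δ) (hw : ‖w‖ ≤ δ) :
    dot2 (c • v + w) (c • v + w) ≤ 2 * δ ^ 2 * dot2 v v + 4 * δ ^ 2 := by
  have : c ^ 2 * dot2 v v ≤ δ ^ 2 * dot2 v v :=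
    mul_le_mul_of_nonneg_right (sq_le_sq' (abs_le.1 hc).1 (abs_le.1 hc).2) (dot2_self_nonneg v)
  have smul_self : dot2 (c • v) (c • v) = c ^ 2 * dot2 v v := by
    rw [dot2_smul_left, dot2_smul_right, sq, mul_assoc]
  linarith [dot2_self_add_le (c • v) w, dot2_self_le_two_mul_sq hw]

variable {f g : ℝ × ℝ → ℝ} {F G : ℝ × ℝ → ℝ × ℝ} {x : ℝ × ℝ}

lemma grad_sub (hf : DifferentiableAt ℝ f x) (hg : DifferentiableAt ℝ g x) :
    grad (f - g) x = grad f x - grad g x := by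
  simp only [grad, fderiv_sub hf hg, sub_apply, Prod.mk_sub_mk]

lemma div2_eq_fderiv (hF : DifferentiableAt ℝ F x) :
    div2 F x = (fderiv ℝ F x (1, 0)).1 + (fderiv ℝ F x (0, 1)).2 := by
  rw [div2, (hF.hasFDerivAt.fst).fderiv, (hF.hasFDerivAt.snd).fderiv]
  rfl

lemma div2_add (hF : DifferentiableAt ℝ F x) (hG : DifferentiableAt ℝ G x) :
    div2 (F + G) x = div2 F x + div2 G x := by
  simp only [div2_eq_fderiv, hF, hG, hF.add hG, fderiv_add hF hG, add_apply,
    Prod.fst_add, Prod.snd_add]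
  ring

lemma div2_sub (hF : DifferentiableAt ℝ F x) (hG : DifferentiableAt ℝ G x) :
    div2 (F - G) x = div2 F x - div2 G x := by
  simp only [div2_eq_fderiv, hF, hG, hF.sub hG, fderiv_sub hF hG, sub_apply,
    Prod.fst_sub, Prod.snd_sub]
  ring

lemma div2_smul (hf : DifferentiableAt ℝ f x) (hG : DifferentiableAt ℝ G x) :
    div2 (f • G) x = dot2 (grad f x) (G x) + f x * div2 G x := by
  rw [div2_eq_fderiv (hf.smul hG), div2_eq_fderiv hG, fderiv_smul hf hG]
  simp only [dot2, grad, add_apply, smul_apply,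
    ContinuousLinearMap.smulRight_apply, Prod.fst_add, Prod.snd_add, Prod.smul_fst,
    Prod.smul_snd, smul_eq_mul]
  ring

lemma continuous_grad (hf : ContDiff ℝ 1 f) : Continuous (grad f) := by
  have (v : ℝ × ℝ) : Continuous fun x => fderiv ℝ f x v :=
    (hf.continuous_fderiv one_ne_zero).clm_apply continuous_const
  exact (this _).prodMk (this _)

lemma contDiff_grad {n : WithTop ℕ∞} {X : Type*} [NormedAddCommGroup X] [NormedSpace ℝ X]
    {U : X → ℝ × ℝ → ℝ} (hU : ContDiff ℝ (n + 1) ↿U) :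
    ContDiff ℝ n fun p : X × ℝ × ℝ => grad (U p.1) p.2 := by
  have (v : ℝ × ℝ) : ContDiff ℝ n fun p : X × ℝ × ℝ => fderiv ℝ (U p.1) p.2 v :=
    ContDiff.fderiv_apply (f := fun p : X × ℝ × ℝ => U p.1)
      (hU.comp (f := fun q : (X × ℝ × ℝ) × ℝ × ℝ => (q.1.1, q.2)) (by fun_prop))
      contDiff_snd contDiff_const le_rfl
  exact (this _).prodMk (this _)

lemma continuous_deriv_left {E X : Type*} [NormedAddCommGroup E] [NormedSpace ℝ E]
    [NormedAddCommGroup X] [NormedSpace ℝ X]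
    {U : ℝ → X → E} (hU : ContDiff ℝ 1 ↿U) :
    Continuous fun p : ℝ × X => deriv (fun s => U s p.2) p.1 := by
  have : ContDiff ℝ 0 fun p : ℝ × X => fderiv ℝ (fun s => U s p.2) p.1 1 :=
    ContDiff.fderiv_apply (f := fun (p : ℝ × X) (s : ℝ) => U s p.2)
      (hU.comp (f := fun q : (ℝ × X) × ℝ => (q.2, q.1.2)) (by fun_prop))
      contDiff_fst contDiff_const (zero_add 1).le
  simpa using this.continuous

end VectorCalculus

section Torus

variable {f : ℝ × ℝ → ℝ} {G : ℝ × ℝ → ℝ × ℝ}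

lemma SpacePeriodic.sub {E : Type*} [Sub E] {f g : ℝ × ℝ → E} (hf : SpacePeriodic f)
    (hg : SpacePeriodic g) : SpacePeriodic (f - g) := fun x => by
  simp only [Pi.sub_apply, hf x, hg x, and_self]

lemma SpacePeriodic.add {E : Type*} [Add E] {f g : ℝ × ℝ → E} (hf : SpacePeriodic f)
    (hg : SpacePeriodic g) : SpacePeriodic (f + g) := fun x => by
  simp only [Pi.add_apply, hf x, hg x, and_self]

lemma SpacePeriodic.smul {E : Type*} [SMul ℝ E] {G : ℝ × ℝ → E} (hf : SpacePeriodic f)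
    (hG : SpacePeriodic G) : SpacePeriodic fun x => f x • G x := fun x => by
  simp only [hf x, hG x, and_self]

lemma SpacePeriodic.grad (hf : SpacePeriodic f) : SpacePeriodic (grad f) := by
  have fderiv_add_eq {v : ℝ × ℝ} (hv : ∀ x, f (x + v) = f x) (x : ℝ × ℝ) :
      fderiv ℝ f (x + v) = fderiv ℝ f x := by
    rw [← fderiv_comp_add_right, funext hv]
  intro x
  simp only [_root_.grad, fderiv_add_eq fun x => (hf x).1, fderiv_add_eq fun x => (hf x).2,
    and_self]

lemma integral_div2_eq_zero (hG : Differentiable ℝ G) (hdiv : Continuous (div2 G))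
    (per : SpacePeriodic G) : ∫ x in Tsq, div2 G x = 0 := by
  have G_right (y : ℝ) : G (1, y) = G (0, y) := by simpa using (per (0, y)).1
  have G_top (x : ℝ) : G (x, 1) = G (x, 0) := by simpa using (per (x, 0)).2
  have div2_eq : div2 G = fun x => (fderiv ℝ G x (1, 0)).1 + (fderiv ℝ G x (0, 1)).2 :=
    funext fun x => div2_eq_fderiv (hG x)
  have Tsq_eq : Tsq = Set.Icc ((0 : ℝ), (0 : ℝ)) (1, 1) := Set.Icc_prod_Icc _ _ _ _
  have green := integral_divergence_prod_Icc_of_hasFDerivAt_of_le (fun x => (G x).1)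
    (fun x => (G x).2) (fun x => (ContinuousLinearMap.fst ℝ ℝ ℝ).comp (fderiv ℝ G x))
    (fun x => (ContinuousLinearMap.snd ℝ ℝ ℝ).comp (fderiv ℝ G x)) (0, 0) (1, 1)
    (by simp) hG.continuous.fst.continuousOn hG.continuous.snd.continuousOn
    (fun x _ => (hG x).hasFDerivAt.fst)
    (fun x _ => (hG x).hasFDerivAt.snd)
    (by rw [div2_eq] at hdiv; exact Tsq_eq ▸ integrableOn_Tsq hdiv)
  rw [Tsq_eq, div2_eq]
  simpa [G_right, G_top] using green

lemma integral_mul_div2 (hf : ContDiff ℝ 1 f) (hG : Differentiable ℝ G)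
    (hdiv : Continuous (div2 G)) (hf_per : SpacePeriodic f) (hG_per : SpacePeriodic G) :
    ∫ x in Tsq, f x * div2 G x = -∫ x in Tsq, dot2 (grad f x) (G x) := by
  have hf_diff : Differentiable ℝ f := hf.differentiable one_ne_zero
  have grad_cont : Continuous (grad f) := continuous_grad hf
  have G_cont : Continuous G := hG.continuous
  have dot_cont : Continuous fun x => dot2 (grad f x) (G x) := by fun_prop
  have mul_cont : Continuous fun x => f x * div2 G x := hf.continuous.mul hdiv
  have div_eq : div2 (f • G) = fun x => dot2 (grad f x) (G x) + f x * div2 G x :=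
    funext fun x => div2_smul (hf_diff x) (hG x)
  have integral_eq_zero := integral_div2_eq_zero (hf_diff.smul hG)
    (div_eq ▸ dot_cont.add mul_cont) (hf_per.smul hG_per)
  rw [div_eq, integral_add (integrableOn_Tsq dot_cont) (integrableOn_Tsq mul_cont)]
    at integral_eq_zero
  linarith

lemma sq_sub_le_of_mem_Tsq (hf : ContDiff ℝ 1 f) {z w : ℝ × ℝ} (hz : z ∈ Tsq) (hw : w ∈ Tsq) :
    (f z - f w) ^ 2 ≤ 2 * (∫ s in Set.Icc (0 : ℝ) 1, (grad f (s, z.2)).1 ^ 2) +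
      2 * ∫ s in Set.Icc (0 : ℝ) 1, (grad f (w.1, s)).2 ^ 2 := by
  have grad_cont := continuous_grad hf
  have hasFDerivAt (x : ℝ × ℝ) := (hf.differentiable one_ne_zero x).hasFDerivAt
  have horizontal :
      (f z - f (w.1, z.2)) ^ 2 ≤ ∫ s in Set.Icc (0 : ℝ) 1, (grad f (s, z.2)).1 ^ 2 :=
    sq_sub_le_setIntegral_sq_deriv (f := fun s => f (s, z.2))
      (grad_cont.comp (by fun_prop : Continuous fun s => (s, z.2))).fst
      (fun s => (hasFDerivAt _).comp_hasDerivAt s ((hasDerivAt_id s).prodMk (hasDerivAt_const s _)))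
      hw.1 hz.1
  have vertical :
      (f (w.1, z.2) - f w) ^ 2 ≤ ∫ s in Set.Icc (0 : ℝ) 1, (grad f (w.1, s)).2 ^ 2 :=
    sq_sub_le_setIntegral_sq_deriv (f := fun s => f (w.1, s))
      (grad_cont.comp (by fun_prop : Continuous fun s => (w.1, s))).snd
      (fun s => (hasFDerivAt _).comp_hasDerivAt s ((hasDerivAt_const s _).prodMk (hasDerivAt_id s)))
      hw.2 hz.2
  linarith [add_sq_le (a := f z - f (w.1, z.2)) (b := f (w.1, z.2) - f w),
    congrArg (· ^ 2) (sub_add_sub_cancel (f z) (f (w.1, z.2)) (f w))]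

lemma integral_sq_le_sq_integral_add_integral_grad_sq (hf : ContDiff ℝ 1 f) :
    ∫ x in Tsq, f x ^ 2 ≤
      (∫ x in Tsq, f x) ^ 2 + ∫ x in Tsq, dot2 (grad f x) (grad f x) := by
  have f_cont := hf.continuous
  have grad_cont := continuous_grad hf
  have fst_cont : Continuous fun x => (grad f x).1 ^ 2 := grad_cont.fst.pow 2
  have snd_cont : Continuous fun x => (grad f x).2 ^ 2 := grad_cont.snd.pow 2
  have rows_cont : Continuous fun z : ℝ × ℝ => ∫ s in Set.Icc (0 : ℝ) 1, (grad f (s, z.2)).1 ^ 2 :=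
    continuous_parametric_integral_of_continuous (by fun_prop) isCompact_Icc
  have columns_cont :
      Continuous fun w : ℝ × ℝ => ∫ s in Set.Icc (0 : ℝ) 1, (grad f (w.1, s)).2 ^ 2 :=
    continuous_parametric_integral_of_continuous (by fun_prop) isCompact_Icc
  have variance_le := two_mul_integral_sq_le_of_sq_sub_le (integrableOn_Tsq f_cont)
    (integrableOn_Tsq (f_cont.pow 2)) (integrableOn_Tsq (rows_cont.const_mul 2))
    (integrableOn_Tsq (columns_cont.const_mul 2))
    (ae_restrict_of_forall_mem isCompact_Tsq.measurableSet fun z hz =>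
      ae_restrict_of_forall_mem isCompact_Tsq.measurableSet fun w hw =>
        sq_sub_le_of_mem_Tsq hf hz hw)
  rw [integral_const_mul, integral_const_mul,
    integral_Tsq_average_fst fst_cont, integral_Tsq_average_snd snd_cont] at variance_le
  have integral_grad_sq : ∫ x in Tsq, dot2 (grad f x) (grad f x) =
      (∫ x in Tsq, (grad f x).1 ^ 2) + ∫ x in Tsq, (grad f x).2 ^ 2 := by
    simp only [dot2, ← sq]
    exact integral_add (integrableOn_Tsq fst_cont) (integrableOn_Tsq snd_cont)
  linarith

end Torus

section Norms

lemma L2norm_eq_sqrt (f : ℝ × ℝ → ℝ) : L2norm f = √(∫ x in Tsq, f x ^ 2) :=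
  (Real.sqrt_eq_rpow _).symm

lemma L2norm_const_mul (c : ℝ) (f : ℝ × ℝ → ℝ) :
    L2norm (fun x => c * f x) = |c| * L2norm f := by
  simp only [L2norm_eq_sqrt, mul_pow, integral_const_mul]
  rw [Real.sqrt_mul (sq_nonneg c), Real.sqrt_sq_eq_abs]

lemma L2norm_eq_toReal_eLpNorm {f : ℝ × ℝ → ℝ}
    (hf : AEStronglyMeasurable f (volume.restrict Tsq)) :
    L2norm f = (eLpNorm f 2 (volume.restrict Tsq)).toReal := by
  rw [toReal_eLpNorm hf, lpNorm_eq_integral_norm_rpow_toReal two_ne_zero ENNReal.ofNat_ne_top hf]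
  simp [L2norm]

lemma L2norm_le_of_tendsto {g : ℕ → ℝ × ℝ → ℝ} {f : ℝ × ℝ → ℝ} {L : ℝ}
    (hg : ∀ n, Continuous (g n)) (hle : ∀ n, L2norm (g n) ≤ L)
    (hlim : ∀ x, Tendsto (fun n => g n x) atTop (nhds (f x))) : L2norm f ≤ L := by
  have g_meas (n : ℕ) : AEStronglyMeasurable (g n) (volume.restrict Tsq) :=
    (hg n).aestronglyMeasurable
  have f_meas := aestronglyMeasurable_of_tendsto_ae atTop g_meas (.of_forall hlim)
  have g_memLp (n : ℕ) : MemLp (g n) 2 (volume.restrict Tsq) :=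
    (memLp_two_iff_integrable_sq (g_meas n)).2 (integrableOn_Tsq ((hg n).pow 2))
  have hL : 0 ≤ L := (Real.rpow_nonneg (by positivity) _).trans (hle 0)
  have eLpNorm_le (n : ℕ) : eLpNorm (g n) 2 (volume.restrict Tsq) ≤ ENNReal.ofReal L := by
    rw [ENNReal.le_ofReal_iff_toReal_le (g_memLp n).eLpNorm_ne_top hL,
      ← L2norm_eq_toReal_eLpNorm (g_meas n)]
    exact hle n
  have fatou : eLpNorm f 2 (volume.restrict Tsq) ≤ ENNReal.ofReal L :=
    (Lp.eLpNorm_lim_le_liminf_eLpNorm g_meas f (.of_forall hlim)).trans <|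
      liminf_le_of_le (by isBoundedDefault) fun b hb =>
        let ⟨n, hn⟩ := hb.exists
        hn.trans (eLpNorm_le n)
  rw [L2norm_eq_toReal_eLpNorm f_meas]
  exact ENNReal.toReal_le_of_le_ofReal hL fatou

lemma L2norm_deriv_le {f : ℝ → ℝ × ℝ → ℝ} {t L : ℝ} (hf : ∀ s, Continuous (f s))
    (hd : ∀ x, DifferentiableAt ℝ (fun s => f s x) t)
    (hlip : ∀ s, L2norm (f s - f t) ≤ L * |s - t|) :
    L2norm (fun x => deriv (fun s => f s x) t) ≤ L := by
  let h (n : ℕ) : ℝ := 1 / (n + 1)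
  have h_pos (n : ℕ) : 0 < h n := Nat.one_div_pos_of_nat
  have h_tendsto : Tendsto h atTop (nhdsWithin 0 (Set.Ioi 0)) :=
    tendsto_nhdsWithin_iff.2 ⟨tendsto_one_div_add_atTop_nhds_zero_nat, .of_forall h_pos⟩
  refine L2norm_le_of_tendsto (g := fun n x => (h n)⁻¹ * (f (t + h n) - f t) x)
    (fun n => ((hf _).sub (hf _)).const_mul _) (fun n => ?_)
    (fun x => (hd x).hasDerivAt.tendsto_slope_zero_right.comp h_tendsto)
  calc L2norm (fun x => (h n)⁻¹ * (f (t + h n) - f t) x)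
      = (h n)⁻¹ * L2norm (f (t + h n) - f t) := by
        rw [L2norm_const_mul, abs_of_pos (inv_pos.2 (h_pos n))]
    _ ≤ (h n)⁻¹ * (L * |t + h n - t|) := by
        have := h_pos n
        gcongr
        exact hlip _
    _ = L := by
        rw [add_sub_cancel_left, abs_of_pos (h_pos n)]
        field_simp [(h_pos n).ne']

end Norms

/-- Total flux `a ∇U + F` of the divergence-form equation `μ U + ∂U/∂θ = ∇·(a ∇U + F)`. -/
def diffusionFlux (a : ℝ → ℝ × ℝ → ℝ) (F : ℝ → ℝ × ℝ → ℝ × ℝ) (U : ℝ → ℝ × ℝ → ℝ)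
    (θ : ℝ) : ℝ × ℝ → ℝ × ℝ :=
  a θ • grad (U θ) + F θ

lemma neg_two_mul_dot2_grad_diffusionFlux_le {ν : ℝ} {a : ℝ → ℝ × ℝ → ℝ} {F : ℝ → ℝ × ℝ → ℝ × ℝ}
    {U : ℝ → ℝ × ℝ → ℝ} {θ : ℝ} {x : ℝ × ℝ} (hν : 0 < ν) (ha : ν ≤ a θ x) :
    -2 * dot2 (grad (U θ) x) (diffusionFlux a F U θ x) ≤
      ν⁻¹ * dot2 (F θ x) (F θ x) - ν * dot2 (grad (U θ) x) (grad (U θ) x) := by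
  have expand : dot2 (grad (U θ) x) (diffusionFlux a F U θ x) =
      a θ x * dot2 (grad (U θ) x) (grad (U θ) x) + dot2 (grad (U θ) x) (F θ x) := by
    simp only [dot2, diffusionFlux, Pi.add_apply, Pi.smul_apply', Prod.fst_add, Prod.snd_add,
      Prod.smul_fst, Prod.smul_snd, smul_eq_mul]
    ring
  linarith [neg_two_mul_dot2_le hν (grad (U θ) x) (F θ x),
    mul_le_mul_of_nonneg_right ha (dot2_self_nonneg (grad (U θ) x))]

/-- Source of the equation, with coefficient `a'`, solved by `U' - U` when `U` and `U'` solve the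
equations with coefficients and sources `(a, F)` and `(a', F')`. -/
def differenceSource (a a' : ℝ → ℝ × ℝ → ℝ) (F F' : ℝ → ℝ × ℝ → ℝ × ℝ) (U : ℝ → ℝ × ℝ → ℝ)
    (θ : ℝ) : ℝ × ℝ → ℝ × ℝ :=
  (a' θ - a θ) • grad (U θ) + (F' θ - F θ)

/-- Lipschitz constant, with respect to the coefficients `a` and `F` in the sup norm, of the
`L^∞_#(ℝ, L²(𝕋²))` norm of the solution, for `a ≥ ν` and `‖F‖ ≤ γ`. -/
def stabilityConst (γ ν : ℝ) : ℝ := 2 * √((ν⁻¹ + ν⁻¹ ^ 2) * (1 + ν⁻¹ ^ 2 * γ ^ 2))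

/-- `U` is a classical solution of `μ U + ∂U/∂θ - ∇·(a ∇U) = ∇·F`, periodic of period 1 in `θ` and
in space. Only the total flux is required to be differentiable in space, so that the difference of
two solutions, whose source `F` involves a gradient, falls under the same definition. -/
structure IsPeriodicDiffusionSolution (μ : ℝ) (a : ℝ → ℝ × ℝ → ℝ) (F : ℝ → ℝ × ℝ → ℝ × ℝ)
    (U : ℝ → ℝ × ℝ → ℝ) : Prop where
  contDiff : ContDiff ℝ 1 ↿U
  differentiable_flux (θ : ℝ) : Differentiable ℝ (diffusionFlux a F U θ)
  periodic (x : ℝ × ℝ) : Function.Periodic (fun θ => U θ x) 1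
  spacePeriodic (θ : ℝ) : SpacePeriodic (U θ)
  spacePeriodic_flux (θ : ℝ) : SpacePeriodic (diffusionFlux a F U θ)
  equation (θ : ℝ) (x : ℝ × ℝ) :
    μ * U θ x + deriv (fun s => U s x) θ = div2 (diffusionFlux a F U θ) x

namespace IsPeriodicDiffusionSolution

section Difference

variable {μ : ℝ} {a a' : ℝ → ℝ × ℝ → ℝ} {F F' : ℝ → ℝ × ℝ → ℝ × ℝ} {U U' : ℝ → ℝ × ℝ → ℝ}

lemma contDiff_space (hU : IsPeriodicDiffusionSolution μ a F U) (θ : ℝ) : ContDiff ℝ 1 (U θ) :=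
  hU.contDiff.comp (f := fun x => (θ, x)) (by fun_prop)

lemma hasDerivAt (hU : IsPeriodicDiffusionSolution μ a F U) (θ : ℝ) (x : ℝ × ℝ) :
    HasDerivAt (fun s => U s x) (deriv (fun s => U s x) θ) θ :=
  ((hU.contDiff.comp (f := fun s : ℝ => (s, x)) (by fun_prop)).differentiable
    one_ne_zero θ).hasDerivAt

lemma continuous_grad_uncurry (hU : IsPeriodicDiffusionSolution μ a F U) :
    Continuous fun p : ℝ × ℝ × ℝ => grad (U p.1) p.2 :=
  (contDiff_grad (n := 0) (by simpa using hU.contDiff)).continuous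

lemma diffusionFlux_sub (hU' : IsPeriodicDiffusionSolution μ a' F' U')
    (hU : IsPeriodicDiffusionSolution μ a F U) (θ : ℝ) :
    diffusionFlux a' (differenceSource a a' F F' U) (U' - U) θ =
      diffusionFlux a' F' U' θ - diffusionFlux a F U θ := by
  funext x
  simp only [diffusionFlux, differenceSource, Pi.add_apply, Pi.sub_apply, Pi.smul_apply',
    grad_sub ((hU'.contDiff_space θ).differentiable one_ne_zero x)
      ((hU.contDiff_space θ).differentiable one_ne_zero x)]
  module

lemma sub (hU' : IsPeriodicDiffusionSolution μ a' F' U')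
    (hU : IsPeriodicDiffusionSolution μ a F U) :
    IsPeriodicDiffusionSolution μ a' (differenceSource a a' F F' U)
      (U' - U) where
  contDiff := hU'.contDiff.sub hU.contDiff
  differentiable_flux θ := by
    rw [diffusionFlux_sub hU' hU]
    exact (hU'.differentiable_flux θ).sub (hU.differentiable_flux θ)
  periodic x := (hU'.periodic x).sub (hU.periodic x)
  spacePeriodic θ := (hU'.spacePeriodic θ).sub (hU.spacePeriodic θ)
  spacePeriodic_flux θ := by
    rw [diffusionFlux_sub hU' hU]
    exact (hU'.spacePeriodic_flux θ).sub (hU.spacePeriodic_flux θ)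
  equation θ x := by
    rw [diffusionFlux_sub hU' hU, div2_sub (hU'.differentiable_flux θ x)
      (hU.differentiable_flux θ x), ← hU'.equation, ← hU.equation]
    simp only [Pi.sub_apply]
    rw [deriv_fun_sub (hU'.hasDerivAt θ x).differentiableAt (hU.hasDerivAt θ x).differentiableAt]
    ring

end Difference

section Energy

variable {μ ν : ℝ} {a : ℝ → ℝ × ℝ → ℝ} {F : ℝ → ℝ × ℝ → ℝ × ℝ} {U : ℝ → ℝ × ℝ → ℝ}

lemma continuous_deriv (hU : IsPeriodicDiffusionSolution μ a F U) :
    Continuous fun p : ℝ × ℝ × ℝ => deriv (fun s => U s p.2) p.1 :=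
  continuous_deriv_left hU.contDiff

lemma continuous_div2_flux (hU : IsPeriodicDiffusionSolution μ a F U) (θ : ℝ) :
    Continuous (div2 (diffusionFlux a F U θ)) := by
  have U_cont := (hU.contDiff_space θ).continuous
  have deriv_cont : Continuous fun x => deriv (fun s => U s x) θ :=
    hU.continuous_deriv.comp (f := fun x => (θ, x)) (by fun_prop)
  simp only [← funext (hU.equation θ)]
  fun_prop

lemma integral_eq_zero (hU : IsPeriodicDiffusionSolution μ a F U) (hμ : μ ≠ 0) (θ : ℝ) :
    ∫ x in Tsq, U θ x = 0 := by
  refine eq_zero_of_periodic_of_hasDerivAt_neg_mul one_ne_zero hμ (m := fun θ => ∫ x in Tsq, U θ x)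
    (fun θ => by simp only [hU.periodic _ θ]) (fun θ => ?_) θ
  refine (hasDerivAt_setIntegral_of_isCompact isCompact_Tsq
    (fun θ => (hU.contDiff_space θ).continuous) hU.continuous_deriv hU.hasDerivAt θ).congr_deriv ?_
  calc ∫ x in Tsq, deriv (fun s => U s x) θ
      = ∫ x in Tsq, (div2 (diffusionFlux a F U θ) x - μ * U θ x) := by
        simp only [← hU.equation, add_sub_cancel_left]
    _ = -(μ * ∫ x in Tsq, U θ x) := by
        rw [integral_sub (integrableOn_Tsq (hU.continuous_div2_flux θ))
          (integrableOn_Tsq ((hU.contDiff_space θ).continuous.const_mul μ)), integral_const_mul,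
          integral_div2_eq_zero (hU.differentiable_flux θ) (hU.continuous_div2_flux θ)
            (hU.spacePeriodic_flux θ), zero_sub]

lemma hasDerivAt_integral_sq (hU : IsPeriodicDiffusionSolution μ a F U) (θ : ℝ) :
    HasDerivAt (fun s => ∫ x in Tsq, U s x ^ 2)
      (∫ x in Tsq, 2 * U θ x * deriv (fun s => U s x) θ) θ :=
  hasDerivAt_setIntegral_of_isCompact isCompact_Tsq
    (fun θ => (hU.contDiff_space θ).continuous.pow 2)
    (f' := fun θ x => 2 * U θ x * deriv (fun s => U s x) θ)
    ((hU.contDiff.continuous.const_mul 2).mul hU.continuous_deriv)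
    (fun θ x => ((hU.hasDerivAt θ x).pow 2).congr_deriv (by simp)) θ

lemma continuous_integral_two_mul_mul_deriv (hU : IsPeriodicDiffusionSolution μ a F U) :
    Continuous fun θ => ∫ x in Tsq, 2 * U θ x * deriv (fun s => U s x) θ :=
  continuous_integral_Tsq (f := fun θ x => 2 * U θ x * deriv (fun s => U s x) θ)
    ((hU.contDiff.continuous.const_mul 2).mul hU.continuous_deriv)

lemma continuous_integral_grad_sq (hU : IsPeriodicDiffusionSolution μ a F U) :
    Continuous fun θ => ∫ x in Tsq, dot2 (grad (U θ) x) (grad (U θ) x) :=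
  continuous_integral_Tsq (f := fun θ x => dot2 (grad (U θ) x) (grad (U θ) x))
    (continuous_dot2 hU.continuous_grad_uncurry hU.continuous_grad_uncurry)

lemma integral_sq_one_eq (hU : IsPeriodicDiffusionSolution μ a F U) :
    ∫ x in Tsq, U 1 x ^ 2 = ∫ x in Tsq, U 0 x ^ 2 := by
  congr with x
  simpa using congrArg (· ^ 2) (hU.periodic x 0)

lemma integral_two_mul_mul_deriv (hU : IsPeriodicDiffusionSolution μ a F U) (θ : ℝ) :
    ∫ x in Tsq, 2 * U θ x * deriv (fun s => U s x) θ =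
      -2 * (∫ x in Tsq, dot2 (grad (U θ) x) (diffusionFlux a F U θ x)) -
        2 * μ * ∫ x in Tsq, U θ x ^ 2 := by
  have U_cont := (hU.contDiff_space θ).continuous
  have div_cont := hU.continuous_div2_flux θ
  calc ∫ x in Tsq, 2 * U θ x * deriv (fun s => U s x) θ
      = ∫ x in Tsq, (2 * (U θ x * div2 (diffusionFlux a F U θ) x) - 2 * μ * U θ x ^ 2) := by
        congr with x
        rw [← hU.equation]
        ring
    _ = 2 * (∫ x in Tsq, U θ x * div2 (diffusionFlux a F U θ) x) -
          2 * μ * ∫ x in Tsq, U θ x ^ 2 := by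
        rw [integral_sub (integrableOn_Tsq (by fun_prop)) (integrableOn_Tsq (by fun_prop)),
          integral_const_mul, integral_const_mul]
    _ = _ := by
        rw [integral_mul_div2 (hU.contDiff_space θ) (hU.differentiable_flux θ) div_cont
          (hU.spacePeriodic θ) (hU.spacePeriodic_flux θ)]
        ring

variable (hU : IsPeriodicDiffusionSolution μ a F U) (hμ : 0 < μ) (hν : 0 < ν)
  (ha : ∀ θ x, ν ≤ a θ x) (hF : Continuous ↿F)
include hU hμ hν ha hF

lemma integral_two_mul_mul_deriv_le (θ : ℝ) :
    ∫ x in Tsq, 2 * U θ x * deriv (fun s => U s x) θ ≤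
      ν⁻¹ * (∫ x in Tsq, dot2 (F θ x) (F θ x)) -
        ν * ∫ x in Tsq, dot2 (grad (U θ) x) (grad (U θ) x) := by
  have F_cont : Continuous (F θ) := hF.comp (f := fun x => (θ, x)) (by fun_prop)
  have flux_cont := (hU.differentiable_flux θ).continuous
  have grad_cont := continuous_grad (hU.contDiff_space θ)
  have integrated := setIntegral_mono
    (integrableOn_Tsq (by fun_prop)) (integrableOn_Tsq (by fun_prop))
    (fun x => neg_two_mul_dot2_grad_diffusionFlux_le (F := F) (U := U) hν (ha θ x))
  rw [integral_const_mul, integral_sub (integrableOn_Tsq (by fun_prop))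
    (integrableOn_Tsq (by fun_prop)), integral_const_mul, integral_const_mul] at integrated
  have : 0 ≤ 2 * μ * ∫ x in Tsq, U θ x ^ 2 := by positivity
  linarith [hU.integral_two_mul_mul_deriv θ]

lemma integral_integral_grad_sq_le :
    ∫ θ in (0 : ℝ)..1, ∫ x in Tsq, dot2 (grad (U θ) x) (grad (U θ) x) ≤
      ν⁻¹ ^ 2 * ∫ θ in (0 : ℝ)..1, ∫ x in Tsq, dot2 (F θ x) (F θ x) := by
  have source_cont :=
    continuous_integral_Tsq (f := fun θ x => dot2 (F θ x) (F θ x)) (continuous_dot2 hF hF)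
  have integral_deriv_eq_zero :
      ∫ θ in (0 : ℝ)..1, ∫ x in Tsq, 2 * U θ x * deriv (fun s => U s x) θ = 0 := by
    rw [intervalIntegral.integral_eq_sub_of_hasDerivAt (fun θ _ => hU.hasDerivAt_integral_sq θ)
      (hU.continuous_integral_two_mul_mul_deriv.intervalIntegrable 0 1), sub_eq_zero]
    exact hU.integral_sq_one_eq
  have integrated : 0 ≤ ∫ θ in (0 : ℝ)..1, (ν⁻¹ * (∫ x in Tsq, dot2 (F θ x) (F θ x)) -
      ν * ∫ x in Tsq, dot2 (grad (U θ) x) (grad (U θ) x)) :=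
    integral_deriv_eq_zero.symm.trans_le <| intervalIntegral.integral_mono zero_le_one
      (hU.continuous_integral_two_mul_mul_deriv.intervalIntegrable 0 1)
      (((source_cont.const_mul ν⁻¹).sub
        (hU.continuous_integral_grad_sq.const_mul ν)).intervalIntegrable 0 1)
      (hU.integral_two_mul_mul_deriv_le hμ hν ha hF)
  rw [intervalIntegral.integral_sub ((source_cont.const_mul ν⁻¹).intervalIntegrable 0 1)
    ((hU.continuous_integral_grad_sq.const_mul ν).intervalIntegrable 0 1),
    intervalIntegral.integral_const_mul, intervalIntegral.integral_const_mul] at integrated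
  rw [sq, mul_assoc, le_inv_mul_iff₀ hν]
  linarith

lemma integral_sq_le {θ : ℝ} (hθ : θ ∈ Set.Icc (0 : ℝ) 1) :
    ∫ x in Tsq, U θ x ^ 2 ≤
      (ν⁻¹ + ν⁻¹ ^ 2) * ∫ θ in (0 : ℝ)..1, ∫ x in Tsq, dot2 (F θ x) (F θ x) := by
  have source_cont :=
    continuous_integral_Tsq (f := fun θ x => dot2 (F θ x) (F θ x)) (continuous_dot2 hF hF)
  have source_nonneg (θ : ℝ) : 0 ≤ ν⁻¹ * ∫ x in Tsq, dot2 (F θ x) (F θ x) :=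
    mul_nonneg (inv_nonneg.2 hν.le) (integral_nonneg fun x => dot2_self_nonneg _)
  have deriv_le (θ : ℝ) : ∫ x in Tsq, 2 * U θ x * deriv (fun s => U s x) θ ≤
      ν⁻¹ * ∫ x in Tsq, dot2 (F θ x) (F θ x) :=
    (hU.integral_two_mul_mul_deriv_le hμ hν ha hF θ).trans <| sub_le_self _ <|
      mul_nonneg hν.le (integral_nonneg fun x => dot2_self_nonneg _)
  have poincare (θ : ℝ) :
      ∫ x in Tsq, U θ x ^ 2 ≤ ∫ x in Tsq, dot2 (grad (U θ) x) (grad (U θ) x) := by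
    simpa [hU.integral_eq_zero hμ.ne'] using
      integral_sq_le_sq_integral_add_integral_grad_sq (hU.contDiff_space θ)
  have energy_cont : Continuous fun θ => ∫ x in Tsq, U θ x ^ 2 :=
    continuous_integral_Tsq (f := fun θ x => U θ x ^ 2) (hU.contDiff.continuous.pow 2)
  calc ∫ x in Tsq, U θ x ^ 2
      ≤ (∫ s in (0 : ℝ)..1, ∫ x in Tsq, U s x ^ 2) +
          ∫ s in (0 : ℝ)..1, ν⁻¹ * ∫ x in Tsq, dot2 (F s x) (F s x) :=
        le_integral_add_integral_of_deriv_le hU.hasDerivAt_integral_sq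
          hU.continuous_integral_two_mul_mul_deriv (source_cont.const_mul ν⁻¹) source_nonneg
          deriv_le hU.integral_sq_one_eq hθ
    _ ≤ (∫ s in (0 : ℝ)..1, ∫ x in Tsq, dot2 (grad (U s) x) (grad (U s) x)) +
          ∫ s in (0 : ℝ)..1, ν⁻¹ * ∫ x in Tsq, dot2 (F s x) (F s x) := by
        gcongr
        exact intervalIntegral.integral_mono zero_le_one (energy_cont.intervalIntegrable 0 1)
          (hU.continuous_integral_grad_sq.intervalIntegrable 0 1) poincare
    _ ≤ ν⁻¹ ^ 2 * (∫ s in (0 : ℝ)..1, ∫ x in Tsq, dot2 (F s x) (F s x)) +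
          ν⁻¹ * ∫ s in (0 : ℝ)..1, ∫ x in Tsq, dot2 (F s x) (F s x) := by
        rw [intervalIntegral.integral_const_mul]
        gcongr
        exact hU.integral_integral_grad_sq_le hμ hν ha hF
    _ = _ := by ring

end Energy

section Stability

variable {μ ν γ δ : ℝ} {a a' : ℝ → ℝ × ℝ → ℝ} {F F' : ℝ → ℝ × ℝ → ℝ × ℝ} {U U' : ℝ → ℝ × ℝ → ℝ}

lemma integral_integral_grad_sq_le_of_norm_le (hU : IsPeriodicDiffusionSolution μ a F U)
    (hμ : 0 < μ) (hν : 0 < ν) (ha : ∀ θ x, ν ≤ a θ x) (hF : Continuous ↿F)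
    (hF_le : ∀ θ x, ‖F θ x‖ ≤ γ) :
    ∫ θ in (0 : ℝ)..1, ∫ x in Tsq, dot2 (grad (U θ) x) (grad (U θ) x) ≤
      ν⁻¹ ^ 2 * (2 * γ ^ 2) := by
  have F_cont (θ : ℝ) : Continuous (F θ) := hF.comp (f := fun x => (θ, x)) (by fun_prop)
  have slice_le (θ : ℝ) : ∫ x in Tsq, dot2 (F θ x) (F θ x) ≤ 2 * γ ^ 2 := by
    simpa using setIntegral_mono (integrableOn_Tsq (continuous_dot2 (F_cont θ) (F_cont θ)))
      (integrableOn_Tsq continuous_const) fun x => dot2_self_le_two_mul_sq (hF_le θ x)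
  have source_cont :=
    continuous_integral_Tsq (f := fun θ x => dot2 (F θ x) (F θ x)) (continuous_dot2 hF hF)
  refine (hU.integral_integral_grad_sq_le hμ hν ha hF).trans ?_
  gcongr
  simpa using intervalIntegral.integral_mono (μ := volume) zero_le_one
    (source_cont.intervalIntegrable 0 1) (continuous_const.intervalIntegrable 0 1) slice_le

variable (hU' : IsPeriodicDiffusionSolution μ a' F' U') (hU : IsPeriodicDiffusionSolution μ a F U)
  (hμ : 0 < μ) (hν : 0 < ν) (ha' : ∀ θ x, ν ≤ a' θ x) (ha : ∀ θ x, ν ≤ a θ x)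
  (ha'_cont : Continuous ↿a') (ha_cont : Continuous ↿a) (hF'_cont : Continuous ↿F')
  (hF_cont : Continuous ↿F) (hF_le : ∀ θ x, ‖F θ x‖ ≤ γ) (ha_sub : ∀ θ x, |a' θ x - a θ x| ≤ δ)
  (hF_sub : ∀ θ x, ‖F' θ x - F θ x‖ ≤ δ)

include hU ha'_cont ha_cont hF'_cont hF_cont

lemma continuous_differenceSource : Continuous ↿(differenceSource a a' F F' U) :=
  ((ha'_cont.sub ha_cont).smul hU.continuous_grad_uncurry).add (hF'_cont.sub hF_cont)

include ha_sub hF_sub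

lemma integral_differenceSource_sq_le (θ : ℝ) :
    ∫ x in Tsq, dot2 (differenceSource a a' F F' U θ x) (differenceSource a a' F F' U θ x) ≤
      2 * δ ^ 2 * (∫ x in Tsq, dot2 (grad (U θ) x) (grad (U θ) x)) + 4 * δ ^ 2 := by
  have source_cont : Continuous (differenceSource a a' F F' U θ) :=
    (hU.continuous_differenceSource ha'_cont ha_cont hF'_cont hF_cont).comp
      (f := fun x => (θ, x)) (by fun_prop)
  have grad_cont := continuous_grad (hU.contDiff_space θ)
  calc ∫ x in Tsq, dot2 (differenceSource a a' F F' U θ x) (differenceSource a a' F F' U θ x)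
      ≤ ∫ x in Tsq, (2 * δ ^ 2 * dot2 (grad (U θ) x) (grad (U θ) x) + 4 * δ ^ 2) :=
        setIntegral_mono (integrableOn_Tsq (by fun_prop)) (integrableOn_Tsq (by fun_prop))
          fun x => dot2_self_smul_add_le (ha_sub θ x) (hF_sub θ x)
    _ = 2 * δ ^ 2 * (∫ x in Tsq, dot2 (grad (U θ) x) (grad (U θ) x)) + 4 * δ ^ 2 := by
        rw [integral_add (integrableOn_Tsq (by fun_prop)) (integrableOn_Tsq (by fun_prop)),
          integral_const_mul, integral_const, probReal_univ, one_smul]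

include hμ hν ha hF_le

lemma integral_integral_differenceSource_sq_le :
    ∫ θ in (0 : ℝ)..1, ∫ x in Tsq,
        dot2 (differenceSource a a' F F' U θ x) (differenceSource a a' F F' U θ x) ≤
      4 * δ ^ 2 * (1 + ν⁻¹ ^ 2 * γ ^ 2) := by
  have source_cont := hU.continuous_differenceSource ha'_cont ha_cont hF'_cont hF_cont
  have source_sq_cont := continuous_integral_Tsq
    (f := fun θ x => dot2 (differenceSource a a' F F' U θ x) (differenceSource a a' F F' U θ x))
    (continuous_dot2 source_cont source_cont)
  have grad_sq_cont := hU.continuous_integral_grad_sq.const_mul (2 * δ ^ 2)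
  calc ∫ θ in (0 : ℝ)..1, ∫ x in Tsq,
        dot2 (differenceSource a a' F F' U θ x) (differenceSource a a' F F' U θ x)
      ≤ ∫ θ in (0 : ℝ)..1,
          (2 * δ ^ 2 * (∫ x in Tsq, dot2 (grad (U θ) x) (grad (U θ) x)) + 4 * δ ^ 2) :=
        intervalIntegral.integral_mono zero_le_one (source_sq_cont.intervalIntegrable 0 1)
          ((grad_sq_cont.add continuous_const).intervalIntegrable 0 1)
          (hU.integral_differenceSource_sq_le ha'_cont ha_cont hF'_cont hF_cont ha_sub hF_sub)
    _ = 2 * δ ^ 2 * (∫ θ in (0 : ℝ)..1, ∫ x in Tsq, dot2 (grad (U θ) x) (grad (U θ) x)) +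
          4 * δ ^ 2 := by
        rw [intervalIntegral.integral_add (grad_sq_cont.intervalIntegrable 0 1) (by simp),
          intervalIntegral.integral_const_mul]
        simp
    _ ≤ 2 * δ ^ 2 * (ν⁻¹ ^ 2 * (2 * γ ^ 2)) + 4 * δ ^ 2 := by
        gcongr
        exact hU.integral_integral_grad_sq_le_of_norm_le hμ hν ha hF_cont hF_le
    _ = 4 * δ ^ 2 * (1 + ν⁻¹ ^ 2 * γ ^ 2) := by ring

include hU' ha'

lemma L2norm_sub_le {θ : ℝ} (hθ : θ ∈ Set.Icc (0 : ℝ) 1) :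
    L2norm (U' θ - U θ) ≤ δ * stabilityConst γ ν := by
  have hδ : 0 ≤ δ := (abs_nonneg _).trans (ha_sub 0 0)
  rw [L2norm_eq_sqrt, stabilityConst, Real.sqrt_le_iff]
  refine ⟨by positivity, ?_⟩
  calc ∫ x in Tsq, (U' θ - U θ) x ^ 2
      ≤ (ν⁻¹ + ν⁻¹ ^ 2) * ∫ θ in (0 : ℝ)..1, ∫ x in Tsq,
          dot2 (differenceSource a a' F F' U θ x) (differenceSource a a' F F' U θ x) :=
        (hU'.sub hU).integral_sq_le hμ hν ha'
          (hU.continuous_differenceSource ha'_cont ha_cont hF'_cont hF_cont) hθ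
    _ ≤ (ν⁻¹ + ν⁻¹ ^ 2) * (4 * δ ^ 2 * (1 + ν⁻¹ ^ 2 * γ ^ 2)) := by
        gcongr
        exact hU.integral_integral_differenceSource_sq_le hμ hν ha ha'_cont ha_cont hF'_cont
          hF_cont hF_le ha_sub hF_sub
    _ = (δ * (2 * √((ν⁻¹ + ν⁻¹ ^ 2) * (1 + ν⁻¹ ^ 2 * γ ^ 2)))) ^ 2 := by
        rw [mul_pow, mul_pow, Real.sq_sqrt (by positivity)]
        ring

end Stability

end IsPeriodicDiffusionSolution

theorem regularized_cell_solution_parameter_derivative_estimates_general {μ ν γ δ t : ℝ}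
    {a : ℝ → ℝ → ℝ × ℝ → ℝ} {F : ℝ → ℝ → ℝ × ℝ → ℝ × ℝ} {U : ℝ → ℝ → ℝ × ℝ → ℝ}
    (hμ : 0 < μ) (hν : 0 < ν)
    (hU : ∀ s, IsPeriodicDiffusionSolution μ (a s) (F s) (U s))
    (ha_cont : ∀ s, Continuous ↿(a s)) (hF_cont : ∀ s, Continuous ↿(F s))
    (ha : ∀ s θ x, ν ≤ a s θ x) (hF : ∀ θ x, ‖F t θ x‖ ≤ γ)
    (ha_sub : ∀ s θ x, |a s θ x - a t θ x| ≤ δ * |s - t|)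
    (hF_sub : ∀ s θ x, ‖F s θ x - F t θ x‖ ≤ δ * |s - t|)
    (hU_diff : ∀ θ x, DifferentiableAt ℝ (fun s => U s θ x) t) :
    LinfL2Norm (fun θ x => deriv (fun s => U s θ x) t) ≤ δ * stabilityConst γ ν := by
  refine ciSup_le fun θ => ?_
  refine L2norm_deriv_le (f := fun s => U s θ) (fun s => ((hU s).contDiff_space θ).continuous)
    (hU_diff θ) fun s => ?_
  rw [mul_right_comm]
  exact (hU s).L2norm_sub_le (hU t) hμ hν (ha s) (ha t) (ha_cont s) (ha_cont t) (hF_cont s)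
    (hF_cont t) hF (ha_sub s) (hF_sub s) θ.2

section CellProblem

variable {γ ε μ ν : ℝ} {A : ℝ → ℝ → ℝ → ℝ × ℝ → ℝ} {C : ℝ → ℝ → ℝ → ℝ × ℝ → ℝ × ℝ}
  {S : ℝ → ℝ → ℝ → ℝ × ℝ → ℝ}

lemma CoeffBasic.lipschitz_left (h : CoeffBasic γ ε A C) (s t τ θ : ℝ) (x : ℝ × ℝ) :
    |A s τ θ x - A t τ θ x| ≤ γ * |s - t| ∧ ‖C s τ θ x - C t τ θ x‖ ≤ γ * |s - t| := by
  obtain ⟨hA, hC, -, -, -, h1, -⟩ := h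
  have hA' := hA.comp (f := fun s : ℝ => (s, τ, θ, x)) (by fun_prop)
  have hC' := hC.comp (f := fun s : ℝ => (s, τ, θ, x)) (by fun_prop)
  have h_ne : ((⊤ : ℕ∞) : WithTop ℕ∞) ≠ 0 := by simp
  exact ⟨convex_univ.norm_image_sub_le_of_norm_deriv_le (fun s _ => hA'.differentiable h_ne s)
      (fun s _ => (h1 s τ θ x).2.2.1) trivial trivial,
    convex_univ.norm_image_sub_le_of_norm_deriv_le (fun s _ => hC'.differentiable h_ne s)
      (fun s _ => (h1 s τ θ x).2.2.2.1) trivial trivial⟩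

lemma CoeffBasic.lipschitz_right (h : CoeffBasic γ ε A C) (s t τ θ : ℝ) (x : ℝ × ℝ) :
    |A t s θ x - A t τ θ x| ≤ √ε * γ * |s - τ| ∧ ‖C t s θ x - C t τ θ x‖ ≤ √ε * γ * |s - τ| := by
  obtain ⟨hA, hC, -, -, -, -, h2⟩ := h
  have hA' := hA.comp (f := fun s : ℝ => (t, s, θ, x)) (by fun_prop)
  have hC' := hC.comp (f := fun s : ℝ => (t, s, θ, x)) (by fun_prop)
  have h_ne : ((⊤ : ℕ∞) : WithTop ℕ∞) ≠ 0 := by simp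
  exact ⟨convex_univ.norm_image_sub_le_of_norm_deriv_le (fun s _ => hA'.differentiable h_ne s)
      (fun s _ => (h2 t s θ x).1) trivial trivial,
    convex_univ.norm_image_sub_le_of_norm_deriv_le (fun s _ => hC'.differentiable h_ne s)
      (fun s _ => (h2 t s θ x).2.1) trivial trivial⟩

lemma CoeffBasic.contDiff_A (h : CoeffBasic γ ε A C) (t τ : ℝ) :
    ContDiff ℝ 1 ↿(A t τ) :=
  (h.1.comp (f := fun p : ℝ × ℝ × ℝ => (t, τ, p)) (by fun_prop)).of_le (mod_cast le_top)

lemma CoeffBasic.contDiff_C (h : CoeffBasic γ ε A C) (t τ : ℝ) :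
    ContDiff ℝ 1 ↿(C t τ) :=
  (h.2.1.comp (f := fun p : ℝ × ℝ × ℝ => (t, τ, p)) (by fun_prop)).of_le (mod_cast le_top)

lemma IsRegCellSolP.isPeriodicDiffusionSolution (hS : IsRegCellSolP A C μ ν S)
    (h : CoeffBasic γ ε A C) (t τ : ℝ) :
    IsPeriodicDiffusionSolution μ (fun θ x => A t τ θ x + ν) (C t τ) (S t τ) := by
  obtain ⟨hS, hS_periodic, hS_space, hS_eq⟩ := hS
  have ⟨_, _, _, _, hper, _⟩ := h
  have S_contDiff : ContDiff ℝ 2 ↿(S t τ) :=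
    contDiff_infty.1 (hS.comp (f := fun p : ℝ × ℝ × ℝ => (t, τ, p)) (by fun_prop)) 2
  have A_diff (θ : ℝ) : Differentiable ℝ fun x => A t τ θ x + ν :=
    ((h.contDiff_A t τ).differentiable one_ne_zero).comp
      (f := fun x => (θ, x)) (by fun_prop) |>.add_const ν
  have C_diff (θ : ℝ) : Differentiable ℝ (C t τ θ) :=
    ((h.contDiff_C t τ).differentiable one_ne_zero).comp
      (f := fun x => (θ, x)) (by fun_prop)
  have grad_diff (θ : ℝ) : Differentiable ℝ (grad (S t τ θ)) :=
    ((contDiff_grad (n := 1) (by simpa [one_add_one_eq_two])).differentiable one_ne_zero).comp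
      (f := fun x => (θ, x)) (by fun_prop)
  exact
    { contDiff := S_contDiff.of_le one_le_two
      differentiable_flux := fun θ => ((A_diff θ).smul (grad_diff θ)).add (C_diff θ)
      periodic := fun x θ => hS_periodic t τ θ x
      spacePeriodic := hS_space t τ
      spacePeriodic_flux := fun θ =>
        (((hper t τ θ).1.add fun _ => ⟨rfl, rfl⟩).smul (hS_space t τ θ).grad).add
          (hper t τ θ).2
      equation := fun θ x => (sub_eq_iff_eq_add'.1 (hS_eq t τ θ x)).trans
        (div2_add ((A_diff θ).smul (grad_diff θ) x) (C_diff θ x)).symm }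

lemma IsRegCellSolP.differentiableAt_left (hS : IsRegCellSolP A C μ ν S) (t τ θ : ℝ)
    (x : ℝ × ℝ) : DifferentiableAt ℝ (fun s => S s τ θ x) t :=
  (hS.1.comp (f := fun s : ℝ => (s, τ, θ, x)) (by fun_prop)).differentiable (by simp) t

lemma IsRegCellSolP.differentiableAt_right (hS : IsRegCellSolP A C μ ν S) (t τ θ : ℝ)
    (x : ℝ × ℝ) : DifferentiableAt ℝ (fun s => S t s θ x) τ :=
  (hS.1.comp (f := fun s : ℝ => (t, s, θ, x)) (by fun_prop)).differentiable (by simp) τ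

end CellProblem

/-- Lemma 3.11: for any `μ > 0`, `ν > 0` and `ε > 0`, the `θ`-periodic solution
`S_μ^ν` of the regularized cell problem, depending on the parameters `t` and `τ`,
satisfies `‖∂S_μ^ν/∂t‖_{L^∞_#(ℝ,L²(𝕋²))} ≤ γ₃` and
`‖∂S_μ^ν/∂τ‖_{L^∞_#(ℝ,L²(𝕋²))} ≤ √ε γ₃`, where `γ₃` depends only on `γ` and `ν`. -/
theorem regularized_cell_solution_parameter_derivative_estimates :
    ∀ γ ν : ℝ, 0 ≤ γ → 0 < ν → ∃ γ₃ : ℝ,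
      ∀ (ε : ℝ) (A : ℝ → ℝ → ℝ → (ℝ × ℝ) → ℝ) (C : ℝ → ℝ → ℝ → (ℝ × ℝ) → ℝ × ℝ)
        (μ : ℝ) (S : ℝ → ℝ → ℝ → (ℝ × ℝ) → ℝ),
        0 < ε → ε ≤ 1 → CoeffBasic γ ε A C → 0 < μ →
        IsRegCellSolP A C μ ν S →
        ∀ t τ : ℝ,
          LinfL2Norm (fun θ x => deriv (fun s => S s τ θ x) t) ≤ γ₃ ∧
          LinfL2Norm (fun θ x => deriv (fun s => S t s θ x) τ) ≤ Real.sqrt ε * γ₃ := by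
  intro γ ν _ hν
  refine ⟨γ * stabilityConst γ ν, fun ε A C μ S _ _ h hμ hS t τ => ?_⟩
  have ⟨_, _, A_nonneg, _, _, hH1, _⟩ := h
  have sol := hS.isPeriodicDiffusionSolution h
  have A_cont (t τ : ℝ) : Continuous ↿fun θ x => A t τ θ x + ν :=
    (h.contDiff_A t τ).continuous.add continuous_const
  have C_cont (t τ : ℝ) : Continuous ↿(C t τ) := (h.contDiff_C t τ).continuous
  have A_ge (t τ θ : ℝ) (x : ℝ × ℝ) : ν ≤ A t τ θ x + ν := le_add_of_nonneg_left (A_nonneg t τ θ x)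
  have C_le (θ : ℝ) (x : ℝ × ℝ) : ‖C t τ θ x‖ ≤ γ := (hH1 t τ θ x).2.1
  rw [← mul_assoc]
  constructor
  · exact regularized_cell_solution_parameter_derivative_estimates_general
      (a := fun s θ x => A s τ θ x + ν) hμ hν (sol · τ) (A_cont · τ) (C_cont · τ) (A_ge · τ) C_le
      (fun s θ x => by simpa using (h.lipschitz_left s t τ θ x).1)
      (fun s θ x => (h.lipschitz_left s t τ θ x).2)
      (hS.differentiableAt_left t τ)
  · exact regularized_cell_solution_parameter_derivative_estimates_general
      (a := fun s θ x => A t s θ x + ν) hμ hν (sol t) (A_cont t) (C_cont t) (A_ge t) C_le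
      (fun s θ x => by simpa using (h.lipschitz_right s t τ θ x).1)
      (fun s θ x => (h.lipschitz_right s t τ θ x).2)
      (hS.differentiableAt_right t τ)
end
end

section
/- Under hypotheses (H1), (H2) and the periodicity of Ã_ε and C̃_ε in τ and θ, for any ν > 0 there exists a unique S^ν = S^ν(t,τ,θ,x) ∈ L²(ℝ×𝕋²), periodic of period 1 in θ, solving ∂S^ν/∂θ − ∇·((Ã_ε(t,τ,·,·)+ν)∇S^ν) = ∇·C̃_ε(t,τ,·,·) subject to the constraint sup_θ |∫_{𝕋²} S^ν(θ,x) dx| = 0. Moreover there is a constant γ₃, depending only on γ and ν, such that ‖∂S^ν/∂θ‖_{L²_#(ℝ×𝕋²)} ≤ γ₃, ‖∇S^ν‖_{L^∞_#(ℝ,L²(𝕋²))} ≤ γ₃, ‖S^ν‖_{L^∞_#(ℝ,L²(𝕋²))} ≤ γ₃, ‖∂S^ν/∂t‖_{L^∞_#(ℝ,L²(𝕋²))} ≤ γ₃ and ‖∂S^ν/∂τ‖_{L^∞_#(ℝ,L²(𝕋²))} ≤ √ε γ₃. -/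
open MeasureTheory Filter

noncomputable section

/-!
The parameters `t` and `τ` enter the cell problem without being differentiated, so the problem is
solved with all the variables at once: the unknown is a smooth function of `(t, τ, θ, x)`, and
Galerkin's method is run over the ring of the smooth functions of the parameters. Differentiating
the Galerkin equations in an arbitrary direction gives equations of the same form with the
derivatives as unknowns, so the energy inequality bounds all the derivatives of the approximations
in mean square over the torus, hence locally uniformly, and a limit along an ultrafilter is a smooth
solution. The estimates of the solution are energy inequalities as well. Each bound that is uniform
in `θ` comes from a bound on the `θ`-derivative of a spatial integral and the `θ`-average of that
integral, and the derivatives in `t` and `τ` solve the cell problem with a modified flux.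
-/

open Topology

section Smoothness

variable {E F : Type*} [NormedAddCommGroup E] [NormedSpace ℝ E]
  [NormedAddCommGroup F] [NormedSpace ℝ F]

theorem fderiv_fderiv_apply {f : E → F} (hf : ContDiff ℝ 2 f) (p v : E) :
    fderiv ℝ (fderiv ℝ f) p v = fderiv ℝ (fun q => fderiv ℝ f q v) p := by
  ext w
  have hdiff : DifferentiableAt ℝ (fderiv ℝ f) p :=
    (hf.fderiv_right (m := 1) (by norm_num)).differentiable one_ne_zero p
  rw [fderiv_clm_apply hdiff (differentiableAt_const v)]
  simpa using (hf.contDiffAt.isSymmSndFDerivAt (by simp)).eq v w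

theorem contDiff_infty_of_fderiv_apply_closed [FiniteDimensional ℝ E] {P : (E → F) → Prop}
    (hdiff : ∀ f, P f → Differentiable ℝ f)
    (hP : ∀ f, P f → ∀ v, P fun p => fderiv ℝ f p v) {f : E → F} (hf : P f) :
    ContDiff ℝ (⊤ : ℕ∞) f := by
  refine contDiff_infty.2 fun n => ?_
  induction n generalizing f with
  | zero => exact contDiff_zero.2 (hdiff f hf).continuous
  | succ n ih =>
    exact_mod_cast contDiff_succ_iff_fderiv_apply.2 ⟨hdiff f hf, by simp, fun v => ih (hP f hf v)⟩

end Smoothness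

section Average

variable {E : Type*} [NormedAddCommGroup E] [NormedSpace ℝ E]

/-- The average of `f` over the unit segment issued from `p` in the direction `v`. -/
def segmentAverage (v : E) (f : E → ℝ) (p : E) : ℝ := ∫ s in (0 : ℝ)..1, f (p + s • v)

variable [FiniteDimensional ℝ E]

theorem hasFDerivAt_segmentAverage (v : E) {f : E → ℝ} (hf : ContDiff ℝ 1 f) (p : E) :
    HasFDerivAt (segmentAverage v f) (∫ s in (0 : ℝ)..1, fderiv ℝ f (p + s • v)) p := by
  have hf' : Continuous (fderiv ℝ f) := hf.continuous_fderiv one_ne_zero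
  have hfc : Continuous f := hf.continuous
  obtain ⟨C, hC⟩ :=
    (isCompact_closedBall p (1 + ‖v‖)).exists_bound_of_continuousOn hf'.continuousOn
  refine intervalIntegral.hasFDerivAt_integral_of_dominated_of_fderiv_le (𝕜 := ℝ)
    (F' := fun q s => fderiv ℝ f (q + s • v)) (bound := fun _ => C) (Metric.ball_mem_nhds p one_pos)
    (Eventually.of_forall fun q => Continuous.aestronglyMeasurable (by fun_prop))
    (Continuous.intervalIntegrable (by fun_prop) _ _)
    (Continuous.aestronglyMeasurable (by fun_prop))
    (Eventually.of_forall fun s hs q hq => hC _ ?_) (by simp)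
    (Eventually.of_forall fun s _ q _ => ?_)
  · rw [Set.uIoc_of_le zero_le_one] at hs
    rw [mem_closedBall_iff_norm, add_sub_right_comm]
    calc ‖q - p + s • v‖ ≤ ‖q - p‖ + ‖s • v‖ := norm_add_le _ _
      _ ≤ 1 + 1 * ‖v‖ := by
        rw [norm_smul, Real.norm_of_nonneg hs.1.le]
        gcongr
        · exact (mem_ball_iff_norm.1 hq).le
        · exact hs.2
      _ = 1 + ‖v‖ := by rw [one_mul]
  · exact (hasFDerivAt_comp_add_right (s • v)).2
      (hf.differentiable one_ne_zero _).hasFDerivAt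

theorem fderiv_segmentAverage_apply (v w : E) {f : E → ℝ} (hf : ContDiff ℝ 1 f) :
    (fun p => fderiv ℝ (segmentAverage v f) p w) =
      segmentAverage v fun p => fderiv ℝ f p w := by
  funext p
  have := hf.continuous_fderiv one_ne_zero
  rw [(hasFDerivAt_segmentAverage v hf p).fderiv]
  exact ContinuousLinearMap.intervalIntegral_apply
    (Continuous.intervalIntegrable (by fun_prop) _ _) w

theorem contDiff_segmentAverage (v : E) {f : E → ℝ} (hf : ContDiff ℝ (⊤ : ℕ∞) f) :
    ContDiff ℝ (⊤ : ℕ∞) (segmentAverage v f) := by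
  refine contDiff_infty_of_fderiv_apply_closed
    (P := fun g => ∃ f, ContDiff ℝ (⊤ : ℕ∞) f ∧ segmentAverage v f = g) ?_ ?_ ⟨f, hf, rfl⟩
  · rintro _ ⟨f, hf, rfl⟩
    exact fun p => (hasFDerivAt_segmentAverage v (hf.of_le (by simp)) p).differentiableAt
  · rintro _ ⟨f, hf, rfl⟩ w
    exact ⟨fun p => fderiv ℝ f p w, (hf.fderiv_right (by simp)).clm_apply contDiff_const,
      (fderiv_segmentAverage_apply v w (hf.of_le (by simp))).symm⟩

end Average

/-- The smooth real functions on `E` that are periodic with respect to each vector of the family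
`b`, as a subalgebra of all functions. -/
def periodicSmoothSubalgebra {κ E : Type*} [NormedAddCommGroup E] [NormedSpace ℝ E] (b : κ → E) :
    Subalgebra ℝ (E → ℝ) where
  carrier := {f | ContDiff ℝ (⊤ : ℕ∞) f ∧ ∀ i p, f (p + b i) = f p}
  mul_mem' hf hg := ⟨hf.1.mul hg.1, fun i p => by simp only [Pi.mul_apply, hf.2 i, hg.2 i]⟩
  add_mem' hf hg := ⟨hf.1.add hg.1, fun i p => by simp only [Pi.add_apply, hf.2 i, hg.2 i]⟩
  algebraMap_mem' _ := ⟨contDiff_const, fun _ _ => rfl⟩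

/-- The type of smooth real functions on `E` with period vectors `b i`. -/
def PeriodicSmooth {κ E : Type*} [NormedAddCommGroup E] [NormedSpace ℝ E] (b : κ → E) :
    Type _ := periodicSmoothSubalgebra b

namespace PeriodicSmooth

variable {κ E : Type*} [NormedAddCommGroup E] [NormedSpace ℝ E] {b : κ → E}

instance : CommRing (PeriodicSmooth b) := inferInstanceAs (CommRing (periodicSmoothSubalgebra b))

instance : Algebra ℝ (PeriodicSmooth b) := inferInstanceAs (Algebra ℝ (periodicSmoothSubalgebra b))

instance : FunLike (PeriodicSmooth b) E ℝ := ⟨Subtype.val, Subtype.val_injective⟩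

/-- The element of `PeriodicSmooth b` with underlying function `f`. -/
def mk (f : E → ℝ) (hf : ContDiff ℝ (⊤ : ℕ∞) f) (hper : ∀ i p, f (p + b i) = f p) :
    PeriodicSmooth b := ⟨f, hf, hper⟩

@[ext] theorem ext {f g : PeriodicSmooth b} (h : ∀ p, f p = g p) : f = g := DFunLike.ext f g h

theorem contDiff (f : PeriodicSmooth b) : ContDiff ℝ (⊤ : ℕ∞) (f : E → ℝ) := f.2.1

theorem contDiff_two (f : PeriodicSmooth b) : ContDiff ℝ 2 (f : E → ℝ) :=
  f.contDiff.of_le (WithTop.coe_le_coe.2 le_top)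

theorem continuous (f : PeriodicSmooth b) : Continuous (f : E → ℝ) := f.contDiff.continuous

theorem differentiable (f : PeriodicSmooth b) : Differentiable ℝ (f : E → ℝ) :=
  f.contDiff.differentiable (by simp)

theorem apply_add_period (f : PeriodicSmooth b) (i : κ) (p : E) : f (p + b i) = f p := f.2.2 i p

@[simp] theorem add_apply (f g : PeriodicSmooth b) (p : E) : (f + g) p = f p + g p := rfl
@[simp] theorem sub_apply (f g : PeriodicSmooth b) (p : E) : (f - g) p = f p - g p := rfl
@[simp] theorem neg_apply (f : PeriodicSmooth b) (p : E) : (-f) p = -f p := rfl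
@[simp] theorem mul_apply (f g : PeriodicSmooth b) (p : E) : (f * g) p = f p * g p := rfl
@[simp] theorem smul_apply (c : ℝ) (f : PeriodicSmooth b) (p : E) : (c • f) p = c * f p := rfl
@[simp] theorem zero_apply (p : E) : (0 : PeriodicSmooth b) p = 0 := rfl
@[simp] theorem pow_apply (f : PeriodicSmooth b) (n : ℕ) (p : E) : (f ^ n) p = f p ^ n := rfl
@[simp] theorem algebraMap_apply (c : ℝ) (p : E) : (algebraMap ℝ (PeriodicSmooth b) c) p = c := rfl

variable (b) in
/-- Evaluation at `p`, as a ring homomorphism. -/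
def eval (p : E) : PeriodicSmooth b →+* ℝ :=
  (Pi.evalRingHom (fun _ => ℝ) p).comp (periodicSmoothSubalgebra b).val.toRingHom

@[simp] theorem sum_apply {ι : Type*} (s : Finset ι) (f : ι → PeriodicSmooth b) (p : E) :
    (∑ i ∈ s, f i) p = ∑ i ∈ s, f i p := map_sum (eval b p) f s

/-- The derivative in the direction `v`. -/
def D (v : E) : Derivation ℝ (PeriodicSmooth b) (PeriodicSmooth b) :=
  Derivation.mk'
    { toFun := fun f => mk (fun p => fderiv ℝ f p v)
        ((f.contDiff.fderiv_right (by simp)).clm_apply contDiff_const) fun i p => by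
          simp only [← fderiv_comp_add_right, f.apply_add_period i]
      map_add' := fun f g => ext fun p =>
        DFunLike.congr_fun (fderiv_add (f.differentiable p) (g.differentiable p)) v
      map_smul' := fun c f => ext fun p =>
        DFunLike.congr_fun (fderiv_const_smul (f.differentiable p) c) v }
    fun f g => ext fun p =>
      DFunLike.congr_fun (fderiv_mul (f.differentiable p) (g.differentiable p)) v

theorem D_apply (v : E) (f : PeriodicSmooth b) (p : E) : D v f p = fderiv ℝ f p v := rfl

theorem D_mul (v : E) (f g : PeriodicSmooth b) : D v (f * g) = D v f * g + f * D v g := by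
  rw [Derivation.leibniz, smul_eq_mul, smul_eq_mul]; ring

theorem D_comm (v w : E) (f : PeriodicSmooth b) : D v (D w f) = D w (D v f) := by
  ext p
  have hD : ∀ v w, D v (D w f) p = fderiv ℝ (fderiv ℝ f) p w v := fun v w => by
    rw [fderiv_fderiv_apply f.contDiff_two]; rfl
  rw [hD, hD]
  exact (f.contDiff_two.contDiffAt.isSymmSndFDerivAt (by simp)).eq w v

theorem hasDerivAt_line (v : E) (f : PeriodicSmooth b) (p : E) (s : ℝ) :
    HasDerivAt (fun s : ℝ => f (p + s • v)) (D v f (p + s • v)) s := by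
  have hline : HasDerivAt (fun s : ℝ => p + s • v) v s := by
    simpa using ((hasDerivAt_id s).smul_const v).const_add p
  exact (f.differentiable _).hasFDerivAt.comp_hasDerivAt s hline

theorem intervalIntegrable_line (v : E) (f : PeriodicSmooth b) (p : E) (r s : ℝ) :
    IntervalIntegrable (fun s => f (p + s • v)) volume r s :=
  Continuous.intervalIntegrable (by have := f.continuous; fun_prop) r s

theorem integral_D_line (v : E) (f : PeriodicSmooth b) (p : E) (r s : ℝ) :
    ∫ x in r..s, D v f (p + x • v) = f (p + s • v) - f (p + r • v) :=
  intervalIntegral.integral_eq_sub_of_hasDerivAt (fun x _ => hasDerivAt_line v f p x)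
    (intervalIntegrable_line v (D v f) p r s)

theorem apply_add_smul_of_D_eq_zero {v : E} {f : PeriodicSmooth b} (h : D v f = 0) (p : E)
    (s : ℝ) : f (p + s • v) = f p := by
  simpa [h, sub_eq_zero, eq_comm (a := (0 : ℝ))] using integral_D_line v f p 0 s

theorem apply_eq_of_D_eq_zero {f : PeriodicSmooth b} (h : ∀ v, D v f = 0) (p q : E) :
    f p = f q := by
  simpa using (apply_add_smul_of_D_eq_zero (h (p - q)) q 1)

section Mean

variable {κ E : Type*} [NormedAddCommGroup E] [NormedSpace ℝ E] [FiniteDimensional ℝ E] {b : κ → E}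

/-- The average over one period in the direction `b i`. -/
def mean (i : κ) : PeriodicSmooth b →ₗ[ℝ] PeriodicSmooth b where
  toFun f := mk (segmentAverage (b i) f) (contDiff_segmentAverage _ f.contDiff) fun k p => by
    simp only [segmentAverage, add_right_comm _ (b k), f.apply_add_period k]
  map_add' f g := ext fun p => intervalIntegral.integral_add
    (intervalIntegrable_line (b i) f p 0 1) (intervalIntegrable_line (b i) g p 0 1)
  map_smul' _ _ := ext fun _ => intervalIntegral.integral_const_mul _ _

theorem mean_apply (i : κ) (f : PeriodicSmooth b) (p : E) :
    mean i f p = ∫ s in (0 : ℝ)..1, f (p + s • b i) := rfl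

theorem D_mean (v : E) (i : κ) (f : PeriodicSmooth b) : D v (mean i f) = mean i (D v f) :=
  ext fun p => congrFun (fderiv_segmentAverage_apply (b i) v (f.contDiff.of_le (by simp))) p

theorem mean_D_self (i : κ) (f : PeriodicSmooth b) : mean i (D (b i) f) = 0 := by
  ext p
  simp [mean_apply, integral_D_line, f.apply_add_period]

theorem mean_mono_of_segment (i : κ) {f g : PeriodicSmooth b} {p : E}
    (h : ∀ s ∈ Set.Icc (0 : ℝ) 1, f (p + s • b i) ≤ g (p + s • b i)) : mean i f p ≤ mean i g p :=
  intervalIntegral.integral_mono_on zero_le_one (intervalIntegrable_line _ f p 0 1)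
    (intervalIntegrable_line _ g p 0 1) h

theorem mean_mono (i : κ) {f g : PeriodicSmooth b} (h : ∀ p, f p ≤ g p) (p : E) :
    mean i f p ≤ mean i g p := mean_mono_of_segment i fun _ _ => h _

theorem mean_mul_of_D_eq_zero {i : κ} {c : PeriodicSmooth b} (h : D (b i) c = 0)
    (f : PeriodicSmooth b) : mean i (c * f) = c * mean i f := by
  ext p
  simp only [mul_apply, mean_apply, apply_add_smul_of_D_eq_zero h]
  exact intervalIntegral.integral_const_mul _ _

theorem mean_algebraMap (i : κ) (c : ℝ) :
    mean i (algebraMap ℝ (PeriodicSmooth b) c) = algebraMap ℝ _ c := by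
  ext p
  simp [mean_apply]

theorem mean_of_D_eq_zero {i : κ} {c : PeriodicSmooth b} (h : D (b i) c = 0) : mean i c = c := by
  have h1 := mean_algebraMap (b := b) i 1
  rw [map_one] at h1
  simpa only [h1, mul_one] using mean_mul_of_D_eq_zero h 1

theorem apply_eq_zero_of_mean_nonpos (i : κ) {g : PeriodicSmooth b} (hg : ∀ p, 0 ≤ g p) {p : E}
    (h : mean i g p ≤ 0) : g p = 0 := by
  have hcont : Continuous fun s : ℝ => g (p + s • b i) := by have := g.continuous; fun_prop
  by_contra hne
  refine h.not_gt (intervalIntegral.integral_pos zero_lt_one hcont.continuousOn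
    (fun s _ => hg _) ⟨0, by simp, ?_⟩)
  simpa using (hg p).lt_of_ne' hne

theorem apply_le_mean_add_mean (i : κ) {e g : PeriodicSmooth b} (h : ∀ p, D (b i) e p ≤ g p)
    (hg : ∀ p, 0 ≤ g p) (p : E) : e p ≤ mean i e p + mean i g p := by
  have hle : ∀ s ∈ Set.Icc (0 : ℝ) 1, e p - mean i g p ≤ e (p + s • b i) := by
    intro s hs
    have hint := intervalIntegrable_line (b i) g p
    have hD : ∫ r in s..1, D (b i) e (p + r • b i) ≤ ∫ r in s..1, g (p + r • b i) :=
      intervalIntegral.integral_mono_on hs.2 (intervalIntegrable_line _ _ p s 1) (hint s 1)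
        fun _ _ => h _
    have hmono : ∫ r in s..1, g (p + r • b i) ≤ mean i g p :=
      intervalIntegral.integral_mono_interval hs.1 hs.2 le_rfl
        (Eventually.of_forall fun _ => hg _) (hint 0 1)
    rw [integral_D_line, one_smul, e.apply_add_period] at hD
    linarith
  have := intervalIntegral.integral_mono_on zero_le_one intervalIntegrable_const
    (intervalIntegrable_line (b i) e p 0 1) hle
  rw [← mean_apply, intervalIntegral.integral_const, sub_zero, one_smul] at this
  linarith

theorem sq_sub_mean_le (i : κ) (f : PeriodicSmooth b) (p : E) :
    (f p - mean i f p) ^ 2 ≤ mean i (D (b i) f ^ 2) p := by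
  set a : ℝ := f p - mean i f p with ha
  have h := apply_le_mean_add_mean i (e := a • f)
    (g := (1 / 2 : ℝ) • (algebraMap ℝ _ (a ^ 2) + D (b i) f ^ 2))
    (fun q => by
      simp only [Derivation.map_smul, smul_apply, add_apply, algebraMap_apply, pow_apply]
      nlinarith [sq_nonneg (a - D (b i) f q)])
    (fun q => by simp only [smul_apply, add_apply, algebraMap_apply, pow_apply]; positivity) p
  simp only [map_smul, map_add, mean_algebraMap, smul_apply, add_apply, algebraMap_apply] at h
  have : a * f p - a * mean i f p = a ^ 2 := by rw [ha]; ring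
  linarith

theorem mean_sq_le (i : κ) (f : PeriodicSmooth b) (p : E) :
    mean i (f ^ 2) p ≤ mean i f p ^ 2 + mean i (D (b i) f ^ 2) p := by
  have hinv : ∀ g : PeriodicSmooth b, D (b i) (mean i g) = 0 := fun g => by
    rw [D_mean, mean_D_self]
  have h := mean_mono i (f := f ^ 2 - (2 : ℝ) • (mean i f * f) + mean i f * mean i f)
    (g := mean i (D (b i) f ^ 2)) (fun q => by
      simpa only [add_apply, sub_apply, smul_apply, mul_apply, pow_apply, sub_sq, sq (mean i f q),
        mul_assoc, mul_comm (f q)] using sq_sub_mean_le i f q) p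
  simp only [map_add, map_sub, map_smul, mean_mul_of_D_eq_zero (hinv f), mean_of_D_eq_zero (hinv _),
    add_apply, sub_apply, smul_apply, mul_apply] at h
  linarith

/-- The iterated average over one period in each of the directions listed in `l`. -/
def meanOver : List κ → PeriodicSmooth b →ₗ[ℝ] PeriodicSmooth b
  | [] => LinearMap.id
  | i :: l => mean i ∘ₗ meanOver l

@[simp] theorem meanOver_nil (f : PeriodicSmooth b) : meanOver [] f = f := rfl

theorem meanOver_cons (i : κ) (l : List κ) (f : PeriodicSmooth b) :
    meanOver (i :: l) f = mean i (meanOver l f) := rfl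

theorem D_meanOver (v : E) (l : List κ) (f : PeriodicSmooth b) :
    D v (meanOver l f) = meanOver l (D v f) := by
  induction l with
  | nil => rfl
  | cons i l ih => rw [meanOver_cons, D_mean, ih, meanOver_cons]

theorem meanOver_D_eq_zero {i : κ} {l : List κ} (hi : i ∈ l) (f : PeriodicSmooth b) :
    meanOver l (D (b i) f) = 0 := by
  induction l with
  | nil => cases hi
  | cons k l ih =>
    rcases List.mem_cons.1 hi with rfl | hi
    · rw [meanOver_cons, ← D_meanOver, mean_D_self]
    · rw [meanOver_cons, ih hi, map_zero]

theorem meanOver_mono_of_ball (l : List κ) {f g : PeriodicSmooth b} {p : E}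
    (h : ∀ q, ‖q - p‖ ≤ (l.map fun i => ‖b i‖).sum → f q ≤ g q) :
    meanOver l f p ≤ meanOver l g p := by
  induction l generalizing p with
  | nil => exact h p (by simp)
  | cons i l ih =>
    refine mean_mono_of_segment i fun s hs => ih fun q hq => h q ?_
    rw [List.map_cons, List.sum_cons]
    calc ‖q - p‖ = ‖s • b i + (q - (p + s • b i))‖ := by congr 1; abel
      _ ≤ ‖s • b i‖ + ‖q - (p + s • b i)‖ := norm_add_le _ _
      _ ≤ 1 * ‖b i‖ + (l.map fun i => ‖b i‖).sum := by
        rw [norm_smul, Real.norm_of_nonneg hs.1]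
        gcongr
        exact hs.2
      _ = _ := by rw [one_mul]

theorem meanOver_mono (l : List κ) {f g : PeriodicSmooth b} (h : ∀ p, f p ≤ g p) (p : E) :
    meanOver l f p ≤ meanOver l g p := meanOver_mono_of_ball l fun q _ => h q

theorem meanOver_nonneg (l : List κ) {f : PeriodicSmooth b} (h : ∀ p, 0 ≤ f p) (p : E) :
    0 ≤ meanOver l f p := by
  simpa using meanOver_mono l (f := 0) h p

theorem meanOver_algebraMap (l : List κ) (c : ℝ) :
    meanOver l (algebraMap ℝ (PeriodicSmooth b) c) = algebraMap ℝ _ c := by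
  induction l with
  | nil => rfl
  | cons i l ih => rw [meanOver_cons, ih, mean_algebraMap]

theorem meanOver_mul_of_D_eq_zero {l : List κ} {c : PeriodicSmooth b} (h : ∀ i ∈ l, D (b i) c = 0)
    (f : PeriodicSmooth b) : meanOver l (c * f) = c * meanOver l f := by
  induction l with
  | nil => rfl
  | cons i l ih =>
    rw [List.forall_mem_cons] at h
    rw [meanOver_cons, ih h.2, mean_mul_of_D_eq_zero h.1, meanOver_cons]

theorem apply_eq_zero_of_meanOver_nonpos (l : List κ) {g : PeriodicSmooth b} (hg : ∀ p, 0 ≤ g p)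
    {p : E} (h : meanOver l g p ≤ 0) : g p = 0 := by
  induction l with
  | nil => exact h.antisymm (hg p)
  | cons i l ih => exact ih (apply_eq_zero_of_mean_nonpos i (meanOver_nonneg l hg) h).le

theorem sq_meanOver_le (l : List κ) (f : PeriodicSmooth b) (p : E) :
    meanOver l f p ^ 2 ≤ meanOver l (f ^ 2) p := by
  set c := meanOver l f p with hc
  have h := meanOver_nonneg l (f := f ^ 2 - (2 * c) • f + algebraMap ℝ _ (c ^ 2)) (fun q => by
    simp only [add_apply, sub_apply, smul_apply, pow_apply, algebraMap_apply]
    linarith [sq_nonneg (f q - c)]) p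
  simp only [map_add, map_sub, map_smul, meanOver_algebraMap, add_apply, sub_apply, smul_apply,
    algebraMap_apply, ← hc] at h
  linarith

theorem meanOver_sq_le (l : List κ) (f : PeriodicSmooth b) (p : E) :
    meanOver l (f ^ 2) p ≤
      meanOver l f p ^ 2 + meanOver l (l.map fun i => D (b i) f ^ 2).sum p := by
  induction l generalizing p with
  | nil => simp
  | cons i l ih =>
    have h := mean_mono i (g := meanOver l f ^ 2 + meanOver l (l.map fun i => D (b i) f ^ 2).sum)
      ih p
    have hD : mean i (D (b i) (meanOver l f) ^ 2) p ≤ mean i (meanOver l (D (b i) f ^ 2)) p := by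
      rw [D_meanOver]
      exact mean_mono i (sq_meanOver_le l _) p
    have := mean_sq_le i (meanOver l f) p
    simp only [List.map_cons, List.sum_cons, map_add, add_apply, meanOver_cons] at h ⊢
    linarith

theorem meanOver_sq_le_meanOver_cons (i : κ) (l : List κ) (f : PeriodicSmooth b) (p : E) :
    meanOver l (f ^ 2) p ≤
      2 * meanOver (i :: l) (f ^ 2) p + meanOver (i :: l) (D (b i) f ^ 2) p := by
  have h := apply_le_mean_add_mean i (e := meanOver l (f ^ 2))
    (g := meanOver l (f ^ 2 + D (b i) f ^ 2))
    (fun q => by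
      rw [D_meanOver, pow_two, D_mul]
      refine meanOver_mono l (fun r => ?_) q
      simp only [add_apply, mul_apply, pow_apply]
      linarith [sq_nonneg (f r - D (b i) f r)])
    (meanOver_nonneg l fun q => by simp only [add_apply, pow_apply]; positivity) p
  simp only [map_add, add_apply, ← meanOver_cons] at h
  linarith

end Mean

end PeriodicSmooth

section Compactness

variable {ι E F : Type*} [NormedAddCommGroup E] [NormedSpace ℝ E] [FiniteDimensional ℝ E]
  [NormedAddCommGroup F] [NormedSpace ℝ F]

theorem exists_bound_fderiv {f : ι → E → F} {s : Set E}
    (hf : ∀ v, ∃ C, ∀ n, ∀ p ∈ s, ‖fderiv ℝ (f n) p v‖ ≤ C) :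
    ∃ C, ∀ n, ∀ p ∈ s, ‖fderiv ℝ (f n) p‖ ≤ C := by
  have := FiniteDimensional.complete ℝ E
  obtain ⟨C, hC⟩ := banach_steinhaus (g := fun x : ι × s => fderiv ℝ (f x.1) x.2) fun v => by
    obtain ⟨C, hC⟩ := hf v
    exact ⟨C, fun x => hC x.1 x.2 x.2.2⟩
  exact ⟨C, fun n p hp => hC (n, ⟨p, hp⟩)⟩

theorem exists_tendsto_continuousMap [FiniteDimensional ℝ F] (𝒰 : Ultrafilter ι)
    {f : ι → C(E, F)} (hdiff : ∀ n, Differentiable ℝ (f n))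
    (hf : ∀ R, ∃ C, ∀ n, ∀ p ∈ Metric.closedBall 0 R, ‖f n p‖ ≤ C)
    (hf' : ∀ R, ∃ C, ∀ n, ∀ p ∈ Metric.closedBall 0 R, ‖fderiv ℝ (f n) p‖ ≤ C) :
    ∃ g : C(E, F), Tendsto f 𝒰 (𝓝 g) := by
  have := FiniteDimensional.proper ℝ E
  have := FiniteDimensional.proper ℝ F
  have hpoint : ∀ p, ∃ y, Tendsto (fun n => f n p) 𝒰 (𝓝 y) := fun p => by
    obtain ⟨C, hC⟩ := hf ‖p‖
    obtain ⟨y, -, hy⟩ := (isCompact_closedBall (0 : F) C).ultrafilter_le_nhds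
      (𝒰.map fun n => f n p)
      (tendsto_principal.2 (Eventually.of_forall fun n => by simpa using hC n p (by simp)))
    exact ⟨y, hy⟩
  choose g hg using hpoint
  have hequi : ∀ K ∈ {K : Set E | IsCompact K}, EquicontinuousOn (fun n => ⇑(f n)) K := by
    intro K hK
    obtain ⟨R, hR⟩ := hK.isBounded.subset_closedBall 0
    obtain ⟨C, hC⟩ := hf' R
    exact (LipschitzOnWith.uniformEquicontinuousOn _ C.toNNReal fun n =>
      ((convex_closedBall 0 R).lipschitzOnWith_of_nnnorm_fderiv_le (fun p _ => hdiff n p)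
        fun p hp => NNReal.le_toNNReal_of_coe_le (hC n p hp)).mono hR).equicontinuousOn
  have hlim : TendstoLocallyUniformly (fun n => ⇑(f n)) g 𝒰 := by
    rw [tendstoLocallyUniformly_iff_forall_isCompact]
    exact UniformOnFun.tendsto_iff_tendstoUniformlyOn.1
      ((EquicontinuousOn.tendsto_uniformOnFun_iff_pi (fun _ => id)
        (Set.eq_univ_of_forall fun p => ⟨{p}, isCompact_singleton, rfl⟩) hequi 𝒰 g).2
        (tendsto_pi_nhds.2 hg))
  exact ⟨⟨g, hlim.continuous (Frequently.of_forall fun n => (f n).continuous)⟩,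
    ContinuousMap.tendsto_of_tendstoLocallyUniformly hlim⟩

end Compactness

namespace PeriodicSmooth

section Compactness

variable {ι κ E : Type*} [NormedAddCommGroup E] [NormedSpace ℝ E] {b : κ → E}

/-- The underlying continuous map. The target carries the compact-open topology, so limits taken
there are locally uniform. -/
def toContinuousMap : PeriodicSmooth b →+* C(E, ℝ) where
  toFun f := ⟨f, f.continuous⟩
  map_one' := rfl
  map_mul' _ _ := rfl
  map_zero' := rfl
  map_add' _ _ := rfl

variable [FiniteDimensional ℝ E]

theorem tendsto_mean (i : κ) {l : Filter ι} {f : ι → PeriodicSmooth b} {g : PeriodicSmooth b}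
    (h : Tendsto (fun n => toContinuousMap (f n)) l (𝓝 (toContinuousMap g))) :
    Tendsto (fun n => toContinuousMap (mean i (f n))) l (𝓝 (toContinuousMap (mean i g))) := by
  have := FiniteDimensional.proper ℝ E
  have hcont : Continuous fun x : C(E, ℝ) × E => ∫ s in (0 : ℝ)..1, x.1 (x.2 + s • b i) :=
    intervalIntegral.continuous_parametric_intervalIntegral_of_continuous'
      (f := fun (x : C(E, ℝ) × E) s => x.1 (x.2 + s • b i)) (by fun_prop) 0 1
  let A : C(E, ℝ) → C(E, ℝ) := fun f =>
    ⟨fun p => ∫ s in (0 : ℝ)..1, f (p + s • b i), by fun_prop⟩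
  exact ((ContinuousMap.continuous_of_continuous_uncurry A hcont).tendsto _).comp h

theorem tendsto_meanOver (l : List κ) {𝓕 : Filter ι} {f : ι → PeriodicSmooth b}
    {g : PeriodicSmooth b}
    (h : Tendsto (fun n => toContinuousMap (f n)) 𝓕 (𝓝 (toContinuousMap g))) :
    Tendsto (fun n => toContinuousMap (meanOver l (f n))) 𝓕
      (𝓝 (toContinuousMap (meanOver l g))) := by
  induction l with
  | nil => exact h
  | cons i l ih => exact tendsto_mean i ih

end Compactness

section MeanSqBounded

variable {ι κ E : Type*} [NormedAddCommGroup E] [NormedSpace ℝ E] [FiniteDimensional ℝ E]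
  {b : κ → E}

/-- Boundedness, uniform in the index and locally uniform in the point, of the averages of the
squares in the directions `l`. For `l = []` no average is taken. -/
def MeanSqBounded (l : List κ) (f : ι → PeriodicSmooth b) : Prop :=
  ∀ R, ∃ C, ∀ n p, ‖p‖ ≤ R → meanOver l (f n ^ 2) p ≤ C

/-- `MeanSqBounded` for all iterated derivatives of order at most `m`. -/
def DerivMeanSqBounded (l : List κ) : ℕ → (ι → PeriodicSmooth b) → Prop
  | 0, f => MeanSqBounded l f
  | m + 1, f => MeanSqBounded l f ∧ ∀ v, DerivMeanSqBounded l m fun n => D v (f n)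

namespace DerivMeanSqBounded

variable {l : List κ} {f g : ι → PeriodicSmooth b}

theorem meanSqBounded {m : ℕ} (h : DerivMeanSqBounded l m f) : MeanSqBounded l f := by
  cases m with
  | zero => exact h
  | succ m => exact h.1

theorem exists_abs_le {m : ℕ} (h : DerivMeanSqBounded [] m f) (R : ℝ) :
    ∃ C, ∀ n p, ‖p‖ ≤ R → |f n p| ≤ C := by
  obtain ⟨C, hC⟩ := h.meanSqBounded R
  exact ⟨√C, fun n p hp => Real.abs_le_sqrt (hC n p hp)⟩

theorem derivative (h : ∀ m, DerivMeanSqBounded l m f) (v : E) (m : ℕ) :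
    DerivMeanSqBounded l m fun n => D v (f n) := (h (m + 1)).2 v

theorem exists_norm_fderiv_le (h : DerivMeanSqBounded [] 1 f) (R : ℝ) :
    ∃ C, ∀ n, ∀ p ∈ Metric.closedBall 0 R, ‖fderiv ℝ (f n) p‖ ≤ C :=
  exists_bound_fderiv fun v => by
    obtain ⟨C, hC⟩ := (h.2 v).exists_abs_le R
    exact ⟨C, fun n p hp => hC n p (by simpa using hp)⟩

theorem exists_norm_fderiv_fderiv_le (h : DerivMeanSqBounded [] 2 f) (R : ℝ) :
    ∃ C, ∀ n, ∀ p ∈ Metric.closedBall 0 R, ‖fderiv ℝ (fderiv ℝ (f n)) p‖ ≤ C :=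
  exists_bound_fderiv fun v => by
    obtain ⟨C, hC⟩ := (h.2 v).exists_norm_fderiv_le R
    refine ⟨C, fun n p hp => ?_⟩
    rw [fderiv_fderiv_apply (f n).contDiff_two]
    exact hC n p hp

variable {𝒰 : Ultrafilter ι}

theorem exists_tendsto_continuousMap (h : DerivMeanSqBounded [] 1 f) :
    ∃ g : C(E, ℝ), Tendsto (fun n => toContinuousMap (f n)) 𝒰 (𝓝 g) := by
  refine _root_.exists_tendsto_continuousMap 𝒰 (fun n => (f n).differentiable) (fun R => ?_)
    h.exists_norm_fderiv_le
  obtain ⟨C, hC⟩ := h.exists_abs_le R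
  exact ⟨C, fun n p hp => hC n p (by simpa using hp)⟩

theorem tendsto_D_continuousMap (h : DerivMeanSqBounded [] 2 f) {g : C(E, ℝ)}
    (hg : Tendsto (fun n => toContinuousMap (f n)) 𝒰 (𝓝 g)) :
    Differentiable ℝ g ∧ ∀ v, ∃ g' : C(E, ℝ), (g' : E → ℝ) = (fun p => fderiv ℝ g p v) ∧
      Tendsto (fun n => toContinuousMap (D v (f n))) 𝒰 (𝓝 g') := by
  have := FiniteDimensional.proper ℝ E
  have hf : ∀ n, ContDiff ℝ 2 (f n) := fun n => (f n).contDiff_two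
  let f' : ι → C(E, E →L[ℝ] ℝ) := fun n => ⟨fderiv ℝ (f n), (hf n).continuous_fderiv two_ne_zero⟩
  obtain ⟨g', hg'⟩ : ∃ g', Tendsto f' 𝒰 (𝓝 g') :=
    _root_.exists_tendsto_continuousMap 𝒰
      (fun n => ((hf n).fderiv_right (m := 1) (by norm_num)).differentiable one_ne_zero)
      (exists_norm_fderiv_le ⟨h.1, fun v => (h.2 v).1⟩) (exists_norm_fderiv_fderiv_le h)
  have hderiv : ∀ p, HasFDerivAt g (g' p) p := fun p =>
    hasFDerivAt_of_tendstoLocallyUniformlyOn isOpen_univ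
      (ContinuousMap.tendsto_iff_tendstoLocallyUniformly.1 hg').tendstoLocallyUniformlyOn
      (fun n q _ => ((f n).differentiable q).hasFDerivAt)
      (fun q _ => ((continuous_eval_const q).tendsto g).comp hg) (Set.mem_univ p)
  refine ⟨fun p => (hderiv p).differentiableAt, fun v => ?_⟩
  let evalAt : C(E →L[ℝ] ℝ, ℝ) := ⟨fun L => L v, by fun_prop⟩
  exact ⟨evalAt.comp g', funext fun p => by rw [(hderiv p).fderiv]; rfl,
    ((ContinuousMap.continuous_postcomp evalAt).tendsto g').comp hg'⟩

theorem tendsto_D (h : ∀ m, DerivMeanSqBounded [] m f) {g : PeriodicSmooth b}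
    (hg : Tendsto (fun n => toContinuousMap (f n)) 𝒰 (𝓝 (toContinuousMap g))) (v : E) :
    Tendsto (fun n => toContinuousMap (D v (f n))) 𝒰 (𝓝 (toContinuousMap (D v g))) := by
  obtain ⟨g', hg', hlim⟩ := (tendsto_D_continuousMap (h 2) hg).2 v
  rwa [show g' = toContinuousMap (D v g) from DFunLike.coe_injective hg'] at hlim

theorem exists_tendsto (h : ∀ m, DerivMeanSqBounded [] m f) (𝒰 : Ultrafilter ι) :
    ∃ g : PeriodicSmooth b, Tendsto (fun n => toContinuousMap (f n)) 𝒰 (𝓝 (toContinuousMap g)) := by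
  obtain ⟨g, hg⟩ := (h 1).exists_tendsto_continuousMap (𝒰 := 𝒰)
  have hsmooth : ContDiff ℝ (⊤ : ℕ∞) g := by
    refine contDiff_infty_of_fderiv_apply_closed
      (P := fun g => ∃ (f : ι → PeriodicSmooth b) (G : C(E, ℝ)), g = G ∧
        (∀ m, DerivMeanSqBounded [] m f) ∧ Tendsto (fun n => toContinuousMap (f n)) 𝒰 (𝓝 G))
      ?_ ?_ ⟨f, g, rfl, h, hg⟩
    · rintro _ ⟨f, G, rfl, hf, hG⟩
      exact (tendsto_D_continuousMap (hf 2) hG).1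
    · rintro _ ⟨f, G, rfl, hf, hG⟩ v
      obtain ⟨G', hG', hlim⟩ := (tendsto_D_continuousMap (hf 2) hG).2 v
      exact ⟨_, G', hG'.symm, derivative hf v, hlim⟩
  have hpoint : ∀ p, Tendsto (fun n => f n p) 𝒰 (𝓝 (g p)) := fun p =>
    ((continuous_eval_const p).tendsto g).comp hg
  refine ⟨⟨g, hsmooth, fun i p => tendsto_nhds_unique (hpoint _) ?_⟩, hg⟩
  simpa only [apply_add_period] using hpoint p

end DerivMeanSqBounded

end MeanSqBounded

section Products

variable {ι κ E : Type*} [NormedAddCommGroup E] [NormedSpace ℝ E] [FiniteDimensional ℝ E]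
  {b : κ → E} {l : List κ} {f g : ι → PeriodicSmooth b}

theorem exists_abs_le_of_norm_le (c : PeriodicSmooth b) (R : ℝ) :
    ∃ C, ∀ p, ‖p‖ ≤ R → |c p| ≤ C := by
  have := FiniteDimensional.proper ℝ E
  obtain ⟨C, hC⟩ :=
    (isCompact_closedBall (0 : E) R).exists_bound_of_continuousOn c.continuous.continuousOn
  exact ⟨C, fun p hp => hC p (by simpa using hp)⟩

namespace MeanSqBounded

theorem const (c : PeriodicSmooth b) : MeanSqBounded l fun _ : ι => c := fun R => by
  obtain ⟨C, hC⟩ := exists_abs_le_of_norm_le (meanOver l (c ^ 2)) R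
  exact ⟨C, fun _ p hp => (le_abs_self _).trans (hC p hp)⟩

theorem add (hf : MeanSqBounded l f) (hg : MeanSqBounded l g) :
    MeanSqBounded l fun n => f n + g n := fun R => by
  obtain ⟨C, hC⟩ := hf R
  obtain ⟨C', hC'⟩ := hg R
  refine ⟨2 * (C + C'), fun n p hp => ?_⟩
  calc meanOver l ((f n + g n) ^ 2) p ≤ meanOver l ((2 : ℝ) • (f n ^ 2 + g n ^ 2)) p :=
        meanOver_mono l (fun q => add_sq_le) p
    _ = 2 * (meanOver l (f n ^ 2) p + meanOver l (g n ^ 2) p) := by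
        rw [map_smul, map_add, smul_apply, add_apply]
    _ ≤ 2 * (C + C') := by gcongr; exacts [hC n p hp, hC' n p hp]

theorem const_mul (c : PeriodicSmooth b) (hf : MeanSqBounded l f) :
    MeanSqBounded l fun n => c * f n := fun R => by
  obtain ⟨C, hC⟩ := hf R
  obtain ⟨M, hM⟩ := exists_abs_le_of_norm_le c (R + (l.map fun i => ‖b i‖).sum)
  refine ⟨M ^ 2 * C, fun n p hp => ?_⟩
  calc meanOver l ((c * f n) ^ 2) p ≤ meanOver l (M ^ 2 • f n ^ 2) p :=
        meanOver_mono_of_ball l fun q hq => by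
          rw [mul_pow, mul_apply, smul_apply, pow_apply]
          have hcM : |c q| ≤ M := hM q <| by
            linarith [norm_le_norm_add_norm_sub' q p]
          exact mul_le_mul_of_nonneg_right (sq_le_sq' (neg_le_of_abs_le hcM) (le_of_abs_le hcM))
            (sq_nonneg _)
    _ = M ^ 2 * meanOver l (f n ^ 2) p := by rw [map_smul, smul_apply]
    _ ≤ M ^ 2 * C := by gcongr; exact hC n p hp

theorem of_cons {i : κ} (hf : MeanSqBounded (i :: l) f)
    (hD : MeanSqBounded (i :: l) fun n => D (b i) (f n)) : MeanSqBounded l f := fun R => by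
  obtain ⟨C, hC⟩ := hf R
  obtain ⟨C', hC'⟩ := hD R
  exact ⟨2 * C + C', fun n p hp => (meanOver_sq_le_meanOver_cons i l (f n) p).trans
    (by gcongr; exacts [hC n p hp, hC' n p hp])⟩

end MeanSqBounded

namespace DerivMeanSqBounded

variable {m : ℕ}

theorem of_succ (h : DerivMeanSqBounded l (m + 1) f) : DerivMeanSqBounded l m f := by
  induction m generalizing f with
  | zero => exact h.1
  | succ m ih => exact ⟨h.1, fun v => ih (h.2 v)⟩

theorem const (c : PeriodicSmooth b) : DerivMeanSqBounded l m fun _ : ι => c := by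
  induction m generalizing c with
  | zero => exact MeanSqBounded.const c
  | succ m ih => exact ⟨MeanSqBounded.const c, fun v => ih (D v c)⟩

theorem add (hf : DerivMeanSqBounded l m f) (hg : DerivMeanSqBounded l m g) :
    DerivMeanSqBounded l m fun n => f n + g n := by
  induction m generalizing f g with
  | zero => exact MeanSqBounded.add hf hg
  | succ m ih =>
    exact ⟨hf.1.add hg.1, fun v => by simpa only [map_add] using ih (hf.2 v) (hg.2 v)⟩

theorem const_mul (c : PeriodicSmooth b) (hf : DerivMeanSqBounded l m f) :
    DerivMeanSqBounded l m fun n => c * f n := by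
  induction m generalizing c f with
  | zero => exact MeanSqBounded.const_mul c hf
  | succ m ih =>
    exact ⟨hf.1.const_mul c, fun v => by
      simpa only [D_mul] using (ih (D v c) hf.of_succ).add (ih c (hf.2 v))⟩

theorem of_cons {i : κ} (h : DerivMeanSqBounded (i :: l) (m + 1) f) :
    DerivMeanSqBounded l m f := by
  induction m generalizing f with
  | zero => exact MeanSqBounded.of_cons h.1 (h.2 (b i))
  | succ m ih => exact ⟨MeanSqBounded.of_cons h.1 (h.2 (b i)).1, fun v => ih (h.2 v)⟩

theorem drop_directions (h : ∀ m, DerivMeanSqBounded l m f) (m : ℕ) :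
    DerivMeanSqBounded [] m f := by
  induction l generalizing m with
  | nil => exact h m
  | cons i l ih => exact ih (fun m => (h (m + 1)).of_cons) m

end DerivMeanSqBounded

end Products

section CellProblem

variable {E : Type*} [NormedAddCommGroup E] [NormedSpace ℝ E] {d : ℕ} {b : Fin (d + 1) → E}

/-- The sum of the squares of the derivatives in the space directions `b 1, …, b d`. -/
def gradSq (w : PeriodicSmooth b) : PeriodicSmooth b := ∑ i : Fin d, D (b i.succ) w ^ 2

/-- The defect `∂w/∂θ - ∇·(a∇w + F)` of `w` in the cell problem with diffusion coefficient `a` and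
flux `F`. The direction of `θ` is `b 0`, the space directions are `b 1, …, b d`; all the other
directions of `E` are parameters. -/
def residual (a : PeriodicSmooth b) (F : Fin d → PeriodicSmooth b) (w : PeriodicSmooth b) :
    PeriodicSmooth b :=
  D (b 0) w - ∑ i, D (b i.succ) (a * D (b i.succ) w + F i)

theorem gradSq_apply (w : PeriodicSmooth b) (p : E) :
    gradSq w p = ∑ i : Fin d, D (b i.succ) w p ^ 2 := by
  simp only [gradSq, sum_apply, pow_apply]

theorem gradSq_nonneg (w : PeriodicSmooth b) (p : E) : 0 ≤ gradSq w p := by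
  rw [gradSq_apply]
  positivity

theorem sq_D_succ_le_gradSq (i : Fin d) (w : PeriodicSmooth b) (p : E) :
    (D (b i.succ) w ^ 2) p ≤ gradSq w p := by
  rw [gradSq_apply, pow_apply]
  exact Finset.single_le_sum (f := fun i => D (b i.succ) w p ^ 2) (fun _ _ => sq_nonneg _)
    (Finset.mem_univ i)

theorem D_residual (v : E) (a : PeriodicSmooth b) (F : Fin d → PeriodicSmooth b)
    (w : PeriodicSmooth b) :
    D v (residual a F w) =
      residual a (fun i => D v (F i) + D v a * D (b i.succ) w) (D v w) := by
  simp only [residual, map_sub, map_sum, map_add, D_mul, D_comm v (b _)]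
  congr 1
  exact Finset.sum_congr rfl fun i _ => by ring

variable [FiniteDimensional ℝ E]

/-- The average over the space torus. -/
def spaceMean : PeriodicSmooth b →ₗ[ℝ] PeriodicSmooth b :=
  meanOver ((List.finRange d).map Fin.succ)

/-- The average over the torus of the variable `θ` and of the space variables. -/
def torusMean : PeriodicSmooth b →ₗ[ℝ] PeriodicSmooth b := meanOver (List.finRange (d + 1))

theorem torusMean_eq_mean_spaceMean (f : PeriodicSmooth b) :
    torusMean f = mean 0 (spaceMean f) := by
  rw [torusMean, List.finRange_succ, meanOver_cons, spaceMean]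

theorem spaceMean_D_succ (i : Fin d) (f : PeriodicSmooth b) :
    spaceMean (D (b i.succ) f) = 0 :=
  meanOver_D_eq_zero (List.mem_map_of_mem (List.mem_finRange i)) f

theorem torusMean_D (i : Fin (d + 1)) (f : PeriodicSmooth b) : torusMean (D (b i) f) = 0 :=
  meanOver_D_eq_zero (List.mem_finRange i) f

theorem torusMean_D_mul (i : Fin (d + 1)) (f g : PeriodicSmooth b) :
    torusMean (D (b i) f * g) = -torusMean (f * D (b i) g) := by
  rw [eq_neg_iff_add_eq_zero, ← map_add, ← D_mul, torusMean_D]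

theorem torusMean_residual_mul (a : PeriodicSmooth b) (F : Fin d → PeriodicSmooth b)
    (w φ : PeriodicSmooth b) :
    torusMean (residual a F w * φ) =
      torusMean (D (b 0) w * φ + ∑ i, (a * D (b i.succ) w + F i) * D (b i.succ) φ) := by
  rw [residual, sub_mul, Finset.sum_mul, map_sub, map_add, map_sum, map_sum, sub_eq_add_neg,
    ← Finset.sum_neg_distrib]
  congr 1
  exact Finset.sum_congr rfl fun i _ => by rw [torusMean_D_mul, neg_neg]

theorem torusMean_D_mul_self (i : Fin (d + 1)) (w : PeriodicSmooth b) :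
    torusMean (D (b i) w * w) = 0 := by
  ext p
  have h := congrArg (fun f : PeriodicSmooth b => f p) (torusMean_D_mul i w w)
  simp only [mul_comm w, neg_apply] at h
  rw [zero_apply]
  linarith

theorem torusMean_gradSq_le {ν : ℝ} (hν : 0 < ν) {a w : PeriodicSmooth b}
    {F : Fin d → PeriodicSmooth b} (ha : ∀ p, ν ≤ a p)
    {p : E} (hw : torusMean (residual a F w * w) p = 0) :
    torusMean (gradSq w) p ≤ ν⁻¹ ^ 2 * torusMean (∑ i, F i ^ 2) p := by
  have hyoung : ∀ q, ((ν / 2) • gradSq w) q ≤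
      (∑ i, (a * D (b i.succ) w + F i) * D (b i.succ) w + (ν⁻¹ / 2) • ∑ i, F i ^ 2) q := by
    intro q
    simp only [gradSq_apply, smul_apply, add_apply, sum_apply, mul_apply, pow_apply, Finset.mul_sum,
      ← Finset.sum_add_distrib]
    refine Finset.sum_le_sum fun i _ => ?_
    set x := D (b i.succ) w q
    have hax : ν * x ^ 2 ≤ a q * x ^ 2 := mul_le_mul_of_nonneg_right (ha q) (sq_nonneg x)
    have hsq : 0 ≤ ν⁻¹ / 2 * (ν * x + F i q) ^ 2 := by positivity
    have hexp : ν⁻¹ / 2 * (ν * x + F i q) ^ 2 =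
        ν / 2 * x ^ 2 + F i q * x + ν⁻¹ / 2 * F i q ^ 2 := by field_simp; ring
    linarith
  have h : torusMean _ p ≤ torusMean _ p := meanOver_mono (List.finRange (d + 1)) hyoung p
  rw [torusMean_residual_mul, map_add, torusMean_D_mul_self, zero_add] at hw
  simp only [map_add, map_smul, add_apply, smul_apply, hw, zero_add] at h
  calc torusMean (gradSq w) p = 2 * ν⁻¹ * (ν / 2 * torusMean (gradSq w) p) := by field_simp
    _ ≤ 2 * ν⁻¹ * (ν⁻¹ / 2 * torusMean (∑ i, F i ^ 2) p) :=
      mul_le_mul_of_nonneg_left h (by positivity)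
    _ = ν⁻¹ ^ 2 * torusMean (∑ i, F i ^ 2) p := by ring

theorem spaceMean_sq_le {w : PeriodicSmooth b} (hw : spaceMean w = 0) (p : E) :
    spaceMean (w ^ 2) p ≤ spaceMean (gradSq w) p := by
  have h := meanOver_sq_le ((List.finRange d).map Fin.succ) w p
  rw [← spaceMean, hw, List.map_map, zero_apply, zero_pow two_ne_zero, zero_add] at h
  rwa [gradSq, Fin.sum_univ_def]

theorem torusMean_sq_le {w : PeriodicSmooth b} (hw : spaceMean w = 0) (p : E) :
    torusMean (w ^ 2) p ≤ torusMean (gradSq w) p := by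
  simp only [torusMean_eq_mean_spaceMean]
  exact mean_mono 0 (spaceMean_sq_le hw) p

theorem torusMean_residual_derivative_eq_zero {W : Set (PeriodicSmooth b)}
    {a w : PeriodicSmooth b} {F : Fin d → PeriodicSmooth b} {v : E} (hW : ∀ φ ∈ W, D v φ ∈ W)
    (hw : ∀ φ ∈ W, torusMean (residual a F w * φ) = 0) :
    ∀ φ ∈ W, torusMean
      (residual a (fun i => D v (F i) + D v a * D (b i.succ) w) (D v w) * φ) = 0 := by
  intro φ hφ
  have h := D_meanOver v (List.finRange (d + 1)) (residual a F w * φ)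
  rwa [D_mul, map_add, ← torusMean, hw φ hφ, hw _ (hW φ hφ), map_zero, add_zero, D_residual,
    eq_comm] at h

variable {ι : Type*} {ν : ℝ} {a : PeriodicSmooth b} {W : ι → Set (PeriodicSmooth b)}
  {w : ι → PeriodicSmooth b} {F : ι → Fin d → PeriodicSmooth b}

theorem MeanSqBounded.of_galerkin (hν : 0 < ν) (ha : ∀ p, ν ≤ a p)
    (hmean : ∀ n, spaceMean (w n) = 0)
    (hw : ∀ n, torusMean (residual a (F n) (w n) * w n) = 0)
    (hF : ∀ i, MeanSqBounded (List.finRange (d + 1)) fun n => F n i) :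
    MeanSqBounded (List.finRange (d + 1)) w ∧
      ∀ i : Fin d, MeanSqBounded (List.finRange (d + 1)) fun n => D (b i.succ) (w n) := by
  have hgrad : ∀ R, ∃ C, ∀ n p, ‖p‖ ≤ R → torusMean (gradSq (w n)) p ≤ C := fun R => by
    choose C hC using fun i => hF i R
    refine ⟨ν⁻¹ ^ 2 * ∑ i, C i, fun n p hp =>
      (torusMean_gradSq_le hν ha (by rw [hw n, zero_apply])).trans ?_⟩
    rw [map_sum, sum_apply]
    gcongr with i
    exact hC i n p hp
  refine ⟨fun R => ?_, fun i R => ?_⟩ <;> obtain ⟨C, hC⟩ := hgrad R <;>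
    refine ⟨C, fun n p hp => le_trans ?_ (hC n p hp)⟩
  · exact torusMean_sq_le (hmean n) p
  · exact meanOver_mono _ (sq_D_succ_le_gradSq i (w n)) p

theorem DerivMeanSqBounded.of_galerkin (hν : 0 < ν) (ha : ∀ p, ν ≤ a p)
    (hmean : ∀ n, ∀ φ ∈ W n, spaceMean φ = 0) (hD : ∀ n v, ∀ φ ∈ W n, D v φ ∈ W n)
    (hwW : ∀ n, w n ∈ W n)
    (hw : ∀ n, ∀ φ ∈ W n, torusMean (residual a (F n) (w n) * φ) = 0) (m : ℕ)
    (hF : ∀ i, DerivMeanSqBounded (List.finRange (d + 1)) m fun n => F n i) :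
    DerivMeanSqBounded (List.finRange (d + 1)) m w ∧
      ∀ i : Fin d, DerivMeanSqBounded (List.finRange (d + 1)) m fun n => D (b i.succ) (w n) := by
  have hzero := MeanSqBounded.of_galerkin hν ha (fun n => hmean n _ (hwW n))
    (fun n => hw n _ (hwW n)) fun i => (hF i).meanSqBounded
  induction m generalizing w F with
  | zero => exact hzero
  | succ m ih =>
    have hgrad := (ih hwW hw (fun i => (hF i).of_succ) hzero).2
    have hderiv := fun v => by
      have hF' := fun i => ((hF i).2 v).add ((hgrad i).const_mul (D v a))
      have hwW' := fun n => hD n v _ (hwW n)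
      have hw' := fun n => torusMean_residual_derivative_eq_zero (hD n v) (hw n)
      exact ih hwW' hw' hF' (MeanSqBounded.of_galerkin hν ha (fun n => hmean n _ (hwW' n))
        (fun n => hw' n _ (hwW' n)) fun i => (hF' i).meanSqBounded)
    exact ⟨⟨hzero.1, fun v => (hderiv v).1⟩, fun i => ⟨hzero.2 i, fun v => by
      simpa only [D_comm v] using (hderiv v).2 i⟩⟩

end CellProblem

end PeriodicSmooth

section CosAddSin

/-- The function `cos (2πks) + sin (2πks)`. Up to a factor it is exchanged with the one of opposite
frequency by differentiation, so that no distinction is needed between sines and cosines. -/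
def cas (k : ℤ) (s : ℝ) : ℝ := Real.cos (2 * Real.pi * k * s) + Real.sin (2 * Real.pi * k * s)

theorem cas_periodic (k : ℤ) : Function.Periodic (cas k) 1 := fun s => by
  have harg : 2 * Real.pi * k * (s + 1) = 2 * Real.pi * k * s + k * (2 * Real.pi) := by ring
  rw [cas, harg, Real.cos_add_int_mul_two_pi, Real.sin_add_int_mul_two_pi, cas]

theorem contDiff_cas (k : ℤ) {n : WithTop ℕ∞} : ContDiff ℝ n (cas k) := by
  unfold cas
  fun_prop

theorem hasDerivAt_cas (k : ℤ) (s : ℝ) :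
    HasDerivAt (cas k) (2 * Real.pi * k * cas (-k) s) s := by
  have hlin : HasDerivAt (fun s : ℝ => 2 * Real.pi * k * s) (2 * Real.pi * k) s := by
    simpa using (hasDerivAt_id s).const_mul (2 * Real.pi * k)
  refine (hlin.cos.add hlin.sin).congr_deriv ?_
  simp only [cas, Int.cast_neg, mul_neg, neg_mul, Real.cos_neg, Real.sin_neg]
  ring

theorem fourier_neg_eq_cas (k : ℤ) (s : ℝ) :
    fourier (-k) (s : AddCircle (1 : ℝ)) =
      (1 - Complex.I) / 2 * (cas k s : ℂ) + (1 + Complex.I) / 2 * (cas (-k) s : ℂ) := by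
  have harg : 2 * (Real.pi : ℂ) * Complex.I * ((-k : ℤ) : ℂ) * (s : ℂ) / ((1 : ℝ) : ℂ) =
      ((-(2 * Real.pi * k * s) : ℝ) : ℂ) * Complex.I := by push_cast; ring
  rw [fourier_coe_apply, harg, Complex.exp_mul_I, ← Complex.ofReal_cos, ← Complex.ofReal_sin]
  simp only [cas, Int.cast_neg, mul_neg, neg_mul, Real.cos_neg, Real.sin_neg]
  push_cast
  ring

theorem eq_zero_of_integral_cas_mul_eq_zero {g : ℝ → ℝ} (hg : Continuous g)
    (hper : Function.Periodic g 1) (h : ∀ k, ∫ s in (0 : ℝ)..1, cas k s * g s = 0) (s : ℝ) :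
    g s = 0 := by
  have hper' : Function.Periodic (fun s => (g s : ℂ)) 1 := fun s => congrArg _ (hper s)
  let G : C(AddCircle (1 : ℝ), ℂ) :=
    ⟨hper'.lift, continuous_coinduced_dom.2 (Complex.continuous_ofReal.comp hg)⟩
  have hcoeff : ∀ k, fourierCoeff G k = 0 := fun k => by
    have hint : ∀ (c : ℂ) (m : ℤ), IntervalIntegrable
        (fun s : ℝ => c * ((cas m s * g s : ℝ) : ℂ)) volume 0 1 := fun c m => by
      have := (contDiff_cas m (n := 0)).continuous
      exact Continuous.intervalIntegrable (by fun_prop) _ _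
    have hpt : ∀ s : ℝ, fourier (-k) (s : AddCircle (1 : ℝ)) • G s =
        (1 - Complex.I) / 2 * ((cas k s * g s : ℝ) : ℂ) +
          (1 + Complex.I) / 2 * ((cas (-k) s * g s : ℝ) : ℂ) := fun s => by
      rw [fourier_neg_eq_cas, show G s = (g s : ℂ) from hper'.lift_coe s, smul_eq_mul]
      push_cast
      ring
    simp only [fourierCoeff_eq_intervalIntegral _ k 0, zero_add, hpt]
    rw [intervalIntegral.integral_add (hint _ _) (hint _ _), intervalIntegral.integral_const_mul,
      intervalIntegral.integral_const_mul, intervalIntegral.integral_ofReal,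
      intervalIntegral.integral_ofReal, h, h]
    simp
  have hsum := has_pointwise_sum_fourier_series_of_summable
    (f := G) (by rw [funext hcoeff]; exact summable_zero) s
  simp only [hcoeff, zero_smul] at hsum
  exact Complex.ofReal_eq_zero.1 ((hper'.lift_coe s).symm.trans (hsum.unique hasSum_zero))

end CosAddSin

section DualCoord

variable {κ E : Type*} [NormedAddCommGroup E] [NormedSpace ℝ E] [FiniteDimensional ℝ E] {b : κ → E}

/-- A linear form that takes the value `1` at `b i` and `0` at the other vectors of `b`. -/
def dualCoord (hb : LinearIndependent ℝ b) (i : κ) : E →L[ℝ] ℝ :=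
  LinearMap.toContinuousLinearMap
    (LinearMap.exists_extend (Finsupp.lapply i ∘ₗ hb.repr)).choose

theorem dualCoord_apply [DecidableEq κ] (hb : LinearIndependent ℝ b) (i j : κ) :
    dualCoord hb i (b j) = if j = i then 1 else 0 := by
  have h := LinearMap.congr_fun
    (LinearMap.exists_extend (Finsupp.lapply i ∘ₗ hb.repr)).choose_spec
    ⟨b j, Submodule.subset_span (Set.mem_range_self j)⟩
  rw [LinearMap.comp_apply _ hb.repr, hb.repr_eq_single j ⟨b j, _⟩ rfl] at h
  exact h.trans Finsupp.single_apply

end DualCoord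

namespace PeriodicSmooth

section Wave

variable {κ E : Type*} [NormedAddCommGroup E] [NormedSpace ℝ E] [FiniteDimensional ℝ E] {b : κ → E}

/-- The function `cas k` of the `i`-th coordinate. -/
def wave (hb : LinearIndependent ℝ b) (i : κ) (k : ℤ) : PeriodicSmooth b :=
  mk (fun p => cas k (dualCoord hb i p)) ((contDiff_cas k).comp (dualCoord hb i).contDiff)
    fun j p => by
      classical
      simp only [map_add, dualCoord_apply]
      split_ifs
      · exact cas_periodic k _
      · rw [add_zero]

variable (hb : LinearIndependent ℝ b)

theorem wave_apply (i : κ) (k : ℤ) (p : E) : wave hb i k p = cas k (dualCoord hb i p) := rfl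

theorem D_wave (v : E) (i : κ) (k : ℤ) :
    D v (wave hb i k) = (2 * Real.pi * k * dualCoord hb i v) • wave hb i (-k) := by
  ext p
  have h : HasFDerivAt (wave hb i k : E → ℝ) _ p :=
    (hasDerivAt_cas k (dualCoord hb i p)).comp_hasFDerivAt p (dualCoord hb i).hasFDerivAt
  rw [D_apply, h.fderiv, smul_apply, wave_apply, _root_.smul_apply, smul_eq_mul]
  ring

theorem D_wave_self (i : κ) (k : ℤ) :
    D (b i) (wave hb i k) = (2 * Real.pi * k) • wave hb i (-k) := by
  classical
  rw [D_wave, dualCoord_apply, if_pos rfl, mul_one]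

theorem D_wave_of_ne {i j : κ} (h : j ≠ i) (k : ℤ) : D (b j) (wave hb i k) = 0 := by
  classical
  rw [D_wave, dualCoord_apply, if_neg h, mul_zero, zero_smul]

theorem eq_zero_of_mean_wave_mul_eq_zero (i : κ) {f : PeriodicSmooth b}
    (h : ∀ k, mean i (wave hb i k * f) = 0) : f = 0 := by
  classical
  ext p
  set q := p - dualCoord hb i p • b i with hq
  have hcoord : ∀ s : ℝ, dualCoord hb i (q + s • b i) = s := fun s => by
    simp [hq, dualCoord_apply]
  have hzero := eq_zero_of_integral_cas_mul_eq_zero (g := fun s => f (q + s • b i))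
    (by have := f.continuous; fun_prop)
    (fun s => by simp only [add_smul, one_smul, ← add_assoc, f.apply_add_period])
    (fun k => by
      have hk := congrArg (fun g : PeriodicSmooth b => g q) (h k)
      simpa only [mean_apply, mul_apply, wave_apply, hcoord, zero_apply] using hk)
    (dualCoord hb i p)
  simpa [hq] using hzero

theorem eq_zero_of_meanOver_prod_wave_mul_eq_zero {l : List κ} (hl : l.Nodup)
    {f : PeriodicSmooth b}
    (h : ∀ k : κ → ℤ, meanOver l ((l.map fun i => wave hb i (k i)).prod * f) = 0) : f = 0 := by
  classical
  induction l with
  | nil => simpa using h 0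
  | cons i l ih =>
    obtain ⟨hi, hl⟩ := List.nodup_cons.1 hl
    refine ih hl fun k => eq_zero_of_mean_wave_mul_eq_zero hb i fun m => ?_
    have hD : ∀ j ∈ l, D (b j) (wave hb i m) = 0 := fun j hj =>
      D_wave_of_ne hb (ne_of_mem_of_not_mem hj hi) m
    have hk : (l.map fun j => wave hb j (Function.update k i m j)) =
        l.map fun j => wave hb j (k j) := List.map_congr_left fun j hj => by
      rw [Function.update_of_ne (ne_of_mem_of_not_mem hj hi)]
    have := h (Function.update k i m)
    rwa [List.map_cons, List.prod_cons, hk, Function.update_self, mul_assoc, meanOver_cons,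
      meanOver_mul_of_D_eq_zero hD] at this

end Wave

section TrigMonomial

variable {E : Type*} [NormedAddCommGroup E] [NormedSpace ℝ E] [FiniteDimensional ℝ E] {d : ℕ}
  {b : Fin (d + 1) → E} (hb : LinearIndependent ℝ b)

/-- The product of the functions `cas (k i)` of the `i`-th coordinates: a real trigonometric
monomial with frequency vector `k`. -/
def trigMonomial (k : Fin (d + 1) → ℤ) : PeriodicSmooth b := ∏ i, wave hb i (k i)

theorem D_trigMonomial (i : Fin (d + 1)) (k : Fin (d + 1) → ℤ) :
    D (b i) (trigMonomial hb k) =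
      (2 * Real.pi * k i) • trigMonomial hb (Function.update k i (-k i)) := by
  have hsplit : ∀ k, trigMonomial hb k =
      wave hb i (k i) * ∏ j ∈ Finset.univ.erase i, wave hb j (k j) := fun k =>
    (Finset.mul_prod_erase _ _ (Finset.mem_univ i)).symm
  have hconst : D (b i) (∏ j ∈ Finset.univ.erase i, wave hb j (k j)) = 0 :=
    Finset.prod_induction _ (fun f : PeriodicSmooth b => D (b i) f = 0)
      (fun f g hf hg => by rw [D_mul, hf, hg, zero_mul, mul_zero, add_zero])
      (Derivation.map_one_eq_zero _)
      fun j hj => D_wave_of_ne hb (Finset.ne_of_mem_erase hj).symm (k j)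
  have hupdate : ∏ j ∈ Finset.univ.erase i, wave hb j (Function.update k i (-k i) j) =
      ∏ j ∈ Finset.univ.erase i, wave hb j (k j) := Finset.prod_congr rfl fun j hj => by
    rw [Function.update_of_ne (Finset.ne_of_mem_erase hj)]
  rw [hsplit, hsplit, D_mul, hconst, hupdate, D_wave_self, mul_zero, add_zero, smul_mul_assoc,
    Function.update_self]

theorem D_trigMonomial_eq_sum (v : E) (k : Fin (d + 1) → ℤ) :
    D v (trigMonomial hb k) = ∑ i, dualCoord hb i v • D (b i) (trigMonomial hb k) := by
  refine Finset.prod_induction _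
    (fun f : PeriodicSmooth b => D v f = ∑ i, dualCoord hb i v • D (b i) f) (fun f g hf hg => ?_)
    (by simp) fun j _ => ?_
  · simp only [D_mul, smul_add, Finset.sum_add_distrib]
    rw [hf, hg, Finset.sum_mul, Finset.mul_sum]
    simp only [smul_mul_assoc, mul_smul_comm]
  · rw [Finset.sum_eq_single j (fun i _ hij => by rw [D_wave_of_ne hb hij, smul_zero]) (by simp),
      D_wave, D_wave_self, smul_smul, mul_comm]

theorem spaceMean_trigMonomial {i : Fin d} {k : Fin (d + 1) → ℤ} (hk : k i.succ ≠ 0) :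
    spaceMean (trigMonomial hb k) = 0 := by
  have h := spaceMean_D_succ i (trigMonomial hb (Function.update k i.succ (-k i.succ)))
  rw [D_trigMonomial, Function.update_self, neg_neg, Function.update_idem,
    Function.update_eq_self, map_smul, smul_eq_zero] at h
  exact h.resolve_left (by simp [Real.pi_ne_zero, hk])

theorem eq_zero_of_torusMean_trigMonomial_mul_eq_zero {f : PeriodicSmooth b}
    (h : ∀ k, torusMean (trigMonomial hb k * f) = 0) : f = 0 :=
  eq_zero_of_meanOver_prod_wave_mul_eq_zero hb (List.nodup_finRange _) fun k => by
    rw [← Fin.prod_univ_def]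
    exact h k

end TrigMonomial

end PeriodicSmooth

section LinearAlgebra

variable {R M ι : Type*} [CommRing R] [AddCommGroup M] [Module R M] [Fintype ι] [DecidableEq ι]

theorem exists_mem_span_of_isUnit_det (B : M →ₗ[R] M →ₗ[R] R) (L : M →ₗ[R] R) (e : ι → M)
    (h : IsUnit (Matrix.of fun i j => B (e j) (e i)).det) :
    ∃ x ∈ Submodule.span R (Set.range e), ∀ y ∈ Submodule.span R (Set.range e), B x y = L y := by
  set A := Matrix.of fun i j => B (e j) (e i) with hA
  let c : ι → R := A⁻¹.mulVec fun i => L (e i)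
  have hc : A.mulVec c = fun i => L (e i) := by
    rw [Matrix.mulVec_mulVec, Matrix.mul_nonsing_inv _ h, Matrix.one_mulVec]
  refine ⟨∑ j, c j • e j, Submodule.sum_mem _ fun j _ =>
    Submodule.smul_mem _ _ (Submodule.subset_span (Set.mem_range_self j)), fun y hy => ?_⟩
  refine LinearMap.eqOn_span (f := B (∑ j, c j • e j)) ?_ hy
  rintro _ ⟨i, rfl⟩
  rw [← congrFun hc i]
  simp only [map_sum, map_smul, LinearMap.sum_apply, LinearMap.smul_apply, smul_eq_mul,
    Matrix.mulVec, dotProduct, hA, Matrix.of_apply, mul_comm]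

end LinearAlgebra

namespace PeriodicSmooth

section ParameterRing

variable {E : Type*} [NormedAddCommGroup E] [NormedSpace ℝ E] {d : ℕ}
  {b : Fin (d + 1) → E}

variable (b) in
/-- The functions that depend on the parameters only: the ring of coefficients of the Galerkin
method. -/
def parameterRing : Subalgebra ℝ (PeriodicSmooth b) where
  carrier := {c | ∀ i, D (b i) c = 0}
  mul_mem' hf hg i := by rw [D_mul, hf i, hg i, zero_mul, mul_zero, add_zero]
  add_mem' hf hg i := by rw [map_add, hf i, hg i, add_zero]
  algebraMap_mem' r i := Derivation.map_algebraMap _ r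

theorem D_mem_parameterRing {c : PeriodicSmooth b} (hc : c ∈ parameterRing b) (v : E) :
    D v c ∈ parameterRing b := fun i => by rw [D_comm, hc i, map_zero]

theorem isUnit_of_apply_ne_zero {c : parameterRing b} (hc : ∀ p, (c : PeriodicSmooth b) p ≠ 0) :
    IsUnit c := by
  let cInv : PeriodicSmooth b := mk (fun p => (c.1 p)⁻¹) (c.1.contDiff.inv hc)
    fun i p => by rw [c.1.apply_add_period]
  have hmul : c.1 * cInv = 1 := ext fun p => mul_inv_cancel₀ (hc p)
  have hcInv : cInv ∈ parameterRing b := fun i => by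
    have h := congrArg (D (b i)) hmul
    rw [D_mul, c.2 i, zero_mul, zero_add, Derivation.map_one_eq_zero] at h
    calc D (b i) cInv = cInv * (c.1 * D (b i) cInv) := by
          rw [← mul_assoc, mul_comm cInv, hmul, one_mul]
      _ = 0 := by rw [h, mul_zero]
  exact IsUnit.of_mul_eq_one ⟨cInv, hcInv⟩ (Subtype.ext hmul)

theorem residual_eq_add (a : PeriodicSmooth b) (F : Fin d → PeriodicSmooth b)
    (w : PeriodicSmooth b) : residual a F w = residual a 0 w + residual a F 0 := by
  simp only [residual, map_add, map_zero, mul_zero, Pi.zero_apply, add_zero, zero_add,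
    Finset.sum_add_distrib]
  ring

variable [FiniteDimensional ℝ E]

variable (b) in
/-- The average over the torus, as a linear map over the ring of the parameters. -/
def torusMeanₗ : PeriodicSmooth b →ₗ[parameterRing b] parameterRing b where
  toFun f := ⟨torusMean f, fun i => by
    rw [torusMean, D_meanOver, meanOver_D_eq_zero (List.mem_finRange i)]⟩
  map_add' f g := Subtype.ext (map_add torusMean f g)
  map_smul' c f := Subtype.ext (meanOver_mul_of_D_eq_zero (fun i _ => c.2 i) f)

/-- The differential operator of the cell problem, as a linear map over the ring of the
parameters. -/
def residualₗ (a : PeriodicSmooth b) : PeriodicSmooth b →ₗ[parameterRing b] PeriodicSmooth b where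
  toFun := residual a 0
  map_add' f g := by
    simp only [residual, map_add, mul_add, Pi.zero_apply, add_zero, Finset.sum_add_distrib]
    ring
  map_smul' c f := by
    have hD : ∀ i (g : PeriodicSmooth b), D (b i) (c.1 * g) = c.1 * D (b i) g := fun i g => by
      rw [D_mul, c.2 i, zero_mul, zero_add]
    simp only [residual, Pi.zero_apply, add_zero, Subalgebra.smul_def, smul_eq_mul, hD,
      mul_left_comm a, RingHom.id_apply, Finset.mul_sum, mul_sub]

/-- The bilinear form `(w, φ) ↦ ∫ (∂w/∂θ - ∇·(a∇w)) φ` of the weak formulation. -/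
def cellForm (a : PeriodicSmooth b) :
    PeriodicSmooth b →ₗ[parameterRing b] PeriodicSmooth b →ₗ[parameterRing b] parameterRing b :=
  (LinearMap.mul (parameterRing b) (PeriodicSmooth b) ∘ₗ residualₗ a).compr₂ (torusMeanₗ b)

theorem coe_cellForm (a w φ : PeriodicSmooth b) :
    (cellForm a w φ : PeriodicSmooth b) = torusMean (residual a 0 w * φ) := rfl

end ParameterRing

section Galerkin

variable {E : Type*} [NormedAddCommGroup E] [NormedSpace ℝ E] [FiniteDimensional ℝ E] {d : ℕ}
  {b : Fin (d + 1) → E} (hb : LinearIndependent ℝ b)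

/-- The frequency vectors with entries at most `n` in absolute value and with a nonzero space
part, so that the corresponding monomials have zero average over the space torus. -/
def galerkinModes (d n : ℕ) : Set (Fin (d + 1) → ℤ) :=
  {k | (∀ i, |k i| ≤ n) ∧ ∃ i : Fin d, k i.succ ≠ 0}

/-- The trigonometric polynomials with frequencies in `galerkinModes d n` whose coefficients are
functions of the parameters. -/
def galerkinSpace (n : ℕ) : Submodule (parameterRing b) (PeriodicSmooth b) :=
  Submodule.span _ (trigMonomial hb '' galerkinModes d n)

theorem finite_galerkinModes (d n : ℕ) : (galerkinModes d n).Finite :=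
  (Set.finite_Icc (fun _ => (-n : ℤ)) fun _ => (n : ℤ)).subset fun _ hk =>
    ⟨fun i => (abs_le.1 (hk.1 i)).1, fun i => (abs_le.1 (hk.1 i)).2⟩

theorem update_neg_mem_galerkinModes {n : ℕ} {k : Fin (d + 1) → ℤ} (hk : k ∈ galerkinModes d n)
    (i : Fin (d + 1)) : Function.update k i (-k i) ∈ galerkinModes d n := by
  obtain ⟨hk, j, hj⟩ := hk
  refine ⟨fun m => ?_, j, ?_⟩ <;> rw [Function.update_apply] <;> split_ifs with h
  · rw [abs_neg]
    exact hk i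
  · exact hk m
  · rwa [← h, neg_ne_zero]
  · exact hj

theorem D_mem_galerkinSpace {n : ℕ} {φ : PeriodicSmooth b} (hφ : φ ∈ galerkinSpace hb n) (v : E) :
    D v φ ∈ galerkinSpace hb n := by
  induction hφ using Submodule.span_induction with
  | mem φ hφ =>
    obtain ⟨k, hk, rfl⟩ := hφ
    rw [D_trigMonomial_eq_sum]
    refine Submodule.sum_mem _ fun i _ => Submodule.smul_of_tower_mem _ _ ?_
    rw [D_trigMonomial]
    exact Submodule.smul_of_tower_mem _ _
      (Submodule.subset_span ⟨_, update_neg_mem_galerkinModes hk i, rfl⟩)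
  | zero => rw [map_zero]; exact zero_mem _
  | add φ ψ _ _ hφ hψ => rw [map_add]; exact add_mem hφ hψ
  | smul c φ hφ hDφ =>
    rw [Subalgebra.smul_def, smul_eq_mul, D_mul]
    exact add_mem (Submodule.smul_mem _ ⟨_, D_mem_parameterRing c.2 v⟩ hφ)
      (Submodule.smul_mem _ c hDφ)

theorem spaceMean_eq_zero_of_mem_galerkinSpace {n : ℕ} {φ : PeriodicSmooth b}
    (hφ : φ ∈ galerkinSpace hb n) : spaceMean φ = 0 := by
  induction hφ using Submodule.span_induction with
  | mem φ hφ =>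
    obtain ⟨k, ⟨-, i, hk⟩, rfl⟩ := hφ
    exact spaceMean_trigMonomial hb hk
  | zero => exact map_zero _
  | add φ ψ _ _ hφ hψ => rw [map_add, hφ, hψ, add_zero]
  | smul c φ _ hφ =>
    have hc : ∀ i ∈ (List.finRange d).map Fin.succ, D (b i) c.1 = 0 := fun i _ => c.2 i
    rw [Subalgebra.smul_def, smul_eq_mul, spaceMean, meanOver_mul_of_D_eq_zero hc, ← spaceMean,
      hφ, mul_zero]

theorem torusMean_sq_apply_eq {w : PeriodicSmooth b}
    (hw : w ∈ Submodule.span ℝ (Set.range (trigMonomial hb))) (p q : E) :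
    torusMean (w ^ 2) p = torusMean (w ^ 2) q := by
  have hD : ∀ v, D v w = ∑ i, dualCoord hb i v • D (b i) w := fun v => by
    induction hw using Submodule.span_induction with
    | mem w hw => obtain ⟨k, rfl⟩ := hw; exact D_trigMonomial_eq_sum hb v k
    | zero => simp
    | add w w' _ _ hw hw' => simp only [map_add, smul_add, Finset.sum_add_distrib, hw, hw']
    | smul c w _ hw => simp only [Derivation.map_smul, hw, Finset.smul_sum, smul_comm c]
  refine apply_eq_of_D_eq_zero (fun v => ?_) p q
  rw [torusMean, D_meanOver, ← torusMean, pow_two, D_mul, hD]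
  simp only [Finset.sum_mul, Finset.mul_sum, ← Finset.sum_add_distrib, smul_mul_assoc,
    mul_smul_comm, ← smul_add, ← D_mul, map_sum, map_smul, torusMean_D, smul_zero,
    Finset.sum_const_zero]

theorem eq_zero_of_cellForm_self_apply_eq_zero {ν : ℝ} (hν : 0 < ν) {a w : PeriodicSmooth b}
    (ha : ∀ p, ν ≤ a p) (hw : w ∈ Submodule.span ℝ (Set.range (trigMonomial hb)))
    (hmean : spaceMean w = 0) {p : E} (h : (cellForm a w w : PeriodicSmooth b) p = 0) : w = 0 := by
  have hzero : torusMean (w ^ 2) p ≤ 0 :=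
    (torusMean_sq_le hmean p).trans ((torusMean_gradSq_le hν ha h).trans_eq (by simp))
  ext q
  refine pow_eq_zero_iff two_ne_zero |>.1 (apply_eq_zero_of_meanOver_nonpos (g := w ^ 2) _
    (fun q => sq_nonneg (w q)) ((torusMean_sq_apply_eq hb hw q p).trans_le hzero))

theorem isUnit_det_cellForm {ν : ℝ} (hν : 0 < ν) {a : PeriodicSmooth b} (ha : ∀ p, ν ≤ a p)
    {ι : Type*} [Fintype ι] [DecidableEq ι] {e : ι → PeriodicSmooth b}
    (he : LinearIndependent ℝ e) (hmem : ∀ i, e i ∈ Set.range (trigMonomial hb))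
    (hmean : ∀ i, spaceMean (e i) = 0) :
    IsUnit (Matrix.of fun i j => cellForm a (e j) (e i)).det := by
  refine isUnit_of_apply_ne_zero fun p hp => ?_
  let ev : parameterRing b →+* ℝ := (eval b p).comp (parameterRing b).val.toRingHom
  have hev : ∀ r : ℝ, ev (algebraMap ℝ _ r) = r := fun _ => rfl
  obtain ⟨c, hc0, hc⟩ := Matrix.exists_mulVec_eq_zero_iff.2 ((RingHom.map_det ev _).symm.trans hp)
  set w := ∑ j, c j • e j with hw
  have hexpand : cellForm a w w = ∑ i, algebraMap ℝ _ (c i) *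
      ∑ j, algebraMap ℝ _ (c j) * cellForm a (e j) (e i) := by
    simp only [hw, ← algebraMap_smul (parameterRing b) (c _) (e _), map_sum, map_smul,
      LinearMap.sum_apply, LinearMap.smul_apply, smul_eq_mul]
  have hww : ev (cellForm a w w) = 0 := by
    rw [hexpand, map_sum]
    refine Finset.sum_eq_zero fun i _ => ?_
    rw [map_mul, map_sum]
    refine mul_eq_zero_of_right _ ((Finset.sum_congr rfl fun j _ => ?_).trans (congrFun hc i))
    rw [map_mul, hev, mul_comm]
    rfl
  have hw0 : w = 0 := eq_zero_of_cellForm_self_apply_eq_zero hb hν ha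
    (Submodule.sum_mem _ fun j _ => Submodule.smul_mem _ _ (Submodule.subset_span (hmem j)))
    (by simp only [hw, map_sum, map_smul, hmean, smul_zero, Finset.sum_const_zero]) hww
  exact hc0 (funext (Fintype.linearIndependent_iff.1 he c hw0))

theorem exists_galerkin {ν : ℝ} (hν : 0 < ν) {a : PeriodicSmooth b} (ha : ∀ p, ν ≤ a p)
    (F : Fin d → PeriodicSmooth b) (n : ℕ) :
    ∃ w ∈ galerkinSpace hb n, ∀ φ ∈ galerkinSpace hb n, torusMean (residual a F w * φ) = 0 := by
  classical
  obtain ⟨s, hs, hspan, hli⟩ := exists_linearIndependent ℝ (trigMonomial hb '' galerkinModes d n)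
  have := (((finite_galerkinModes d n).image (trigMonomial hb)).subset hs).fintype
  have hW : galerkinSpace hb n = Submodule.span _ (Set.range ((↑) : s → PeriodicSmooth b)) := by
    rw [Subtype.range_coe, galerkinSpace, ← Submodule.span_span_of_tower ℝ, ← hspan,
      Submodule.span_span_of_tower]
  have hdet := isUnit_det_cellForm hb hν ha hli
    (fun i => Set.image_subset_range _ _ (hs i.2))
    fun i => spaceMean_eq_zero_of_mem_galerkinSpace hb (Submodule.subset_span (hs i.2))
  obtain ⟨w, hw, hwφ⟩ := exists_mem_span_of_isUnit_det (cellForm a)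
    (-(torusMeanₗ b ∘ₗ LinearMap.mul (parameterRing b) _ (residual a F 0))) _ hdet
  refine ⟨w, hW ▸ hw, fun φ hφ => ?_⟩
  rw [residual_eq_add, add_mul, map_add, ← coe_cellForm, hwφ φ (hW ▸ hφ)]
  exact neg_add_cancel _

end Galerkin

section Existence

variable {E : Type*} [NormedAddCommGroup E] [NormedSpace ℝ E] [FiniteDimensional ℝ E] {d : ℕ}
  {b : Fin (d + 1) → E} {a w : PeriodicSmooth b} {F : Fin d → PeriodicSmooth b}

/-- `w` has zero average in space and solves the cell problem `∂w/∂θ = ∇·(a∇w + F)`. -/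
structure IsCellSolution (a : PeriodicSmooth b) (F : Fin d → PeriodicSmooth b)
    (w : PeriodicSmooth b) : Prop where
  spaceMean_eq_zero : spaceMean w = 0
  residual_eq_zero : residual a F w = 0

theorem tendsto_residual {ι : Type*} {𝒰 : Ultrafilter ι} {f : ι → PeriodicSmooth b}
    (hf : ∀ m, DerivMeanSqBounded [] m f)
    (h : Tendsto (fun n => toContinuousMap (f n)) 𝒰 (𝓝 (toContinuousMap w))) :
    Tendsto (fun n => toContinuousMap (residual a F (f n))) 𝒰
      (𝓝 (toContinuousMap (residual a F w))) := by
  have hflux : ∀ i : Fin d, Tendsto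
      (fun n => toContinuousMap (D (b i.succ) (a * D (b i.succ) (f n) + F i))) 𝒰
      (𝓝 (toContinuousMap (D (b i.succ) (a * D (b i.succ) w + F i)))) := fun i => by
    have hbounded := DerivMeanSqBounded.derivative hf (b i.succ)
    refine DerivMeanSqBounded.tendsto_D
      (fun m => ((hbounded m).const_mul a).add (DerivMeanSqBounded.const (F i))) ?_ _
    simpa only [map_add, map_mul] using
      ((DerivMeanSqBounded.tendsto_D hf h (b i.succ)).const_mul (toContinuousMap a)).add_const
        (toContinuousMap (F i))
  simpa only [residual, map_sub, map_sum] using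
    (DerivMeanSqBounded.tendsto_D hf h (b 0)).sub (tendsto_finsetSum _ fun i _ => hflux i)

theorem torusMean_mul_residual_of_D_eq_zero (hw : spaceMean w = 0) {φ : PeriodicSmooth b}
    (hφ : ∀ i : Fin d, D (b i.succ) φ = 0) : torusMean (φ * residual a F w) = 0 := by
  have hresidual : spaceMean (residual a F w) = 0 := by
    simp only [residual, map_sub, map_sum, spaceMean_D_succ, Finset.sum_const_zero, sub_zero]
    rw [spaceMean, ← D_meanOver, ← spaceMean, hw, map_zero]
  have hconst : ∀ i ∈ (List.finRange d).map Fin.succ, D (b i) φ = 0 :=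
    List.forall_mem_map.2 fun i _ => hφ i
  rw [torusMean_eq_mean_spaceMean, spaceMean, meanOver_mul_of_D_eq_zero hconst, ← spaceMean,
    hresidual, mul_zero, map_zero]

theorem eq_zero_of_tendsto_meanOver {ι : Type*} {𝒰 : Filter ι} [𝒰.NeBot]
    (l : List (Fin (d + 1))) {f : ι → PeriodicSmooth b}
    (h : Tendsto (fun n => toContinuousMap (f n)) 𝒰 (𝓝 (toContinuousMap w)))
    (hf : ∀ᶠ n in 𝒰, meanOver l (f n) = 0) : meanOver l w = 0 := by
  have hzero : toContinuousMap (meanOver l w) = 0 :=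
    tendsto_nhds_unique (tendsto_meanOver l h) (tendsto_const_nhds.congr' (by
      filter_upwards [hf] with n hn
      rw [hn, map_zero]))
  ext p
  exact DFunLike.congr_fun hzero p

theorem eventually_trigMonomial_mem_galerkinSpace (hb : LinearIndependent ℝ b)
    {k : Fin (d + 1) → ℤ} (hk : ∃ i : Fin d, k i.succ ≠ 0) :
    ∀ᶠ n in atTop, trigMonomial hb k ∈ galerkinSpace hb n := by
  filter_upwards [eventually_all.2 fun i => eventually_ge_atTop (k i).natAbs] with n hn
  refine Submodule.subset_span ⟨k, ⟨fun i => ?_, hk⟩, rfl⟩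
  rw [Int.abs_eq_natAbs]
  exact_mod_cast hn i

theorem exists_isCellSolution (hb : LinearIndependent ℝ b) {ν : ℝ} (hν : 0 < ν)
    (ha : ∀ p, ν ≤ a p) (F : Fin d → PeriodicSmooth b) : ∃ w, IsCellSolution a F w := by
  choose s hsmem hs using exists_galerkin hb hν ha F
  have hspaceMean : ∀ n, ∀ φ ∈ galerkinSpace hb n, spaceMean φ = 0 := fun _ _ =>
    spaceMean_eq_zero_of_mem_galerkinSpace hb
  have hbounded : ∀ m, DerivMeanSqBounded [] m s := DerivMeanSqBounded.drop_directions fun m =>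
    (DerivMeanSqBounded.of_galerkin (W := fun n => (galerkinSpace hb n : Set (PeriodicSmooth b)))
      hν ha hspaceMean (fun _ v _ hφ => D_mem_galerkinSpace hb hφ v) hsmem hs m
      fun i => DerivMeanSqBounded.const (F i)).1
  obtain ⟨w, hw⟩ := DerivMeanSqBounded.exists_tendsto hbounded (hyperfilter ℕ)
  have hw0 : spaceMean w = 0 :=
    eq_zero_of_tendsto_meanOver _ hw (Eventually.of_forall fun n => hspaceMean n _ (hsmem n))
  refine ⟨w, hw0, eq_zero_of_torusMean_trigMonomial_mul_eq_zero hb fun k => ?_⟩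
  by_cases hk : ∃ i : Fin d, k i.succ ≠ 0
  · refine eq_zero_of_tendsto_meanOver (𝒰 := (hyperfilter ℕ : Filter ℕ)) _ ?_ ?_
      (f := fun n => trigMonomial hb k * residual a F (s n))
    · simpa only [map_mul] using
        (tendsto_residual hbounded hw).const_mul (toContinuousMap (trigMonomial hb k))
    · filter_upwards [Nat.hyperfilter_le_atTop
        (eventually_trigMonomial_mem_galerkinSpace hb hk)] with n hn
      rw [mul_comm]
      exact hs n _ hn
  · push Not at hk
    refine torusMean_mul_residual_of_D_eq_zero hw0 fun i => ?_
    rw [D_trigMonomial, hk, Int.cast_zero, mul_zero, zero_smul]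

end Existence

section Estimates

variable {E : Type*} [NormedAddCommGroup E] [NormedSpace ℝ E] [FiniteDimensional ℝ E] {d : ℕ}
  {b : Fin (d + 1) → E} {a w w' : PeriodicSmooth b} {F F' : Fin d → PeriodicSmooth b} {ν : ℝ}

theorem torusMean_mono {f g : PeriodicSmooth b} (h : ∀ p, f p ≤ g p) (p : E) :
    torusMean f p ≤ torusMean g p := meanOver_mono _ h p

theorem spaceMean_mono {f g : PeriodicSmooth b} (h : ∀ p, f p ≤ g p) (p : E) :
    spaceMean f p ≤ spaceMean g p := meanOver_mono _ h p

theorem torusMean_algebraMap (c : ℝ) :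
    torusMean (algebraMap ℝ (PeriodicSmooth b) c) = algebraMap ℝ _ c := meanOver_algebraMap _ c

theorem spaceMean_D_zero_apply_le_torusMean {e g : PeriodicSmooth b}
    (h : ∀ p, spaceMean (D (b 0) e) p ≤ spaceMean g p) (hg : ∀ p, 0 ≤ g p) (p : E) :
    spaceMean e p ≤ torusMean e p + torusMean g p := by
  simp only [torusMean_eq_mean_spaceMean]
  refine apply_le_mean_add_mean 0 (fun q => ?_) (meanOver_nonneg _ hg) p
  rw [spaceMean, D_meanOver]
  exact h q

theorem spaceMean_D_succ_mul (i : Fin d) (f g : PeriodicSmooth b) :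
    spaceMean (D (b i.succ) f * g) = -spaceMean (f * D (b i.succ) g) := by
  rw [eq_neg_iff_add_eq_zero, ← map_add, ← D_mul, spaceMean_D_succ]

theorem torusMean_sum_sq_le {γ : ℝ} (hF : ∀ i p, |F i p| ≤ γ) (p : E) :
    torusMean (∑ i, F i ^ 2) p ≤ d * γ ^ 2 := by
  have h := torusMean_mono (f := ∑ i, F i ^ 2) (g := algebraMap ℝ _ (d * γ ^ 2)) (fun q => by
    simp only [sum_apply, pow_apply, algebraMap_apply]
    calc ∑ i, F i q ^ 2 ≤ ∑ _i : Fin d, γ ^ 2 := Finset.sum_le_sum fun i _ =>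
          sq_le_sq' (neg_le_of_abs_le (hF i q)) (le_of_abs_le (hF i q))
      _ = d * γ ^ 2 := by simp) p
  rwa [torusMean_algebraMap, algebraMap_apply] at h

namespace IsCellSolution

theorem D_zero_eq (h : IsCellSolution a F w) :
    D (b 0) w = ∑ i, D (b i.succ) (a * D (b i.succ) w + F i) := sub_eq_zero.1 h.residual_eq_zero

theorem derivative (h : IsCellSolution a F w) (v : E) :
    IsCellSolution a (fun i => D v (F i) + D v a * D (b i.succ) w) (D v w) where
  spaceMean_eq_zero := by
    rw [spaceMean, ← D_meanOver, ← spaceMean, h.spaceMean_eq_zero, map_zero]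
  residual_eq_zero := by rw [← D_residual, h.residual_eq_zero, map_zero]

theorem sub (h : IsCellSolution a F w) (h' : IsCellSolution a F' w') :
    IsCellSolution a (F - F') (w - w') where
  spaceMean_eq_zero := by rw [map_sub, h.spaceMean_eq_zero, h'.spaceMean_eq_zero, sub_zero]
  residual_eq_zero := by
    rw [residual, map_sub, h.D_zero_eq, h'.D_zero_eq, ← Finset.sum_sub_distrib, sub_eq_zero]
    refine Finset.sum_congr rfl fun i _ => ?_
    rw [← map_sub, map_sub (D _) w w', Pi.sub_apply, mul_sub, add_sub_add_comm]

theorem spaceMean_D_zero_mul (h : IsCellSolution a F w) (φ : PeriodicSmooth b) :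
    spaceMean (D (b 0) w * φ) =
      -spaceMean (∑ i, (a * D (b i.succ) w + F i) * D (b i.succ) φ) := by
  rw [h.D_zero_eq, Finset.sum_mul, map_sum, map_sum, ← Finset.sum_neg_distrib]
  exact Finset.sum_congr rfl fun i _ => spaceMean_D_succ_mul i _ _

theorem torusMean_gradSq_le (h : IsCellSolution a F w) (hν : 0 < ν) (ha : ∀ p, ν ≤ a p) (p : E) :
    torusMean (gradSq w) p ≤ ν⁻¹ ^ 2 * torusMean (∑ i, F i ^ 2) p :=
  PeriodicSmooth.torusMean_gradSq_le hν ha (by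
    rw [h.residual_eq_zero, zero_mul, map_zero, zero_apply])

theorem spaceMean_sq_le (h : IsCellSolution a F w) (hν : 0 < ν) (ha : ∀ p, ν ≤ a p) (p : E) :
    spaceMean (w ^ 2) p ≤ (ν⁻¹ ^ 2 + (2 * ν)⁻¹) * torusMean (∑ i, F i ^ 2) p := by
  have hD : spaceMean (D (b 0) (w ^ 2)) =
      spaceMean ((-2 : ℝ) • ∑ i, (a * D (b i.succ) w + F i) * D (b i.succ) w) := by
    rw [map_smul, neg_smul, ← smul_neg, ← h.spaceMean_D_zero_mul, ← map_smul, pow_two, D_mul,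
      two_smul, mul_comm w]
  have hsup := spaceMean_D_zero_apply_le_torusMean (e := w ^ 2)
    (g := (2 * ν)⁻¹ • ∑ i, F i ^ 2) (fun q => by
      rw [hD]
      refine spaceMean_mono (fun r => ?_) q
      simp only [smul_apply, sum_apply, mul_apply, add_apply, pow_apply,
        Finset.mul_sum]
      refine Finset.sum_le_sum fun i _ => ?_
      set x := D (b i.succ) w r
      have hax : ν * x ^ 2 ≤ a r * x ^ 2 := mul_le_mul_of_nonneg_right (ha r) (sq_nonneg x)
      have hsq : 0 ≤ (2 * ν)⁻¹ * (2 * ν * x + F i r) ^ 2 := by positivity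
      have hexp : (2 * ν)⁻¹ * (2 * ν * x + F i r) ^ 2 =
          2 * (ν * x ^ 2) + 2 * (F i r * x) + (2 * ν)⁻¹ * F i r ^ 2 := by field_simp; ring
      linarith) (fun q => by
      simp only [smul_apply, sum_apply, pow_apply]
      positivity) p
  rw [map_smul, smul_apply] at hsup
  have hpoincare := torusMean_sq_le h.spaceMean_eq_zero p
  have henergy := h.torusMean_gradSq_le hν ha p
  linarith

theorem eq (h : IsCellSolution a F w) (h' : IsCellSolution a F w') (hν : 0 < ν)
    (ha : ∀ p, ν ≤ a p) : w = w' := by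
  ext p
  have hle := (h.sub h').spaceMean_sq_le hν ha p
  simp only [sub_self, Pi.zero_apply, ne_eq, OfNat.ofNat_ne_zero, not_false_eq_true, zero_pow,
    Finset.sum_const_zero, map_zero, zero_apply, mul_zero] at hle
  have hsq := apply_eq_zero_of_meanOver_nonpos _ (g := (w - w') ^ 2) (fun q => sq_nonneg _) hle
  exact sub_eq_zero.1 (pow_eq_zero_iff two_ne_zero |>.1 hsq)

theorem spaceMean_D_sq_le (h : IsCellSolution a F w) (hν : 0 < ν) (ha : ∀ p, ν ≤ a p) {v : E}
    {δ : ℝ} (hDa : ∀ p, |D v a p| ≤ δ) (hDF : ∀ i p, |D v (F i) p| ≤ δ) (p : E) :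
    spaceMean (D v w ^ 2) p ≤
      (ν⁻¹ ^ 2 + (2 * ν)⁻¹) * (2 * δ ^ 2 * (d + torusMean (gradSq w) p)) := by
  refine ((h.derivative v).spaceMean_sq_le hν ha p).trans
    (mul_le_mul_of_nonneg_left ?_ (by positivity))
  have hflux := torusMean_mono (f := ∑ i, (D v (F i) + D v a * D (b i.succ) w) ^ 2)
    (g := (2 * δ ^ 2) • (algebraMap ℝ _ (d : ℝ) + gradSq w)) (fun q => by
      have hd : (d : ℝ) = ∑ _i : Fin d, (1 : ℝ) := by simp
      simp only [smul_apply, sum_apply, add_apply, mul_apply, pow_apply, algebraMap_apply,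
        gradSq_apply]
      rw [hd, ← Finset.sum_add_distrib, Finset.mul_sum]
      refine Finset.sum_le_sum fun i _ => ?_
      have hFsq : D v (F i) q ^ 2 ≤ δ ^ 2 :=
        sq_le_sq' (neg_le_of_abs_le (hDF i q)) (le_of_abs_le (hDF i q))
      have hasq : D v a q ^ 2 ≤ δ ^ 2 :=
        sq_le_sq' (neg_le_of_abs_le (hDa q)) (le_of_abs_le (hDa q))
      have hx := mul_le_mul_of_nonneg_right hasq (sq_nonneg (D (b i.succ) w q))
      nlinarith [add_sq_le (a := D v (F i) q) (b := D v a q * D (b i.succ) w q)]) p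
  rwa [map_smul, map_add, torusMean_algebraMap] at hflux

theorem spaceMean_D_zero_mul_gradSq (h : IsCellSolution a F w) :
    spaceMean (D (b 0) (a * gradSq w)) =
      spaceMean (D (b 0) a * gradSq w +
        (2 : ℝ) • (D (b 0) w * (∑ i, D (b i.succ) (F i) - D (b 0) w))) := by
  have hgradSq : D (b 0) (gradSq w) =
      (2 : ℝ) • ∑ i : Fin d, D (b i.succ) w * D (b i.succ) (D (b 0) w) := by
    simp only [gradSq, map_sum, pow_two, D_mul, D_comm (b 0), Finset.smul_sum, two_smul,
      mul_comm (D _ (D _ w))]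
  have hexpand : D (b 0) (a * gradSq w) = D (b 0) a * gradSq w +
      (2 : ℝ) • (∑ i, (a * D (b i.succ) w + F i) * D (b i.succ) (D (b 0) w) -
        ∑ i, F i * D (b i.succ) (D (b 0) w)) := by
    simp only [D_mul, hgradSq, mul_smul_comm, Finset.mul_sum, ← Finset.sum_sub_distrib, add_mul,
      add_sub_cancel_right, mul_assoc]
  have hflux : spaceMean (D (b 0) w * ∑ i, D (b i.succ) (F i)) =
      -spaceMean (∑ i, F i * D (b i.succ) (D (b 0) w)) := by
    simp only [mul_comm (D (b 0) w), Finset.sum_mul, map_sum, spaceMean_D_succ_mul,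
      Finset.sum_neg_distrib]
  rw [hexpand, map_add, map_add, map_smul, map_smul, mul_sub, map_sub, map_sub, hflux,
    h.spaceMean_D_zero_mul, neg_sub_neg]

theorem torusMean_D_zero_sq_le (h : IsCellSolution a F w) {κ γ : ℝ}
    (hκ : ∀ p, D (b 0) a p ≤ κ) (hdiv : ∀ p, |∑ i, D (b i.succ) (F i) p| ≤ γ) (p : E) :
    torusMean (D (b 0) w ^ 2) p ≤ κ * torusMean (gradSq w) p + γ ^ 2 := by
  have hzero : torusMean (D (b 0) a * gradSq w +
      (2 : ℝ) • (D (b 0) w * (∑ i, D (b i.succ) (F i) - D (b 0) w))) = 0 := by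
    rw [torusMean_eq_mean_spaceMean, ← h.spaceMean_D_zero_mul_gradSq,
      ← torusMean_eq_mean_spaceMean, torusMean_D]
  have hle := torusMean_mono (f := D (b 0) w ^ 2 + (D (b 0) a * gradSq w +
      (2 : ℝ) • (D (b 0) w * (∑ i, D (b i.succ) (F i) - D (b 0) w))))
    (g := κ • gradSq w + algebraMap ℝ _ (γ ^ 2)) (fun q => by
      simp only [add_apply, mul_apply, smul_apply, sub_apply, pow_apply, sum_apply,
        algebraMap_apply]
      have hκg := mul_le_mul_of_nonneg_right (hκ q) (gradSq_nonneg w q)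
      have hdivsq := sq_le_sq' (neg_le_of_abs_le (hdiv q)) (le_of_abs_le (hdiv q))
      nlinarith [sq_nonneg (D (b 0) w q - ∑ i, D (b i.succ) (F i) q)]) p
  rwa [map_add, hzero, add_zero, map_add, map_smul, torusMean_algebraMap] at hle

theorem spaceMean_gradSq_le (h : IsCellSolution a F w) (hν : 0 < ν) (ha : ∀ p, ν ≤ a p)
    {Λ κ γ : ℝ} (hΛ : ∀ p, a p ≤ Λ) (hκ : ∀ p, |D (b 0) a p| ≤ κ)
    (hdiv : ∀ p, |∑ i, D (b i.succ) (F i) p| ≤ γ) (p : E) :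
    spaceMean (gradSq w) p ≤ ν⁻¹ * ((Λ + κ) * torusMean (gradSq w) p + γ ^ 2) := by
  have hsup := spaceMean_D_zero_apply_le_torusMean (e := a * gradSq w)
    (g := κ • gradSq w + algebraMap ℝ _ (γ ^ 2)) (fun q => by
      rw [h.spaceMean_D_zero_mul_gradSq]
      refine spaceMean_mono (fun r => ?_) q
      simp only [add_apply, mul_apply, smul_apply, sub_apply, sum_apply, algebraMap_apply]
      have hκg := mul_le_mul_of_nonneg_right (le_of_abs_le (hκ r)) (gradSq_nonneg w r)
      have hdivsq := sq_le_sq' (neg_le_of_abs_le (hdiv r)) (le_of_abs_le (hdiv r))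
      nlinarith [sq_nonneg (2 * D (b 0) w r - ∑ i, D (b i.succ) (F i) r)]) (fun q =>
      add_nonneg (mul_nonneg ((abs_nonneg _).trans (hκ q)) (gradSq_nonneg w q))
        ((sq_nonneg γ).trans_eq (algebraMap_apply _ _).symm)) p
  rw [map_add, map_smul, torusMean_algebraMap, add_apply, smul_apply, algebraMap_apply] at hsup
  have hupper : torusMean (a * gradSq w) p ≤ Λ * torusMean (gradSq w) p := by
    rw [← smul_apply, ← map_smul]
    exact torusMean_mono (fun q => mul_le_mul_of_nonneg_right (hΛ q) (gradSq_nonneg w q)) p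
  have hlower : ν * spaceMean (gradSq w) p ≤ spaceMean (a * gradSq w) p := by
    rw [← smul_apply, ← map_smul]
    exact spaceMean_mono (fun q => mul_le_mul_of_nonneg_right (ha q) (gradSq_nonneg w q)) p
  rw [← div_eq_inv_mul, le_div_iff₀ hν]
  linarith

end IsCellSolution

theorem exists_forall_isCellSolution_bounds (d : ℕ) (hν : 0 < ν) (γ : ℝ) : ∃ c, 0 ≤ c ∧
    ∀ (b : Fin (d + 1) → E) (a w : PeriodicSmooth b) (F : Fin d → PeriodicSmooth b),
      IsCellSolution a F w → (∀ p, ν ≤ a p) → (∀ p, a p ≤ γ + ν) → (∀ p, |D (b 0) a p| ≤ γ) →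
      (∀ i p, |F i p| ≤ γ) → (∀ p, |∑ i, D (b i.succ) (F i) p| ≤ γ) → ∀ p,
        torusMean (D (b 0) w ^ 2) p ≤ c ^ 2 ∧ spaceMean (gradSq w) p ≤ c ^ 2 ∧
        spaceMean (w ^ 2) p ≤ c ^ 2 ∧
        ∀ v δ, (∀ p, |D v a p| ≤ δ * γ) → (∀ i p, |D v (F i) p| ≤ δ * γ) →
          spaceMean (D v w ^ 2) p ≤ (δ * c) ^ 2 := by
  set K := ν⁻¹ ^ 2 + (2 * ν)⁻¹
  set G := ν⁻¹ ^ 2 * (d * γ ^ 2)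
  have hlarge : ∀ x : ℝ, ∀ᶠ c : ℝ in atTop, x ≤ c ^ 2 :=
    (tendsto_pow_atTop two_ne_zero).eventually_ge_atTop
  obtain ⟨c, hc0, htheta, hgrad, hw, hderiv⟩ := ((eventually_ge_atTop 0).and
    ((hlarge (γ * G + γ ^ 2)).and ((hlarge (ν⁻¹ * ((γ + ν + γ) * G + γ ^ 2))).and
    ((hlarge (K * (d * γ ^ 2))).and (hlarge (K * (2 * γ ^ 2 * (d + G)))))))).exists
  refine ⟨c, hc0, fun b a w F h ha ha' hDa hF hdiv p => ?_⟩
  have hγ : 0 ≤ γ := (abs_nonneg _).trans (hDa p)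
  have hG : torusMean (gradSq w) p ≤ G := (h.torusMean_gradSq_le hν ha p).trans
    (mul_le_mul_of_nonneg_left (torusMean_sum_sq_le hF p) (by positivity))
  refine ⟨(h.torusMean_D_zero_sq_le (fun q => le_of_abs_le (hDa q)) hdiv p).trans
      (le_trans ?_ htheta),
    (h.spaceMean_gradSq_le hν ha ha' hDa hdiv p).trans (le_trans ?_ hgrad),
    (h.spaceMean_sq_le hν ha p).trans (le_trans ?_ hw), fun v δ hv hvF =>
    (h.spaceMean_D_sq_le hν ha hv hvF p).trans ?_⟩
  · gcongr
  · gcongr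
  · exact mul_le_mul_of_nonneg_left (torusMean_sum_sq_le hF p) (by positivity)
  · calc K * (2 * (δ * γ) ^ 2 * (d + torusMean (gradSq w) p))
        ≤ K * (2 * (δ * γ) ^ 2 * (d + G)) := by gcongr
      _ = δ ^ 2 * (K * (2 * γ ^ 2 * (d + G))) := by ring
      _ ≤ δ ^ 2 * c ^ 2 := by gcongr
      _ = (δ * c) ^ 2 := (mul_pow _ _ _).symm

end Estimates

end PeriodicSmooth

/-- The directions of `θ` and of the two space variables in the space of all `(t, τ, θ, x)`. -/
def cellBasis : Fin 3 → ℝ × ℝ × ℝ × (ℝ × ℝ) :=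
  ![(0, 0, 1, 0), (0, 0, 0, (1, 0)), (0, 0, 0, (0, 1))]

theorem linearIndependent_cellBasis : LinearIndependent ℝ cellBasis := by
  refine Fintype.linearIndependent_iff.2 fun g hg i => ?_
  simp only [cellBasis, Fin.sum_univ_three, Matrix.cons_val, Prod.smul_mk, Prod.mk_add_mk,
    Prod.mk_eq_zero, smul_eq_mul, mul_one, mul_zero, smul_zero, add_zero, zero_add] at hg
  fin_cases i
  exacts [hg.2.2.1, hg.2.2.2.1, hg.2.2.2.2]

namespace PeriodicSmooth

section Coordinates

variable (f g : PeriodicSmooth cellBasis) (t τ θ : ℝ) (x : ℝ × ℝ)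

theorem hasDerivAt_time :
    HasDerivAt (fun s => f (s, τ, θ, x)) (D (1, 0) f (t, τ, θ, x)) t := by
  simpa using hasDerivAt_line (1, 0) f (0, τ, θ, x) t

theorem hasDerivAt_fastTime :
    HasDerivAt (fun s => f (t, s, θ, x)) (D (0, 1, 0) f (t, τ, θ, x)) τ := by
  simpa using hasDerivAt_line (0, 1, 0) f (t, 0, θ, x) τ

theorem hasDerivAt_theta :
    HasDerivAt (fun s => f (t, τ, s, x)) (D (cellBasis 0) f (t, τ, θ, x)) θ := by
  simpa [cellBasis] using hasDerivAt_line (cellBasis 0) f (t, τ, 0, x) θ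

theorem fderiv_space_apply (v : ℝ × ℝ) :
    fderiv ℝ (fun y => f (t, τ, θ, y)) x v = D (0, 0, 0, v) f (t, τ, θ, x) := by
  have hembed := (hasFDerivAt_const t x).prodMk
    ((hasFDerivAt_const τ x).prodMk ((hasFDerivAt_const θ x).prodMk (hasFDerivAt_id (𝕜 := ℝ) x)))
  exact congrArg (· v) ((f.differentiable (t, τ, θ, x)).hasFDerivAt.comp x hembed).fderiv

theorem grad_space : grad (fun y => f (t, τ, θ, y)) x =
    (D (cellBasis 1) f (t, τ, θ, x), D (cellBasis 2) f (t, τ, θ, x)) := by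
  simp only [grad, fderiv_space_apply]
  rfl

theorem div2_space : div2 (fun y => (f (t, τ, θ, y), g (t, τ, θ, y))) x =
    (D (cellBasis 1) f + D (cellBasis 2) g) (t, τ, θ, x) := by
  simp only [div2, fderiv_space_apply]
  rfl

theorem integrableOn_Tsq : IntegrableOn (fun y => f (t, τ, θ, y)) Tsq :=
  (Continuous.continuousOn (by have := f.continuous; fun_prop)).integrableOn_compact
    (isCompact_Icc.prod isCompact_Icc)

theorem integral_Tsq_eq_spaceMean : ∫ y in Tsq, f (t, τ, θ, y) = spaceMean f (t, τ, θ, x) := by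
  have hconst : spaceMean f (t, τ, θ, x) = spaceMean f (t, τ, θ, 0) := by
    have hx : (t, τ, θ, x) = (t, τ, θ, 0) + x.1 • cellBasis 1 + x.2 • cellBasis 2 := by
      simp [cellBasis]
    have hinv : ∀ i : Fin 2, D (cellBasis i.succ) (spaceMean f) = 0 := fun i => by
      rw [spaceMean, D_meanOver, ← spaceMean, spaceMean_D_succ]
    rw [hx]
    exact (apply_add_smul_of_D_eq_zero (hinv 1) _ _).trans
      (apply_add_smul_of_D_eq_zero (hinv 0) _ _)
  have hmean : spaceMean f (t, τ, θ, 0) = ∫ r in (0 : ℝ)..1, ∫ s in (0 : ℝ)..1,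
      f ((t, τ, θ, 0) + r • cellBasis 1 + s • cellBasis 2) := rfl
  rw [hconst, hmean, Measure.volume_eq_prod, Tsq, setIntegral_prod _ (integrableOn_Tsq f t τ θ)]
  simp only [integral_Icc_eq_integral_Ioc, ← intervalIntegral.integral_of_le zero_le_one]
  simp [cellBasis]

theorem integral_Icc_Tsq_eq_torusMean :
    ∫ θ in Set.Icc (0 : ℝ) 1, ∫ y in Tsq, f (t, τ, θ, y) = torusMean f (t, τ, 0, x) := by
  simp only [integral_Tsq_eq_spaceMean f t τ _ x, torusMean_eq_mean_spaceMean, mean_apply,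
    integral_Icc_eq_integral_Ioc, ← intervalIntegral.integral_of_le zero_le_one]
  simp [cellBasis]

end Coordinates

section Norms

variable {f w : PeriodicSmooth cellBasis} {c : ℝ} (t τ : ℝ)

theorem L2sharpNorm_le (hc : 0 ≤ c) (h : ∀ p, torusMean (f ^ 2) p ≤ c ^ 2) :
    L2sharpNorm (fun θ x => f (t, τ, θ, x)) ≤ c := by
  have := integral_Icc_Tsq_eq_torusMean (f ^ 2) t τ 0
  simp only [pow_apply] at this
  rw [L2sharpNorm, this, ← Real.sqrt_eq_rpow]
  exact Real.sqrt_le_iff.2 ⟨hc, h _⟩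

theorem LinfL2Norm_le_of_integral_le {F : ℝ → ℝ × ℝ → ℝ} (hc : 0 ≤ c)
    (h : ∀ θ, ∫ x in Tsq, F θ x ^ 2 ≤ c ^ 2) : LinfL2Norm F ≤ c := by
  refine Real.iSup_le (fun θ => ?_) hc
  rw [L2norm, ← Real.sqrt_eq_rpow]
  exact Real.sqrt_le_iff.2 ⟨hc, h _⟩

theorem LinfL2Norm_le (hc : 0 ≤ c) (h : ∀ p, spaceMean (f ^ 2) p ≤ c ^ 2) :
    LinfL2Norm (fun θ x => f (t, τ, θ, x)) ≤ c :=
  LinfL2Norm_le_of_integral_le hc fun θ =>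
    (integral_Tsq_eq_spaceMean (f ^ 2) t τ θ 0).trans_le (h _)

theorem LinfL2Norm_grad_le (hc : 0 ≤ c) (h : ∀ p, spaceMean (gradSq w) p ≤ c ^ 2) :
    LinfL2Norm (fun θ x => ‖grad (fun y => w (t, τ, θ, y)) x‖) ≤ c := by
  refine LinfL2Norm_le_of_integral_le hc fun θ => ?_
  simp only [grad_space]
  refine le_trans ?_ ((integral_Tsq_eq_spaceMean (gradSq w) t τ θ 0).trans_le (h _))
  refine integral_mono_of_nonneg (.of_forall fun _ => sq_nonneg _)
    (integrableOn_Tsq (gradSq w) t τ θ) (.of_forall fun x => ?_)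
  simp only [gradSq_apply, Fin.sum_univ_two, Prod.norm_def, Real.norm_eq_abs]
  rcases max_choice |D (cellBasis 1) w (t, τ, θ, x)| |D (cellBasis 2) w (t, τ, θ, x)|
    with hmax | hmax <;> rw [hmax, sq_abs]
  exacts [le_add_of_nonneg_right (sq_nonneg _), le_add_of_nonneg_left (sq_nonneg _)]

end Norms

section Transfer

theorem exists_eq_curried {F : ℝ → ℝ → ℝ → ℝ × ℝ → ℝ}
    (hF : ContDiff ℝ (⊤ : ℕ∞) fun p : ℝ × ℝ × ℝ × (ℝ × ℝ) => F p.1 p.2.1 p.2.2.1 p.2.2.2)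
    (hθ : ∀ t τ θ x, F t τ (θ + 1) x = F t τ θ x) (hx : ∀ t τ θ, SpacePeriodic (F t τ θ)) :
    ∃ f : PeriodicSmooth cellBasis, F = fun t τ θ x => f (t, τ, θ, x) := by
  refine ⟨mk _ hF fun i ⟨t, τ, θ, x⟩ => ?_, rfl⟩
  fin_cases i
  · simpa [cellBasis] using hθ t τ θ x
  · simpa [cellBasis] using (hx t τ θ x).1
  · simpa [cellBasis] using (hx t τ θ x).2

theorem curried_theta_add_one (f : PeriodicSmooth cellBasis) (t τ θ : ℝ) (x : ℝ × ℝ) :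
    f (t, τ, θ + 1, x) = f (t, τ, θ, x) := by
  simpa [cellBasis] using f.apply_add_period 0 (t, τ, θ, x)

theorem spacePeriodic_curried (f : PeriodicSmooth cellBasis) (t τ θ : ℝ) :
    SpacePeriodic fun x => f (t, τ, θ, x) := fun x =>
  ⟨by simpa [cellBasis] using f.apply_add_period 1 (t, τ, θ, x),
    by simpa [cellBasis] using f.apply_add_period 2 (t, τ, θ, x)⟩

theorem residual_curried (a c₁ c₂ w : PeriodicSmooth cellBasis) (ν t τ θ : ℝ) (x : ℝ × ℝ) :
    residual (a + algebraMap ℝ _ ν) ![c₁, c₂] w (t, τ, θ, x) =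
      deriv (fun σ => w (t, τ, σ, x)) θ
        - div2 (fun y => (a (t, τ, θ, y) + ν) • grad (fun z => w (t, τ, θ, z)) y) x
        - div2 (fun y => (c₁ (t, τ, θ, y), c₂ (t, τ, θ, y))) x := by
  have hflux := div2_space ((a + algebraMap ℝ _ ν) * D (cellBasis 1) w)
    ((a + algebraMap ℝ _ ν) * D (cellBasis 2) w) t τ θ x
  simp only [mul_apply, add_apply, algebraMap_apply] at hflux
  simp only [grad_space, Prod.smul_mk, smul_eq_mul]
  rw [hflux, div2_space, (hasDerivAt_theta w t τ θ x).deriv]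
  simp only [residual, Fin.sum_univ_two, map_add, sub_apply, add_apply, Fin.succ_zero_eq_one,
    Fin.succ_one_eq_two, Matrix.cons_val]
  ring

theorem isNuCellSolP_curried_iff {a c₁ c₂ w : PeriodicSmooth cellBasis} {ν : ℝ} :
    IsNuCellSolP (fun t τ θ x => a (t, τ, θ, x)) (fun t τ θ x => (c₁ (t, τ, θ, x), c₂ (t, τ, θ, x)))
      ν (fun t τ θ x => w (t, τ, θ, x)) ↔ IsCellSolution (a + algebraMap ℝ _ ν) ![c₁, c₂] w := by
  refine ⟨fun ⟨_, _, _, heq, hmean⟩ => ⟨ext fun ⟨t, τ, θ, x⟩ => ?_, ext fun ⟨t, τ, θ, x⟩ => ?_⟩,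
    fun h => ⟨w.contDiff, curried_theta_add_one w, spacePeriodic_curried w,
      fun t τ θ x => ?_, fun t τ θ => ?_⟩⟩
  · rw [← integral_Tsq_eq_spaceMean, hmean, zero_apply]
  · rw [residual_curried, heq, sub_self, zero_apply]
  · rw [← sub_eq_zero, ← residual_curried, h.residual_eq_zero, zero_apply]
  · rw [integral_Tsq_eq_spaceMean w t τ θ 0, h.spaceMean_eq_zero, zero_apply]

end Transfer

end PeriodicSmooth

/-- The hypotheses on the coefficients under which the cell problem is solved and its solution is
estimated. The bound on the `τ`-derivatives carries a separate factor `δ`, equal to `√ε` in (H2). -/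
structure CoeffBounds (γ δ : ℝ) (A : ℝ → ℝ → ℝ → (ℝ × ℝ) → ℝ)
    (C : ℝ → ℝ → ℝ → (ℝ × ℝ) → ℝ × ℝ) : Prop where
  contDiff_coeff :
    ContDiff ℝ (⊤ : ℕ∞) fun p : ℝ × ℝ × ℝ × (ℝ × ℝ) => A p.1 p.2.1 p.2.2.1 p.2.2.2
  contDiff_field :
    ContDiff ℝ (⊤ : ℕ∞) fun p : ℝ × ℝ × ℝ × (ℝ × ℝ) => C p.1 p.2.1 p.2.2.1 p.2.2.2
  coeff_nonneg : ∀ t τ θ x, 0 ≤ A t τ θ x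
  coeff_theta_add_one : ∀ t τ θ x, A t τ (θ + 1) x = A t τ θ x
  field_theta_add_one : ∀ t τ θ x, C t τ (θ + 1) x = C t τ θ x
  spacePeriodic_coeff : ∀ t τ θ, SpacePeriodic (A t τ θ)
  spacePeriodic_field : ∀ t τ θ, SpacePeriodic (C t τ θ)
  abs_coeff_le : ∀ t τ θ x, |A t τ θ x| ≤ γ
  norm_field_le : ∀ t τ θ x, ‖C t τ θ x‖ ≤ γ
  abs_div2_field_le : ∀ t τ θ x, |div2 (C t τ θ) x| ≤ γ
  abs_deriv_theta_coeff_le : ∀ t τ θ x, |deriv (fun σ => A t τ σ x) θ| ≤ γ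
  abs_deriv_time_coeff_le : ∀ t τ θ x, |deriv (fun s => A s τ θ x) t| ≤ γ
  norm_deriv_time_field_le : ∀ t τ θ x, ‖deriv (fun s => C s τ θ x) t‖ ≤ γ
  abs_deriv_fastTime_coeff_le : ∀ t τ θ x, |deriv (fun s => A t s θ x) τ| ≤ δ * γ
  norm_deriv_fastTime_field_le : ∀ t τ θ x, ‖deriv (fun s => C t s θ x) τ‖ ≤ δ * γ

theorem CoeffBasic.coeffBounds {γ ε : ℝ} {A : ℝ → ℝ → ℝ → (ℝ × ℝ) → ℝ}
    {C : ℝ → ℝ → ℝ → (ℝ × ℝ) → ℝ × ℝ} (h : CoeffBasic γ ε A C) : CoeffBounds γ (√ε) A C := by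
  obtain ⟨hA, hC, hpos, hper, hspace, hH1, hH2⟩ := h
  choose hA0 hC0 hAt hCt hAθ _ _ hdiv _ _ using hH1
  choose hAτ hCτ _ using hH2
  exact ⟨hA, hC, hpos, fun t τ θ x => (hper t τ θ x).2.1, fun t τ θ x => (hper t τ θ x).2.2.2,
    fun t τ θ => (hspace t τ θ).1, fun t τ θ => (hspace t τ θ).2, hA0, hC0, hdiv, hAθ, hAt, hCt,
    hAτ, hCτ⟩

open PeriodicSmooth

theorem CoeffBounds.exists_eq_curried {γ δ : ℝ} {A : ℝ → ℝ → ℝ → (ℝ × ℝ) → ℝ}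
    {C : ℝ → ℝ → ℝ → (ℝ × ℝ) → ℝ × ℝ} (h : CoeffBounds γ δ A C) :
    ∃ a c₁ c₂ : PeriodicSmooth cellBasis, (A = fun t τ θ x => a (t, τ, θ, x)) ∧
      C = fun t τ θ x => (c₁ (t, τ, θ, x), c₂ (t, τ, θ, x)) := by
  obtain ⟨a, ha⟩ := PeriodicSmooth.exists_eq_curried h.contDiff_coeff h.coeff_theta_add_one
    h.spacePeriodic_coeff
  have hcomp : ∀ π : ℝ × ℝ →L[ℝ] ℝ, ∃ c : PeriodicSmooth cellBasis,
      (fun t τ θ x => π (C t τ θ x)) = fun t τ θ x => c (t, τ, θ, x) := fun π =>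
    PeriodicSmooth.exists_eq_curried (π.contDiff.comp h.contDiff_field)
      (fun t τ θ x => congrArg π (h.field_theta_add_one t τ θ x))
      fun t τ θ x => (h.spacePeriodic_field t τ θ x).imp (congrArg π) (congrArg π)
  obtain ⟨c₁, h₁⟩ := hcomp (.fst ℝ ℝ ℝ)
  obtain ⟨c₂, h₂⟩ := hcomp (.snd ℝ ℝ ℝ)
  refine ⟨a, c₁, c₂, ha, ?_⟩
  funext t τ θ x
  simp only [funext_iff] at h₁ h₂
  exact Prod.ext (h₁ t τ θ x) (h₂ t τ θ x)

section CurriedCoefficients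

variable {γ δ ν : ℝ} {a c₁ c₂ : PeriodicSmooth cellBasis}

theorem CoeffBounds.le_coeff_add (h : CoeffBounds γ δ (fun t τ θ x => a (t, τ, θ, x))
    fun t τ θ x => (c₁ (t, τ, θ, x), c₂ (t, τ, θ, x))) (p : ℝ × ℝ × ℝ × (ℝ × ℝ)) :
    ν ≤ (a + algebraMap ℝ _ ν) p :=
  le_add_of_nonneg_left (h.coeff_nonneg p.1 p.2.1 p.2.2.1 p.2.2.2)

theorem CoeffBounds.abs_time_derivative_le (h : CoeffBounds γ δ (fun t τ θ x => a (t, τ, θ, x))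
    fun t τ θ x => (c₁ (t, τ, θ, x), c₂ (t, τ, θ, x))) (p : ℝ × ℝ × ℝ × (ℝ × ℝ)) :
    |D (1, 0) a p| ≤ γ ∧ ∀ i, |D (1, 0) (![c₁, c₂] i) p| ≤ γ := by
  obtain ⟨t, τ, θ, x⟩ := p
  have hC := h.norm_deriv_time_field_le t τ θ x
  rw [((hasDerivAt_time c₁ t τ θ x).prodMk (hasDerivAt_time c₂ t τ θ x)).deriv] at hC
  exact ⟨(hasDerivAt_time a t τ θ x).deriv ▸ h.abs_deriv_time_coeff_le t τ θ x,
    Fin.forall_fin_two.2 (norm_prod_le_iff.1 hC)⟩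

theorem CoeffBounds.abs_fastTime_derivative_le
    (h : CoeffBounds γ δ (fun t τ θ x => a (t, τ, θ, x))
      fun t τ θ x => (c₁ (t, τ, θ, x), c₂ (t, τ, θ, x))) (p : ℝ × ℝ × ℝ × (ℝ × ℝ)) :
    |D (0, 1, 0) a p| ≤ δ * γ ∧ ∀ i, |D (0, 1, 0) (![c₁, c₂] i) p| ≤ δ * γ := by
  obtain ⟨t, τ, θ, x⟩ := p
  have hC := h.norm_deriv_fastTime_field_le t τ θ x
  rw [((hasDerivAt_fastTime c₁ t τ θ x).prodMk (hasDerivAt_fastTime c₂ t τ θ x)).deriv] at hC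
  exact ⟨(hasDerivAt_fastTime a t τ θ x).deriv ▸ h.abs_deriv_fastTime_coeff_le t τ θ x,
    Fin.forall_fin_two.2 (norm_prod_le_iff.1 hC)⟩

theorem CoeffBounds.abs_divergence_le (h : CoeffBounds γ δ (fun t τ θ x => a (t, τ, θ, x))
    fun t τ θ x => (c₁ (t, τ, θ, x), c₂ (t, τ, θ, x))) (p : ℝ × ℝ × ℝ × (ℝ × ℝ)) :
    |∑ i : Fin 2, D (cellBasis i.succ) (![c₁, c₂] i) p| ≤ γ := by
  have hdiv := h.abs_div2_field_le p.1 p.2.1 p.2.2.1 p.2.2.2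
  rw [div2_space] at hdiv
  rwa [Fin.sum_univ_two]

theorem exists_forall_curried_bounds (hν : 0 < ν) (γ : ℝ) : ∃ c, 0 ≤ c ∧
    ∀ (δ : ℝ) (a c₁ c₂ w : PeriodicSmooth cellBasis),
      CoeffBounds γ δ (fun t τ θ x => a (t, τ, θ, x))
        (fun t τ θ x => (c₁ (t, τ, θ, x), c₂ (t, τ, θ, x))) →
      IsCellSolution (a + algebraMap ℝ _ ν) ![c₁, c₂] w → ∀ p,
        torusMean (D (cellBasis 0) w ^ 2) p ≤ c ^ 2 ∧ spaceMean (gradSq w) p ≤ c ^ 2 ∧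
        spaceMean (w ^ 2) p ≤ c ^ 2 ∧ spaceMean (D (1, 0) w ^ 2) p ≤ c ^ 2 ∧
        spaceMean (D (0, 1, 0) w ^ 2) p ≤ (δ * c) ^ 2 := by
  obtain ⟨c, hc, hbounds⟩ :=
    exists_forall_isCellSolution_bounds (E := ℝ × ℝ × ℝ × (ℝ × ℝ)) 2 hν γ
  refine ⟨c, hc, fun δ a c₁ c₂ w h hw p => ?_⟩
  have hD : ∀ v, D v (a + algebraMap ℝ _ ν) = D v a := fun v => by
    rw [map_add, Derivation.map_algebraMap, add_zero]
  have hupper : ∀ p, (a + algebraMap ℝ _ ν) p ≤ γ + ν := fun p =>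
    add_le_add_left (le_of_abs_le (h.abs_coeff_le p.1 p.2.1 p.2.2.1 p.2.2.2)) _
  have htheta : ∀ p, |D (cellBasis 0) (a + algebraMap ℝ _ ν) p| ≤ γ := fun p =>
    hD (cellBasis 0) ▸ (hasDerivAt_theta a p.1 p.2.1 p.2.2.1 p.2.2.2).deriv ▸
      h.abs_deriv_theta_coeff_le p.1 p.2.1 p.2.2.1 p.2.2.2
  have hfield : ∀ i p, |![c₁, c₂] i p| ≤ γ := fun i p =>
    Fin.forall_fin_two (p := fun i => |![c₁, c₂] i p| ≤ γ) |>.2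
      (norm_prod_le_iff.1 (h.norm_field_le p.1 p.2.1 p.2.2.1 p.2.2.2)) i
  obtain ⟨hθ, hgrad, hsq, hderiv⟩ :=
    hbounds _ _ _ _ hw h.le_coeff_add hupper htheta hfield h.abs_divergence_le p
  refine ⟨hθ, hgrad, hsq, ?_, hderiv _ δ (fun q => hD _ ▸ (h.abs_fastTime_derivative_le q).1)
    fun i q => (h.abs_fastTime_derivative_le q).2 i⟩
  have ht := hderiv (1, 0) 1
  simp only [one_mul, hD] at ht
  exact ht (fun q => (h.abs_time_derivative_le q).1) fun i q => (h.abs_time_derivative_le q).2 i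

end CurriedCoefficients

theorem nu_cell_problem_wellposedness_general (γ : ℝ) {ν : ℝ} (hν : 0 < ν) : ∃ γ₃ : ℝ,
    ∀ (δ : ℝ) (A : ℝ → ℝ → ℝ → (ℝ × ℝ) → ℝ) (C : ℝ → ℝ → ℝ → (ℝ × ℝ) → ℝ × ℝ),
      0 ≤ δ → CoeffBounds γ δ A C →
      ∃ S : ℝ → ℝ → ℝ → (ℝ × ℝ) → ℝ,
        IsNuCellSolP A C ν S ∧
        (∀ S', IsNuCellSolP A C ν S' → S' = S) ∧
        ∀ t τ : ℝ,
          L2sharpNorm (fun θ x => deriv (fun σ => S t τ σ x) θ) ≤ γ₃ ∧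
          LinfL2Norm (fun θ x => ‖grad (S t τ θ) x‖) ≤ γ₃ ∧
          LinfL2Norm (S t τ) ≤ γ₃ ∧
          LinfL2Norm (fun θ x => deriv (fun s => S s τ θ x) t) ≤ γ₃ ∧
          LinfL2Norm (fun θ x => deriv (fun s => S t s θ x) τ) ≤ δ * γ₃ := by
  obtain ⟨c, hc, hbounds⟩ := exists_forall_curried_bounds hν γ
  refine ⟨c, fun δ A C hδ h => ?_⟩
  obtain ⟨a, c₁, c₂, rfl, rfl⟩ := h.exists_eq_curried
  obtain ⟨w, hw⟩ :=
    exists_isCellSolution linearIndependent_cellBasis hν h.le_coeff_add ![c₁, c₂]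
  refine ⟨fun t τ θ x => w (t, τ, θ, x), isNuCellSolP_curried_iff.2 hw, fun S' hS' => ?_,
    fun t τ => ?_⟩
  · obtain ⟨w', rfl⟩ := PeriodicSmooth.exists_eq_curried hS'.1 hS'.2.1 hS'.2.2.1
    rw [(isNuCellSolP_curried_iff.1 hS').eq hw hν h.le_coeff_add]
  · have hw := hbounds δ a c₁ c₂ w h hw
    simp only [(hasDerivAt_time w _ _ _ _).deriv, (hasDerivAt_fastTime w _ _ _ _).deriv,
      (hasDerivAt_theta w _ _ _ _).deriv]
    exact ⟨L2sharpNorm_le t τ hc fun p => (hw p).1, LinfL2Norm_grad_le t τ hc fun p => (hw p).2.1,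
      LinfL2Norm_le t τ hc fun p => (hw p).2.2.1, LinfL2Norm_le t τ hc fun p => (hw p).2.2.2.1,
      LinfL2Norm_le t τ (mul_nonneg hδ hc) fun p => (hw p).2.2.2.2⟩

/-- Theorem 3.12: under (H1), (H2) and the periodicity of `Ã_ε` and `C̃_ε` in `τ`
and `θ`, for any `ν > 0` there exists a unique `θ`-periodic solution
`S^ν(t,τ,θ,x)` of `∂S/∂θ − ∇·((Ã_ε+ν)∇S) = ∇·C̃_ε` subject to the zero-mean
constraint `sup_θ |∫_{𝕋²} S^ν dx| = 0`; moreover there is a constant `γ₃`,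
depending only on `γ` and `ν`, such that `‖∂S^ν/∂θ‖_{L²_#} ≤ γ₃`,
`‖∇S^ν‖_{L^∞_#L²} ≤ γ₃`, `‖S^ν‖_{L^∞_#L²} ≤ γ₃`, `‖∂S^ν/∂t‖_{L^∞_#L²} ≤ γ₃` and
`‖∂S^ν/∂τ‖_{L^∞_#L²} ≤ √ε γ₃`. -/
theorem nu_cell_problem_wellposedness :
    ∀ γ ν : ℝ, 0 ≤ γ → 0 < ν → ∃ γ₃ : ℝ,
      ∀ (ε : ℝ) (A : ℝ → ℝ → ℝ → (ℝ × ℝ) → ℝ) (C : ℝ → ℝ → ℝ → (ℝ × ℝ) → ℝ × ℝ),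
        0 < ε → ε ≤ 1 → CoeffBasic γ ε A C →
        ∃ S : ℝ → ℝ → ℝ → (ℝ × ℝ) → ℝ,
          IsNuCellSolP A C ν S ∧
          (∀ S', IsNuCellSolP A C ν S' → S' = S) ∧
          ∀ t τ : ℝ,
            L2sharpNorm (fun θ x => deriv (fun σ => S t τ σ x) θ) ≤ γ₃ ∧
            LinfL2Norm (fun θ x => ‖grad (S t τ θ) x‖) ≤ γ₃ ∧
            LinfL2Norm (S t τ) ≤ γ₃ ∧
            LinfL2Norm (fun θ x => deriv (fun s => S s τ θ x) t) ≤ γ₃ ∧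
            LinfL2Norm (fun θ x => deriv (fun s => S t s θ x) τ) ≤ Real.sqrt ε * γ₃ := by
  intro γ ν _ hν
  obtain ⟨γ₃, h⟩ := nu_cell_problem_wellposedness_general γ hν
  exact ⟨γ₃, fun ε A C _ _ hAC => h (√ε) A C (Real.sqrt_nonneg ε) hAC.coeffBounds⟩
end
end
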